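/- arXiv:1608.08155 — 3 statements merged into one kernel-verified Lean document; each statement's English description precedes it below -/
import Mathlib

section
/- Let (R, m) be a Noetherian local ring and M a finitely generated R-module of dimension d. Then there exists a positive integer n such that every system of parameters y = y_1, ..., y_d of M contained in m^n satisfies the monomial property, i.e. (y)^lim_M ≠ M. -/
/-!
Let `S = R / Ann M`, a Noetherian local ring of dimension `d` over which `M` is faithful, and let
`x = x₁, …, x_d` be a system of parameters of `S`. The proof rests on the non-vanishing of the top
local cohomology `H^d_m(M)`.

If no bound existed, then for each `a` there would be a system of parameters `y` contained in
`(x₁ ^ a, …, x_d ^ a)` and an exponent `t` with `(y₁ ⋯ y_d) ^ t M ⊆ (y₁ ^ (t+1), …) M`. Writing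
`y = P x ^ a` and, for large `N`, `x ^ N = Q y ^ (t+1)`, the matrices `Q diag(y ^ t) P` and
`diag(x ^ (N-a))` both map `x ^ a` to `x ^ N`, so their determinants agree modulo
`(x₁ ^ (2 * N), …)` after multiplication by `(x₁ ⋯ x_d) ^ N` (`det_sub_det_mem`). This yields
`(x₁ ⋯ x_d) ^ (2 * N - a) M ⊆ (x₁ ^ (2 * N), …) M` (`prod_pow_smul_mem`), that is, every class
`[m / (x₁ ⋯ x_d) ^ a]` in `H^d_m(M)` vanishes, so `H^d_m(M) = 0` (`lc_zero_subsingleton`): a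
contradiction.

Local cohomology `H^{n-p}` with respect to `x₁, …, x_n` is modelled by `LC x p M`, the degree `p`
Koszul homology of the elements `x j - X j` of `R[X₁, …, X_n]` on the module of inverse polynomials
`M[X₁⁻¹, …, X_n⁻¹]`. The inverse polynomials are an exact functor of `M`, so there is a long exact
sequence. On finite length modules, each `x j - X j` is surjective on the kernel of its
predecessors, so only `H^0` survives, and it is Artinian. Dividing out torsion and then a regular
element, induction on the dimension gives Grothendieck vanishing
(`lc_subsingleton_of_supportDim_lt`), Artinianness (`lc_isArtinian`) and non-vanishing in degree
`dim M` (`lc_not_subsingleton`). In the last one, if `H^{e+1}(M) = 0`, then `H^e(M / rM)` is a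
quotient of the Artinian module `H^e(M)`, on which `r` can be chosen outside all attached primes
that do not lie over the maximal ideal (`exists_attached`, `exists_regular`). So each element of the
maximal ideal acts on `H^e(M / rM)` with a power equal to zero; for `e > 0` a regular element also
acts surjectively on this top local cohomology, hence it vanishes, against the induction hypothesis.
For `e = 0` already `H^0(M)` vanishes, because `r` is both regular and locally nilpotent on it.
-/

open IsLocalRing

/-- The limit closure `(x)^lim_M = ⋃_{n>0} ((x₁^{n+1}, …, x_r^{n+1})M :_M (x₁⋯x_r)^n)` of a
sequence `x = x₁, …, x_r` of elements of `R` in the module `M`; the union of the increasing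
family of submodules is expressed as a supremum. -/
def limitClosure {R : Type*} [CommRing R] {M : Type*} [AddCommGroup M] [Module R M]
    {r : ℕ} (x : Fin r → R) : Submodule R M :=
  ⨆ n : ℕ, (Ideal.span (Set.range fun i => x i ^ (n + 2)) • (⊤ : Submodule R M)).comap
    (LinearMap.lsmul R M ((∏ i, x i) ^ (n + 1)))

/-- The dimension of a module `M`: the Krull dimension of `R ⧸ Ann M`. -/
noncomputable def moduleDim (R M : Type*) [CommRing R] [AddCommGroup M] [Module R M] :
    WithBot ℕ∞ :=
  ringKrullDim (R ⧸ Module.annihilator R M)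

/-- A system of parameters of a `d`-dimensional module `M` over a Noetherian local ring:
a sequence of `d` elements of the maximal ideal such that `M/(x₁, …, x_d)M` has finite
length. -/
def IsSystemOfParameters {R : Type*} [CommRing R] [IsLocalRing R] (M : Type*)
    [AddCommGroup M] [Module R M] {d : ℕ} (x : Fin d → R) : Prop :=
  (∀ i, x i ∈ maximalIdeal R) ∧
    IsFiniteLength R (M ⧸ (Ideal.span (Set.range x) • (⊤ : Submodule R M)))

namespace MonomialProperty

open Submodule

/-! ### Koszul homology -/

section Koszul

variable {A : Type*} [CommRing A] {n : ℕ} (v : Fin n → A)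
variable {W W' W'' : Type*} [AddCommGroup W] [Module A W] [AddCommGroup W'] [Module A W']
  [AddCommGroup W''] [Module A W'']

/-- Koszul chains of degree `p` with coefficients in `W`: alternating `p`-forms on `A ^ n`. -/
abbrev KoszulChain (A : Type*) [CommRing A] (n p : ℕ) (W : Type*) [AddCommGroup W] [Module A W] :=
  (Fin n → A) [⋀^Fin p]→ₗ[A] W

/-- The Koszul differential: contraction of a form with the vector `v`. -/
def koszulD (p : ℕ) : KoszulChain A n (p + 1) W →ₗ[A] KoszulChain A n p W where
  toFun ω := ω.curryLeft v
  map_add' _ _ := rfl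
  map_smul' _ _ := rfl

lemma koszulD_apply (p : ℕ) (ω : KoszulChain A n (p + 1) W) (u : Fin p → Fin n → A) :
    koszulD v p ω u = ω (Matrix.vecCons v u) := rfl

lemma koszulD_koszulD (p : ℕ) (ω : KoszulChain A n (p + 2) W) :
    koszulD v p (koszulD v (p + 1) ω) = 0 :=
  AlternatingMap.curryLeft_same ω v

/-- The map on Koszul chains induced by a map of coefficients. -/
def chainMap (n p : ℕ) (f : W →ₗ[A] W') : KoszulChain A n p W →ₗ[A] KoszulChain A n p W' where
  toFun ω := f.compAlternatingMap ω
  map_add' _ _ := by ext; simp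
  map_smul' _ _ := by ext; simp

@[simp] lemma chainMap_apply (p : ℕ) (f : W →ₗ[A] W') (ω : KoszulChain A n p W)
    (u : Fin p → Fin n → A) : chainMap n p f ω u = f (ω u) := rfl

lemma koszulD_chainMap (p : ℕ) (f : W →ₗ[A] W') (ω : KoszulChain A n (p + 1) W) :
    koszulD v p (chainMap n (p + 1) f ω) = chainMap n p f (koszulD v p ω) := rfl

lemma chainMap_injective (p : ℕ) (f : W →ₗ[A] W') (hf : Function.Injective f) :
    Function.Injective (chainMap n p f) := by
  intro a b h
  ext u
  exact hf (DFunLike.congr_fun h u)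

lemma chainMap_surjective (p : ℕ) (f : W →ₗ[A] W') (hf : Function.Surjective f) :
    Function.Surjective (chainMap n p f) := by
  intro ω
  -- forms of degree `p` are linear maps out of the free module `⋀^p A^n`
  obtain ⟨l, hl⟩ := Module.projective_lifting_property f
    (exteriorPower.alternatingMapLinearEquiv ω) hf
  refine ⟨l.compAlternatingMap (exteriorPower.ιMulti A p), ?_⟩
  ext u
  have := LinearMap.congr_fun hl (exteriorPower.ιMulti A p u)
  simpa using this

lemma exists_chainMap_eq (p : ℕ) (f : W →ₗ[A] W') (g : W' →ₗ[A] W'')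
    (hf : Function.Injective f) (hfg : Function.Exact f g) (ω : KoszulChain A n p W')
    (h : chainMap n p g ω = 0) : ∃ η, chainMap n p f η = ω := by
  have hω : ∀ u, ω u ∈ LinearMap.range f := fun u => (hfg _).1 (DFunLike.congr_fun h u)
  refine ⟨(LinearEquiv.ofInjective f hf).symm.toLinearMap.compAlternatingMap
    (ω.codRestrict _ hω), ?_⟩
  ext u
  have := LinearEquiv.apply_symm_apply (LinearEquiv.ofInjective f hf) ⟨ω u, hω u⟩
  exact congrArg Subtype.val this

/-- Koszul cycles; in degree `0` every chain is a cycle. -/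
def cycles (W : Type*) [AddCommGroup W] [Module A W] :
    (p : ℕ) → Submodule A (KoszulChain A n p W)
  | 0 => ⊤
  | p + 1 => LinearMap.ker (koszulD v p)

lemma koszulD_mem_cycles (p : ℕ) (ω : KoszulChain A n (p + 1) W) :
    koszulD v p ω ∈ cycles v W p := by
  cases p with
  | zero => trivial
  | succ p => exact koszulD_koszulD v p ω

lemma chainMap_mem_cycles (p : ℕ) (f : W →ₗ[A] W') {ω : KoszulChain A n p W}
    (h : ω ∈ cycles v W p) : chainMap n p f ω ∈ cycles v W' p := by
  cases p with
  | zero => trivial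
  | succ p =>
    have h : koszulD v p ω = 0 := h
    change koszulD v p _ = 0
    rw [koszulD_chainMap, h, map_zero]

lemma mem_cycles_of_chainMap (p : ℕ) (f : W →ₗ[A] W') (hf : Function.Injective f)
    {ω : KoszulChain A n p W} (h : chainMap n p f ω ∈ cycles v W' p) : ω ∈ cycles v W p := by
  cases p with
  | zero => trivial
  | succ p =>
    have h : koszulD v p (chainMap n _ f ω) = 0 := h
    apply chainMap_injective p f hf
    rw [map_zero, ← h]; rfl

/-- Koszul homology `H_p(v; W)`: cycles modulo boundaries. -/
abbrev KoszulH (p : ℕ) (W : Type*) [AddCommGroup W] [Module A W] :=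
  cycles v W p ⧸ (LinearMap.range (koszulD (W := W) v p)).submoduleOf (cycles v W p)

/-- The homology class of a cycle. -/
def cls (p : ℕ) : cycles v W p →ₗ[A] KoszulH v p W := mkQ _

lemma cls_surjective (p : ℕ) : Function.Surjective (cls (W := W) v p) := mkQ_surjective _

lemma cls_eq_zero (p : ℕ) (z : cycles v W p) :
    cls v p z = 0 ↔ ∃ ω, koszulD v p ω = z.1 :=
  Submodule.Quotient.mk_eq_zero _

/-- The map on cycles induced by a map of coefficients. -/
def cyclesMap (p : ℕ) (f : W →ₗ[A] W') : cycles v W p →ₗ[A] cycles v W' p :=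
  (chainMap n p f).restrict fun _ h => chainMap_mem_cycles v p f h

/-- The map on Koszul homology induced by a map of coefficients. -/
def homMap (p : ℕ) (f : W →ₗ[A] W') : KoszulH v p W →ₗ[A] KoszulH v p W' :=
  mapQ _ _ (cyclesMap v p f) (by
    rintro ⟨z, hz⟩ h
    obtain ⟨ω, hω⟩ : ∃ ω, koszulD v p ω = z := h
    refine ⟨chainMap n (p + 1) f ω, ?_⟩
    rw [koszulD_chainMap, hω]; rfl)

lemma homMap_cls (p : ℕ) (f : W →ₗ[A] W') (z : cycles v W p) :
    homMap v p f (cls v p z) = cls v p (cyclesMap v p f z) := rfl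

lemma homMap_smul_id (p : ℕ) (a : A) (h : KoszulH v p W) :
    homMap v p (a • LinearMap.id) h = a • h := by
  obtain ⟨z, rfl⟩ := cls_surjective v p h
  rw [homMap_cls, ← map_smul]; rfl

variable {f : W →ₗ[A] W'} {g : W' →ₗ[A] W''}

lemma homMap_exact (p : ℕ) (hf : Function.Injective f) (hg : Function.Surjective g)
    (hfg : Function.Exact f g) : Function.Exact (homMap v p f) (homMap v p g) := by
  intro h
  constructor
  · obtain ⟨⟨z, hz⟩, rfl⟩ := cls_surjective v p h
    rw [homMap_cls, cls_eq_zero]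
    rintro ⟨c, hc⟩
    obtain ⟨b, rfl⟩ := chainMap_surjective (p + 1) g hg c
    have hc : chainMap n p g (koszulD v p b) = chainMap n p g z := hc
    obtain ⟨a, ha⟩ := exists_chainMap_eq p f g hf hfg (z - koszulD v p b)
      (by rw [map_sub, hc, sub_self])
    have ha' : a ∈ cycles v W p := by
      apply mem_cycles_of_chainMap v p f hf
      rw [ha]
      exact sub_mem hz (koszulD_mem_cycles v p b)
    refine ⟨cls v p ⟨a, ha'⟩, ?_⟩
    rw [homMap_cls, ← sub_eq_zero, ← map_sub, cls_eq_zero]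
    refine ⟨-b, ?_⟩
    change _ = chainMap n p f a - z
    rw [ha, map_neg]; abel
  · rintro ⟨h, rfl⟩
    obtain ⟨⟨z, hz⟩, rfl⟩ := cls_surjective v p h
    rw [homMap_cls, homMap_cls]
    convert map_zero (cls v p)
    ext u
    exact hfg.apply_apply_eq_zero _

/-- The connecting homomorphism of the long exact sequence of Koszul homology. -/
lemma exists_connecting (p : ℕ) (hf : Function.Injective f) (hg : Function.Surjective g)
    (hfg : Function.Exact f g) :
    ∃ δ : KoszulH v (p + 1) W'' →ₗ[A] KoszulH v p W,
      Function.Exact (homMap v (p + 1) g) δ ∧ Function.Exact δ (homMap v p f) := by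
  have hgf : ∀ a : KoszulChain A n p W, chainMap n p g (chainMap n p f a) = 0 := by
    intro a; ext u; exact hfg.apply_apply_eq_zero _
  -- pairs `(b, a)` with `d b = f a`; the connecting map sends the class of `g b` to that of `a`
  let G : Submodule A (KoszulChain A n (p + 1) W' × KoszulChain A n p W) :=
    LinearMap.ker ((koszulD v p).coprod (-(chainMap n p f)))
  have hG : ∀ x : G, koszulD v p x.1.1 = chainMap n p f x.1.2 := by
    rintro ⟨⟨b, a⟩, h⟩
    simpa [G, ← sub_eq_add_neg, sub_eq_zero] using h
  have hG' : ∀ b a, koszulD v p b = chainMap n p f a → (b, a) ∈ G := by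
    intro b a h
    simp [G, h]
  have h1 : ∀ x : G, (chainMap n (p + 1) g ∘ₗ LinearMap.fst A _ _ ∘ₗ G.subtype) x
      ∈ cycles v W'' (p + 1) := by
    intro x
    change koszulD v p (chainMap n (p + 1) g x.1.1) = 0
    rw [koszulD_chainMap, hG, hgf]
  have h2 : ∀ x : G, (LinearMap.snd A _ _ ∘ₗ G.subtype) x ∈ cycles v W p := by
    intro x
    apply mem_cycles_of_chainMap v p f hf
    change chainMap n p f x.1.2 ∈ _
    rw [← hG]
    exact koszulD_mem_cycles v p _
  let π : G →ₗ[A] KoszulH v (p + 1) W'' := cls v (p + 1) ∘ₗ LinearMap.codRestrict _ _ h1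
  let φ : G →ₗ[A] KoszulH v p W := cls v p ∘ₗ LinearMap.codRestrict _ _ h2
  have hπ : Function.Surjective π := by
    intro h
    obtain ⟨⟨c, hc⟩, rfl⟩ := cls_surjective v (p + 1) h
    obtain ⟨b, rfl⟩ := chainMap_surjective (p + 1) g hg c
    obtain ⟨a, ha⟩ := exists_chainMap_eq p f g hf hfg (koszulD v p b) hc
    exact ⟨⟨(b, a), hG' b a ha.symm⟩, rfl⟩
  have hker : LinearMap.ker π ≤ LinearMap.ker φ := by
    rintro ⟨⟨b, a⟩, hba⟩ h
    have hd := hG ⟨_, hba⟩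
    obtain ⟨c, hc⟩ := (cls_eq_zero v (p + 1) _).1 h
    obtain ⟨b', rfl⟩ := chainMap_surjective (p + 2) g hg c
    have hc : chainMap n (p + 1) g (koszulD v (p + 1) b') = chainMap n (p + 1) g b := hc
    obtain ⟨a', ha'⟩ := exists_chainMap_eq (p + 1) f g hf hfg (b - koszulD v (p + 1) b')
      (by rw [map_sub, hc, sub_self])
    refine (cls_eq_zero v p _).2 ⟨a', ?_⟩
    apply chainMap_injective p f hf
    change _ = chainMap n p f a
    rw [← koszulD_chainMap, ha', map_sub, koszulD_koszulD, sub_zero]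
    exact hd
  let δ : KoszulH v (p + 1) W'' →ₗ[A] KoszulH v p W :=
    (LinearMap.ker π).liftQ φ hker ∘ₗ (π.quotKerEquivOfSurjective hπ).symm.toLinearMap
  have hδ : ∀ x : G, δ (π x) = φ x := by
    intro x
    have : (π.quotKerEquivOfSurjective hπ).symm (π x) = (LinearMap.ker π).mkQ x := by
      rw [LinearEquiv.symm_apply_eq]; rfl
    simp [δ, this]
  refine ⟨δ, fun h => ⟨fun h0 => ?_, ?_⟩, fun h => ⟨fun h0 => ?_, ?_⟩⟩
  · obtain ⟨⟨⟨b, a⟩, hba⟩, rfl⟩ := hπ h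
    have hd : koszulD v p b = chainMap n p f a := hG ⟨_, hba⟩
    rw [hδ] at h0
    obtain ⟨a', ha'⟩ := (cls_eq_zero v p _).1 h0
    have ha' : koszulD v p a' = a := ha'
    refine ⟨cls v (p + 1) ⟨b - chainMap n (p + 1) f a', ?_⟩, ?_⟩
    · change koszulD v p _ = 0
      rw [map_sub, koszulD_chainMap, ha', hd, sub_self]
    · rw [homMap_cls]
      change cls v (p + 1) _ = cls v (p + 1) _
      congr 1
      ext u
      change g (b u - f (a' u)) = g (b u)
      rw [map_sub, hfg.apply_apply_eq_zero, sub_zero]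
  · rintro ⟨h, rfl⟩
    obtain ⟨⟨z, hz⟩, rfl⟩ := cls_surjective v (p + 1) h
    have hz' : koszulD v p z = 0 := hz
    have hmem : (z, (0 : KoszulChain A n p W)) ∈ G := hG' _ _ (by rw [hz', map_zero])
    have : homMap v (p + 1) g (cls v (p + 1) ⟨z, hz⟩) = π ⟨_, hmem⟩ := rfl
    rw [this, hδ]
    exact map_zero (cls v p)
  · obtain ⟨⟨a, ha⟩, rfl⟩ := cls_surjective v p h
    rw [homMap_cls, cls_eq_zero] at h0
    obtain ⟨b, hb⟩ := h0
    refine ⟨π ⟨(b, a), hG' _ _ hb⟩, ?_⟩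
    rw [hδ]; rfl
  · rintro ⟨h, rfl⟩
    obtain ⟨⟨⟨b, a⟩, hba⟩, rfl⟩ := hπ h
    rw [hδ]
    exact (cls_eq_zero v p _).2 ⟨b, hG ⟨_, hba⟩⟩

lemma homMap_zero_surjective (hg : Function.Surjective g) :
    Function.Surjective (homMap v 0 g) := by
  intro h
  obtain ⟨⟨z, hz⟩, rfl⟩ := cls_surjective v 0 h
  obtain ⟨b, rfl⟩ := chainMap_surjective 0 g hg z
  exact ⟨cls v 0 ⟨b, trivial⟩, rfl⟩

/-- Exterior multiplication by a coordinate form is a homotopy between `v j` and `0`. -/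
lemma smul_koszulH (p : ℕ) (j : Fin n) (h : KoszulH v p W) : v j • h = 0 := by
  obtain ⟨⟨z, hz⟩, rfl⟩ := cls_surjective v p h
  rw [← map_smul, cls_eq_zero]
  let lam : (Fin n → A) →ₗ[A] A := LinearMap.proj j
  refine ⟨AlternatingMap.alternatizeUncurryFin (lam.smulRight z), ?_⟩
  ext u
  rw [koszulD_apply, AlternatingMap.alternatizeUncurryFin_apply, Fin.sum_univ_succ]
  have : ∀ i : Fin p, z (Fin.removeNth i.succ (Matrix.vecCons v u)) = 0 := by
    intro i
    cases p with
    | zero => exact i.elim0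
    | succ p =>
      have hz : koszulD v p z = 0 := hz
      have := DFunLike.congr_fun hz (Fin.removeNth i u)
      rw [koszulD_apply] at this
      refine Eq.trans (congrArg z ?_) this
      ext1 k
      refine Fin.cases ?_ (fun k => ?_) k
      · simp [Fin.removeNth]
      · simp [Fin.removeNth, Fin.succ_succAbove_succ]
  simp [lam, this]

lemma koszulH_subsingleton_of_lt (p : ℕ) (hp : n < p) : Subsingleton (KoszulH v p W) := by
  have : Subsingleton (KoszulChain A n p W) := by
    refine ⟨fun a b => (Pi.basisFun A (Fin n)).ext_alternating fun s hs => ?_⟩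
    have := Fintype.card_le_of_injective s hs
    simp at this
    omega
  exact (cls_surjective v p).subsingleton

lemma koszulH_subsingleton (p : ℕ) [Subsingleton W] : Subsingleton (KoszulH v p W) := by
  have : Subsingleton (KoszulChain A n p W) := ⟨fun a b => by ext; exact Subsingleton.elim _ _⟩
  exact (cls_surjective v p).subsingleton

lemma exists_pow_smul_koszulH (p : ℕ) (a : A) (hW : ∀ w : W, ∃ k, a ^ k • w = 0)
    (h : KoszulH v p W) : ∃ k, a ^ k • h = 0 := by
  obtain ⟨⟨z, hz⟩, rfl⟩ := cls_surjective v p h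
  choose k hk using hW
  refine ⟨∑ s : Fin p → Fin n, k (z fun i => Pi.basisFun A (Fin n) (s i)), ?_⟩
  rw [← map_smul]
  convert map_zero (cls v p)
  refine Subtype.ext ?_
  refine (Pi.basisFun A (Fin n)).ext_alternating fun s _ => ?_
  change a ^ (∑ s : Fin p → Fin n, k (z fun i => Pi.basisFun A (Fin n) (s i))) •
    z (fun i => Pi.basisFun A (Fin n) (s i)) = 0
  obtain ⟨c, hc⟩ := exists_add_of_le (Finset.single_le_sum (f := fun s : Fin p → Fin n =>
    k (z fun i => Pi.basisFun A (Fin n) (s i))) (fun _ _ => Nat.zero_le _) (Finset.mem_univ s))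
  rw [hc, add_comm, pow_add, mul_smul, hk, smul_zero]

/-- A zeroth Koszul chain is an element of `W`. -/
def zeroChain (w : W) : cycles (n := n) v W 0 :=
  ⟨AlternatingMap.constOfIsEmpty A _ (Fin 0) w, trivial⟩

lemma koszulH_zero_subsingleton
    (h : ∀ w : W, w ∈ Ideal.span (Set.range v) • (⊤ : Submodule A W)) :
    Subsingleton (KoszulH v 0 W) := by
  refine ⟨fun a b => ?_⟩
  suffices ∀ a : KoszulH v 0 W, a = 0 by rw [this a, this b]
  intro a
  obtain ⟨⟨z, hz⟩, rfl⟩ := cls_surjective v 0 a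
  let c : W →ₗ[A] KoszulH v 0 W := cls v 0 ∘ₗ
    { toFun := fun w : W => zeroChain v w, map_add' := fun _ _ => rfl, map_smul' := fun _ _ => rfl }
  have hc : ∀ w ∈ Ideal.span (Set.range v) • (⊤ : Submodule A W), c w = 0 := by
    intro w hw
    refine Submodule.smul_induction_on hw (fun r hr m _ => ?_) (fun x y hx hy => ?_)
    · rw [map_smul]
      have : Ideal.span (Set.range v) ≤ LinearMap.ker
          (LinearMap.toSpanSingleton A (KoszulH v 0 W) (c m)) := by
        rw [Ideal.span_le]
        rintro _ ⟨j, rfl⟩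
        exact smul_koszulH v 0 j _
      exact this hr
    · rw [map_add, hx, hy, add_zero]
  have := hc _ (h (z ![]))
  rw [← this]
  change cls v 0 _ = cls v 0 _
  congr 1
  ext u
  rw [Subsingleton.elim u ![]]
  rfl

/-- If every `v j` kills `W`, then evaluation identifies `H_0(v; W)` with `W`. -/
lemma exists_koszulH_zero_bijective (h : ∀ (j : Fin n) (w : W), v j • w = 0) :
    ∃ e : KoszulH v 0 W →ₗ[A] W, Function.Bijective e := by
  have hd : ∀ ω : KoszulChain A n 1 W, koszulD v 0 ω = 0 := by
    intro ω
    ext u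
    rw [koszulD_apply]
    let l : (Fin n → A) →ₗ[A] W :=
      { toFun := fun y => ω.curryLeft y u
        map_add' := fun a b => by rw [map_add]; rfl
        map_smul' := fun a b => by rw [map_smul]; rfl }
    change l v = 0
    rw [← Finset.univ_sum_single v, map_sum l]
    refine Finset.sum_eq_zero fun j _ => ?_
    rw [show Pi.single j (v j) = v j • Pi.single j (1 : A) by
      rw [← Pi.single_smul, smul_eq_mul, mul_one], map_smul, h]
  let ev : cycles v W 0 →ₗ[A] W :=
    { toFun := fun z => z.1 ![], map_add' := fun _ _ => rfl, map_smul' := fun _ _ => rfl }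
  refine ⟨liftQ _ ev ?_, ?_, ?_⟩
  · rintro ⟨z, hz⟩ ⟨ω, hω⟩
    have hω : koszulD v 0 ω = z := hω
    rw [hd] at hω
    change z ![] = 0
    rw [← hω]; rfl
  · rw [injective_iff_map_eq_zero]
    intro a ha
    obtain ⟨⟨z, hz⟩, rfl⟩ := cls_surjective v 0 a
    have ha : z ![] = 0 := ha
    convert map_zero (cls v 0)
    ext u
    rw [Subsingleton.elim u ![]]
    exact ha
  · intro w
    exact ⟨cls v 0 (zeroChain v w), rfl⟩

end Koszul

/-! ### Artinian modules and attached primes -/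

section Artinian

variable {A : Type*} [CommRing A] {T : Type*} [AddCommGroup T] [Module A T]

/-- If `T` is `a`-power torsion and the kernel of `a` on `T` is Artinian, then `T` is Artinian:
a descending chain `N i` is controlled by the submodules `a ^ k N i ∩ (0 : a)`. -/
lemma isArtinian_of_torsion (a : A) (hT : ∀ t : T, ∃ k, a ^ k • t = 0)
    (h : IsArtinian A (LinearMap.ker (LinearMap.lsmul A T a))) : IsArtinian A T := by
  rw [← monotone_stabilizes_iff_artinian]
  intro N
  set T₁ := LinearMap.ker (LinearMap.lsmul A T a) with hT₁
  have hN : ∀ {i j}, i ≤ j → ∀ t, t ∈ OrderDual.ofDual (N j) → t ∈ OrderDual.ofDual (N i) :=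
    fun hij t ht => (N.monotone hij) ht
  let F : ℕ → ℕ → Submodule A T₁ := fun i k =>
    ((OrderDual.ofDual (N i)).map (LinearMap.lsmul A T (a ^ k))).comap T₁.subtype
  have hF : ∀ {i k} {t : T₁}, t ∈ F i k ↔ ∃ u ∈ OrderDual.ofDual (N i), a ^ k • u = t :=
    fun {i k t} => by simp [F]
  have hFi : ∀ {i j} k, i ≤ j → F j k ≤ F i k := by
    intro i j k hij t ht
    obtain ⟨u, hu, e⟩ := hF.1 ht
    exact hF.2 ⟨u, hN hij _ hu, e⟩
  have hFk : ∀ i {k l}, k ≤ l → F i l ≤ F i k := by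
    intro i k l hkl t ht
    obtain ⟨u, hu, e⟩ := hF.1 ht
    obtain ⟨c, rfl⟩ := exists_add_of_le hkl
    exact hF.2 ⟨a ^ c • u, Submodule.smul_mem _ _ hu, by rw [← e, pow_add, mul_smul]⟩
  have wf : WellFounded ((· < ·) : Submodule A T₁ → Submodule A T₁ → Prop) := wellFounded_lt
  obtain ⟨_, ⟨⟨i₀, k₀⟩, rfl⟩, hmin⟩ :=
    wf.has_min (Set.range fun q : ℕ × ℕ => F q.1 q.2) ⟨_, ⟨(0, 0), rfl⟩⟩
  have hst : ∀ i k, i₀ ≤ i → k₀ ≤ k → F i k = F i₀ k₀ := fun i k hi hk =>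
    ((hFi k hi).trans (hFk i₀ hk)).eq_of_not_lt (hmin _ ⟨(i, k), rfl⟩)
  have hsk : ∀ k, ∃ i₁, ∀ i, i₁ ≤ i → F i k = F i₁ k := by
    intro k
    obtain ⟨_, ⟨i₁, rfl⟩, hmin⟩ := wf.has_min (Set.range fun i : ℕ => F i k) ⟨_, ⟨0, rfl⟩⟩
    exact ⟨i₁, fun i hi => (hFi k hi).eq_of_not_lt (hmin _ ⟨i, rfl⟩)⟩
  choose s hs using hsk
  let I := i₀ + ∑ k ∈ Finset.range k₀, s k
  have hI : ∀ i, I ≤ i → ∀ k, F i k = F I k := by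
    intro i hi k
    by_cases hk : k₀ ≤ k
    · rw [hst i k (by omega) hk, hst I k (by omega) hk]
    · have : s k ≤ ∑ k ∈ Finset.range k₀, s k :=
        Finset.single_le_sum (fun _ _ => Nat.zero_le _) (Finset.mem_range.2 (by omega))
      rw [hs k i (by omega), hs k I (by omega)]
  refine ⟨I, fun i hi => le_antisymm (N.monotone hi) ?_⟩
  change OrderDual.ofDual (N I) ≤ OrderDual.ofDual (N i)
  have key : ∀ k, ∀ t ∈ OrderDual.ofDual (N I), a ^ k • t = 0 → t ∈ OrderDual.ofDual (N i) := by
    intro k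
    induction k with
    | zero => intro t _ h0; rw [pow_zero, one_smul] at h0; rw [h0]; exact zero_mem _
    | succ k ih =>
      intro t ht h0
      have hm : a ^ k • t ∈ T₁ := by
        rw [hT₁, LinearMap.mem_ker, LinearMap.lsmul_apply, smul_smul, ← pow_succ']
        exact h0
      have : (⟨a ^ k • t, hm⟩ : T₁) ∈ F i k := by
        rw [hI i hi]; exact hF.2 ⟨t, ht, rfl⟩
      obtain ⟨u, hu, e⟩ := hF.1 this
      have h1 : t - u ∈ OrderDual.ofDual (N i) := by
        refine ih _ (sub_mem ht (hN hi _ hu)) ?_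
        rw [smul_sub, e, sub_self]
      simpa using add_mem h1 hu
  intro t ht
  obtain ⟨k, hk⟩ := hT t
  exact key k t ht hk

/-- A form of secondary decomposition for an Artinian module `T`: there are finitely many primes
(the attached primes) such that if `y` lies in each of those containing `x`, then a power of `y`
maps `T` into `x T`. -/
lemma exists_attached [IsArtinian A T] :
    ∃ F : Set (Ideal A), F.Finite ∧ (∀ P ∈ F, P.IsPrime) ∧
      ∀ x y : A, (∀ P ∈ F, x ∈ P → y ∈ P) → ∃ k, ∀ t : T, ∃ u : T, y ^ k • t = x • u := by
  suffices H : ∀ S : Submodule A T, ∃ F : Set (Ideal A), F.Finite ∧ (∀ P ∈ F, P.IsPrime) ∧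
      ∀ x y : A, (∀ P ∈ F, x ∈ P → y ∈ P) → ∃ k, ∀ t ∈ S, ∃ u ∈ S, y ^ k • t = x • u by
    obtain ⟨F, h1, h2, h3⟩ := H ⊤
    refine ⟨F, h1, h2, fun x y h => ?_⟩
    obtain ⟨k, hk⟩ := h3 x y h
    exact ⟨k, fun t => (hk t trivial).imp fun u hu => hu.2⟩
  intro S
  induction S using WellFoundedLT.induction with
  | ind S ih =>
  by_cases hS : S = ⊥
  · refine ⟨∅, Set.finite_empty, by simp, fun x y _ => ⟨0, ?_⟩⟩
    subst hS
    intro t ht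
    rw [Submodule.mem_bot] at ht
    exact ⟨0, zero_mem _, by simp [ht]⟩
  by_cases hsec : ∀ s : A, (∀ t ∈ S, ∃ u ∈ S, s • u = t) ∨ ∃ k, ∀ t ∈ S, s ^ k • t = 0
  · -- `S` is secondary: its radical annihilator is the only prime needed
    let I : Ideal A := S.annihilator.radical
    have hI : ∀ s, s ∈ I ↔ ∃ k, ∀ t ∈ S, s ^ k • t = 0 := by
      intro s; simp [I, Ideal.mem_radical_iff, Submodule.mem_annihilator]
    have hsurj : ∀ s, s ∉ I → ∀ t ∈ S, ∃ u ∈ S, s • u = t := fun s hs =>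
      (hsec s).resolve_right (fun h => hs ((hI s).2 h))
    have hpow : ∀ s, s ∉ I → ∀ k, ∀ t ∈ S, ∃ u ∈ S, s ^ k • u = t := by
      intro s hs k
      induction k with
      | zero => exact fun t ht => ⟨t, ht, by simp⟩
      | succ k ih =>
        intro t ht
        obtain ⟨u, hu, rfl⟩ := ih t ht
        obtain ⟨w, hw, rfl⟩ := hsurj s hs u hu
        exact ⟨w, hw, by rw [pow_succ, mul_smul]⟩
    have hprime : I.IsPrime := by
      refine ⟨fun h => hS ?_, fun {x y} hxy => ?_⟩
      · obtain ⟨k, hk⟩ := (hI 1).1 (h ▸ trivial)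
        rw [eq_bot_iff]
        intro t ht
        simpa using hk t ht
      · by_contra! hc
        obtain ⟨k, hk⟩ := (hI _).1 hxy
        apply hc.2
        refine (hI y).2 ⟨k, fun t ht => ?_⟩
        obtain ⟨u, hu, rfl⟩ := hpow x hc.1 k t ht
        rw [smul_smul, mul_comm, ← mul_pow]
        exact hk u hu
    refine ⟨{I}, Set.finite_singleton _, by simpa using hprime, fun x y h => ?_⟩
    by_cases hx : x ∈ I
    · obtain ⟨k, hk⟩ := (hI y).1 (h I rfl hx)
      exact ⟨k, fun t ht => ⟨0, zero_mem _, by simp [hk t ht]⟩⟩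
    · refine ⟨0, fun t ht => ?_⟩
      obtain ⟨u, hu, e⟩ := hsurj x hx t ht
      exact ⟨u, hu, by simp [e]⟩
  · -- otherwise `S` is the sum of two smaller submodules, by Fitting's argument for `s`
    push Not at hsec
    obtain ⟨s, ⟨t₀, ht₀, hs₁⟩, hs₂⟩ := hsec
    let G : ℕ → Submodule A T := fun k => S.map (LinearMap.lsmul A T (s ^ k))
    have hG : ∀ {k t}, t ∈ G k ↔ ∃ u ∈ S, s ^ k • u = t := fun {k t} => by simp [G]
    have hGk : ∀ {k l}, k ≤ l → G l ≤ G k := by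
      intro k l hkl t ht
      obtain ⟨u, hu, e⟩ := hG.1 ht
      obtain ⟨c, rfl⟩ := exists_add_of_le hkl
      exact hG.2 ⟨s ^ c • u, Submodule.smul_mem _ _ hu, by rw [← e, pow_add, mul_smul]⟩
    have wf : WellFounded ((· < ·) : Submodule A T → Submodule A T → Prop) := wellFounded_lt
    obtain ⟨_, ⟨m, rfl⟩, hmin⟩ := wf.has_min (Set.range fun k : ℕ => G (k + 1)) ⟨_, ⟨0, rfl⟩⟩
    have hst : ∀ k, m + 1 ≤ k → G k = G (m + 1) := by
      intro k hk
      obtain ⟨c, rfl⟩ := exists_add_of_le hk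
      exact (hGk (by omega)).eq_of_not_lt (hmin _ ⟨m + c, by rw [add_right_comm]⟩)
    let S₂ : Submodule A T := S ⊓ LinearMap.ker (LinearMap.lsmul A T (s ^ (m + 1)))
    have h1S : G (m + 1) ≤ S := by
      intro t ht
      obtain ⟨u, hu, rfl⟩ := hG.1 ht
      exact Submodule.smul_mem _ _ hu
    have h1 : G (m + 1) < S := by
      refine lt_of_le_of_ne h1S fun e => ?_
      obtain ⟨u, hu, e'⟩ := hG.1 (e.symm ▸ ht₀ : t₀ ∈ G (m + 1))
      exact hs₁ (s ^ m • u) (Submodule.smul_mem _ _ hu) (by rw [smul_smul, ← pow_succ', e'])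
    have h2 : S₂ < S := by
      refine lt_of_le_of_ne inf_le_left fun e => ?_
      obtain ⟨t, ht, hne⟩ := hs₂ (m + 1)
      rw [← e] at ht
      exact hne ht.2
    have hsum : ∀ t ∈ S, ∃ u ∈ G (m + 1), ∃ w ∈ S₂, t = u + w := by
      intro t ht
      have : s ^ (m + 1) • t ∈ G (m + 1 + (m + 1)) := by
        rw [hst _ (by omega)]; exact hG.2 ⟨t, ht, rfl⟩
      obtain ⟨u, hu, e⟩ := hG.1 this
      refine ⟨s ^ (m + 1) • u, hG.2 ⟨u, hu, rfl⟩, t - s ^ (m + 1) • u,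
        ⟨sub_mem ht (Submodule.smul_mem _ _ hu), ?_⟩, by abel⟩
      change s ^ (m + 1) • (t - s ^ (m + 1) • u) = 0
      rw [smul_sub, ← e, pow_add, mul_smul, sub_self]
    obtain ⟨F₁, a1, a2, a3⟩ := ih _ h1
    obtain ⟨F₂, b1, b2, b3⟩ := ih _ h2
    refine ⟨F₁ ∪ F₂, a1.union b1, fun P hP => hP.elim (a2 P) (b2 P), fun x y h => ?_⟩
    obtain ⟨k, hk⟩ := a3 x y fun P hP => h P (Or.inl hP)
    obtain ⟨l, hl⟩ := b3 x y fun P hP => h P (Or.inr hP)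
    refine ⟨k + l, fun t ht => ?_⟩
    obtain ⟨u, hu, w, hw, rfl⟩ := hsum t ht
    obtain ⟨u', hu', eu⟩ := hk u hu
    obtain ⟨w', hw', ew⟩ := hl w hw
    refine ⟨y ^ l • u' + y ^ k • w', add_mem (Submodule.smul_mem _ _ (h1S hu'))
      (Submodule.smul_mem _ _ hw'.1), ?_⟩
    rw [smul_add, smul_add, smul_comm x, smul_comm x, ← eu, ← ew, smul_smul, smul_smul,
      ← pow_add, ← pow_add, add_comm l k]

end Artinian

/-! ### Inverse polynomials -/

section InversePolynomials

variable {R : Type*} [CommRing R] {n : ℕ}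

/-- Inverse polynomials in `n` variables with coefficients in `M`: finitely supported functions on
the exponents `ℕ ^ n`, with `α` standing for the monomial of exponent `-α`. -/
def InvPoly (n : ℕ) (M : Type*) [Zero M] := (Fin n →₀ ℕ) →₀ M

noncomputable section

variable {M M' : Type*} [AddCommGroup M] [Module R M] [AddCommGroup M'] [Module R M']

instance : AddCommGroup (InvPoly n M) := inferInstanceAs (AddCommGroup ((Fin n →₀ ℕ) →₀ M))

instance : Module R (InvPoly n M) := inferInstanceAs (Module R ((Fin n →₀ ℕ) →₀ M))

instance : FunLike (InvPoly n M) (Fin n →₀ ℕ) M :=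
  inferInstanceAs (FunLike ((Fin n →₀ ℕ) →₀ M) (Fin n →₀ ℕ) M)

@[ext] lemma InvPoly.ext {w w' : InvPoly n M} (h : ∀ α, w α = w' α) : w = w' := Finsupp.ext h

@[simp] lemma InvPoly.add_apply (w w' : InvPoly n M) (α) : (w + w') α = w α + w' α := rfl
@[simp] lemma InvPoly.sub_apply (w w' : InvPoly n M) (α) : (w - w') α = w α - w' α :=
  Finsupp.sub_apply ..
@[simp] lemma InvPoly.zero_apply (α) : (0 : InvPoly n M) α = 0 := rfl
@[simp] lemma InvPoly.smul_apply (r : R) (w : InvPoly n M) (α) : (r • w) α = r • w α := rfl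

/-- Multiplication by the monomial `X ^ β` on inverse polynomials. -/
def shift (R : Type*) [CommRing R] {n : ℕ} (M : Type*) [AddCommGroup M] [Module R M]
    (β : Fin n →₀ ℕ) : InvPoly n M →ₗ[R] InvPoly n M :=
  Finsupp.lcomapDomain (fun α => α + β) (add_left_injective β)

@[simp] lemma shift_apply (β : Fin n →₀ ℕ) (w : InvPoly n M) (α) :
    shift R M β w α = w (α + β) := rfl

/-- The action of polynomials on inverse polynomials. -/
def shiftHom (R : Type*) [CommRing R] (n : ℕ) (M : Type*) [AddCommGroup M] [Module R M] :
    MvPolynomial (Fin n) R →ₐ[R] Module.End R (InvPoly n M) :=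
  AddMonoidAlgebra.lift R (Module.End R (InvPoly n M)) (Fin n →₀ ℕ)
    { toFun := fun β => shift R M β.toAdd
      map_one' := by ext w α; simp
      map_mul' := fun β γ => by
        ext w α; simp [add_comm, add_left_comm] }

instance : Module (MvPolynomial (Fin n) R) (InvPoly n M) :=
  Module.compHom _ (shiftHom R n M).toRingHom

lemma poly_smul_def (b : MvPolynomial (Fin n) R) (w : InvPoly n M) : b • w = shiftHom R n M b w :=
  rfl

@[simp] lemma monomial_smul (β : Fin n →₀ ℕ) (r : R) (w : InvPoly n M) :
    MvPolynomial.monomial β r • w = r • shift R M β w := by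
  rw [poly_smul_def]
  have := AddMonoidAlgebra.lift_single (R := R)
    (F := { toFun := fun β => shift R M (Multiplicative.toAdd β)
            map_one' := by ext w α; simp
            map_mul' := fun β γ => by
              ext w α; simp [add_comm, add_left_comm] }) β r
  exact LinearMap.congr_fun this w

lemma C_smul (r : R) (w : InvPoly n M) :
    (MvPolynomial.C r : MvPolynomial (Fin n) R) • w = r • w := by
  rw [MvPolynomial.C_apply, monomial_smul]
  congr 1
  ext α; simp

instance : IsScalarTower R (MvPolynomial (Fin n) R) (InvPoly n M) := ⟨fun r b w => by
  rw [← C_smul, smul_smul, MvPolynomial.smul_eq_C_mul]⟩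

lemma X_pow_smul_apply (j : Fin n) (k : ℕ) (w : InvPoly n M) (α) :
    ((MvPolynomial.X j ^ k : MvPolynomial (Fin n) R) • w) α = w (α + Finsupp.single j k) := by
  rw [MvPolynomial.X_pow_eq_monomial, monomial_smul, one_smul, shift_apply]

lemma X_smul_apply (j : Fin n) (w : InvPoly n M) (α) :
    ((MvPolynomial.X j : MvPolynomial (Fin n) R) • w) α = w (α + Finsupp.single j 1) := by
  rw [← X_pow_smul_apply (R := R), pow_one]

/-- The inverse polynomial with the single coefficient `m` at `α`. -/
def invMonomial (α : Fin n →₀ ℕ) : M →ₗ[R] InvPoly n M := Finsupp.lsingle α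

lemma exists_X_pow_smul (j : Fin n) (w : InvPoly n M) :
    ∃ k, (MvPolynomial.X j ^ k : MvPolynomial (Fin n) R) • w = 0 := by
  refine ⟨(Finsupp.support w).sup (fun α => α j) + 1, ?_⟩
  ext α
  rw [X_pow_smul_apply]
  by_contra hne
  have h : (α + Finsupp.single j ((Finsupp.support w).sup (fun α => α j) + 1)) j ≤
      (Finsupp.support w).sup (fun α => α j) :=
    Finset.le_sup (f := fun α : Fin n →₀ ℕ => α j) (Finsupp.mem_support_iff.2 hne)
  rw [Finsupp.add_apply, Finsupp.single_eq_same] at h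
  omega

/-- The map underlying `invPolyMap`. -/
def invPolyMapFun (n : ℕ) (f : M →ₗ[R] M') (w : InvPoly n M) : InvPoly n M' :=
  Finsupp.mapRange f (map_zero f) w

lemma invPolyMapFun_apply (f : M →ₗ[R] M') (w : InvPoly n M) (α) :
    invPolyMapFun n f w α = f (w α) := rfl

lemma invPolyMapFun_add (f : M →ₗ[R] M') (w w' : InvPoly n M) :
    invPolyMapFun n f (w + w') = invPolyMapFun n f w + invPolyMapFun n f w' := by
  ext α; simp [invPolyMapFun_apply]

/-- Functoriality of inverse polynomials in the coefficients. -/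
def invPolyMap (n : ℕ) (f : M →ₗ[R] M') :
    InvPoly n M →ₗ[MvPolynomial (Fin n) R] InvPoly n M' where
  toFun := invPolyMapFun n f
  map_add' := invPolyMapFun_add f
  map_smul' b w := by
    rw [RingHom.id_apply]
    induction b using MvPolynomial.induction_on' with
    | monomial β r =>
      ext α
      simp [invPolyMapFun_apply]
    | add p q hp hq =>
      rw [add_smul, add_smul, invPolyMapFun_add, hp, hq]

@[simp] lemma invPolyMap_apply (f : M →ₗ[R] M') (w : InvPoly n M) (α) :
    invPolyMap n f w α = f (w α) := rfl

lemma invPolyMap_injective (f : M →ₗ[R] M') (hf : Function.Injective f) :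
    Function.Injective (invPolyMap n f) := fun a b h => by
  ext α; exact hf (DFunLike.congr_fun h α)

lemma invPolyMap_surjective (f : M →ₗ[R] M') (hf : Function.Surjective f) :
    Function.Surjective (invPolyMap n f) :=
  Finsupp.mapRange_surjective f (map_zero f) hf

lemma invPolyMap_exact {M'' : Type*} [AddCommGroup M''] [Module R M''] (f : M →ₗ[R] M')
    (g : M' →ₗ[R] M'') (hf : Function.Injective f) (h : Function.Exact f g) :
    Function.Exact (invPolyMap n f) (invPolyMap n g) := by
  intro w
  constructor
  · intro hw
    have hw : ∀ α, w α ∈ LinearMap.range f := fun α => (h _).1 (DFunLike.congr_fun hw α)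
    let e := (LinearEquiv.ofInjective f hf).symm
    have he : ∀ α, f (e ⟨w α, hw α⟩) = w α := fun α =>
      congrArg Subtype.val ((LinearEquiv.ofInjective f hf).apply_symm_apply ⟨w α, hw α⟩)
    refine ⟨Finsupp.onFinset (Finsupp.support w) (fun α => e ⟨w α, hw α⟩) ?_, ?_⟩
    · intro α hα
      refine Finsupp.mem_support_iff.2 fun h0 => ?_
      have h0 : w α = 0 := h0
      apply hα
      apply hf
      rw [he, h0, map_zero]
    · ext α
      exact he α
  · rintro ⟨w, rfl⟩
    ext α
    exact h.apply_apply_eq_zero _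

end

end InversePolynomials

/-! ### The kernel filtration and local cohomology -/

section KernelFiltration

variable {A : Type*} [CommRing A] {n : ℕ} (v : Fin n → A)
variable (W : Type*) [AddCommGroup W] [Module A W]

/-- The submodule of `W` annihilated by the first `k` entries of `v`. -/
def kerFil (k : ℕ) : Submodule A W where
  carrier := {w | ∀ i : Fin n, (i : ℕ) < k → v i • w = 0}
  add_mem' ha hb i hi := by rw [smul_add, ha i hi, hb i hi, add_zero]
  zero_mem' _ _ := smul_zero _
  smul_mem' c w hw i hi := by rw [smul_comm, hw i hi, smul_zero]

variable {W}

lemma mem_kerFil {k : ℕ} {w : W} : w ∈ kerFil v W k ↔ ∀ i : Fin n, (i : ℕ) < k → v i • w = 0 :=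
  Iff.rfl

lemma kerFil_le (k : ℕ) : kerFil v W (k + 1) ≤ kerFil v W k :=
  fun _ hw i hi => hw i (by omega)

/-- The inclusion of consecutive steps of the filtration. -/
def kerFilIncl (k : ℕ) : kerFil v W (k + 1) →ₗ[A] kerFil v W k := inclusion (kerFil_le v k)

lemma kerFil_ses (k : ℕ) (hk : k < n)
    (hs : ∀ w ∈ kerFil v W k, ∃ u ∈ kerFil v W k, v ⟨k, hk⟩ • u = w) :
    Function.Injective (kerFilIncl (W := W) v k) ∧
    Function.Surjective (v ⟨k, hk⟩ • LinearMap.id : kerFil v W k →ₗ[A] kerFil v W k) ∧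
    Function.Exact (kerFilIncl (W := W) v k)
      (v ⟨k, hk⟩ • LinearMap.id : kerFil v W k →ₗ[A] kerFil v W k) := by
  refine ⟨inclusion_injective _, ?_, ?_⟩
  · rintro ⟨w, hw⟩
    obtain ⟨u, hu, e⟩ := hs w hw
    exact ⟨⟨u, hu⟩, Subtype.ext e⟩
  · rintro ⟨w, hw⟩
    constructor
    · intro h
      have h : v ⟨k, hk⟩ • w = 0 := congrArg Subtype.val h
      refine ⟨⟨w, fun i hi => ?_⟩, rfl⟩
      rcases Nat.lt_succ_iff_lt_or_eq.1 hi with hi | hi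
      · exact hw i hi
      · have : i = ⟨k, hk⟩ := Fin.ext hi
        rw [this, h]
    · rintro ⟨⟨u, hu⟩, e⟩
      have e : u = w := congrArg Subtype.val e
      subst e
      exact Subtype.ext (hu ⟨k, hk⟩ (Nat.lt_succ_self k))

/-- Induction on `p` along the long exact sequence of `0 → K_{k+1} → K_k → K_k → 0`, in which the
surjection is multiplication by `v k` and hence zero on homology. -/
lemma koszulH_kerFil_subsingleton
    (hs : ∀ k (hk : k < n), ∀ w ∈ kerFil v W k, ∃ u ∈ kerFil v W k, v ⟨k, hk⟩ • u = w)
    (p : ℕ) : ∀ k, p + k < n → Subsingleton (KoszulH v p (kerFil v W k)) := by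
  induction p with
  | zero =>
    intro k hk
    obtain ⟨_, h2, _⟩ := kerFil_ses v k (by omega) (hs k (by omega))
    refine subsingleton_of_forall_eq 0 fun y => ?_
    obtain ⟨z, rfl⟩ := homMap_zero_surjective v h2 y
    rw [homMap_smul_id, smul_koszulH]
  | succ p ih =>
    intro k hk
    obtain ⟨h1, h2, h3⟩ := kerFil_ses v k (by omega) (hs k (by omega))
    obtain ⟨δ, e1, e2⟩ := exists_connecting v p h1 h2 h3
    have := ih (k + 1) (by omega)
    refine subsingleton_of_forall_eq 0 fun y => ?_
    obtain ⟨z, rfl⟩ := (e1 y).1 (Subsingleton.elim _ _)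
    rw [homMap_smul_id, smul_koszulH]

lemma exists_koszulH_kerFil_bijective
    (hs : ∀ k (hk : k < n), ∀ w ∈ kerFil v W k, ∃ u ∈ kerFil v W k, v ⟨k, hk⟩ • u = w)
    (p : ℕ) : ∀ k, p + k = n →
      ∃ e : KoszulH v p (kerFil v W k) →ₗ[A] kerFil v W n, Function.Bijective e := by
  induction p with
  | zero =>
    intro k hk
    obtain rfl : k = n := by omega
    exact exists_koszulH_zero_bijective v fun j w => Subtype.ext (w.2 j j.2)
  | succ p ih =>
    intro k hk
    obtain ⟨h1, h2, h3⟩ := kerFil_ses v k (by omega) (hs k (by omega))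
    obtain ⟨δ, e1, e2⟩ := exists_connecting v p h1 h2 h3
    obtain ⟨e, he⟩ := ih (k + 1) (by omega)
    have hsub := koszulH_kerFil_subsingleton v hs p k (by omega)
    refine ⟨e ∘ₗ δ, he.comp ⟨?_, fun y => (e2 y).1 (Subsingleton.elim _ _)⟩⟩
    rw [injective_iff_map_eq_zero]
    intro y hy
    obtain ⟨z, rfl⟩ := (e1 y).1 hy
    rw [homMap_smul_id, smul_koszulH]

lemma homMap_subtype_kerFil_zero_bijective (p : ℕ) :
    Function.Bijective (homMap v p (kerFil v W 0).subtype) := by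
  have hex : Function.Exact (kerFil v W 0).subtype (0 : W →ₗ[A] PUnit) := fun w =>
    ⟨fun _ => ⟨⟨w, fun i hi => absurd hi (Nat.not_lt_zero _)⟩, rfl⟩, fun _ => rfl⟩
  have hs : Function.Surjective (0 : W →ₗ[A] PUnit) := fun _ => ⟨0, rfl⟩
  obtain ⟨δ, e1, e2⟩ := exists_connecting v p (injective_subtype _) hs hex
  have h0 := koszulH_subsingleton (W := PUnit) v (p + 1)
  have h1 := koszulH_subsingleton (W := PUnit) v p
  refine ⟨?_, fun y => (homMap_exact v p (injective_subtype _) hs hex y).1 (Subsingleton.elim _ _)⟩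
  rw [injective_iff_map_eq_zero]
  intro y hy
  obtain ⟨z, rfl⟩ := (e2 y).1 hy
  rw [Subsingleton.elim z 0, map_zero]

/-- If each `v k` acts surjectively on the submodule killed by its predecessors, the Koszul
homology is concentrated in degree `n`, where it is the submodule killed by all of `v`. -/
lemma koszulH_of_surjective
    (hs : ∀ k (hk : k < n), ∀ w ∈ kerFil v W k, ∃ u ∈ kerFil v W k, v ⟨k, hk⟩ • u = w) :
    (∀ p, p < n → Subsingleton (KoszulH v p W)) ∧
      Nonempty (KoszulH v n W ≃ₗ[A] kerFil v W n) := by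
  constructor
  · intro p hp
    have := koszulH_kerFil_subsingleton v hs p 0 hp
    exact (homMap_subtype_kerFil_zero_bijective v p).2.subsingleton
  · obtain ⟨e, he⟩ := exists_koszulH_kerFil_bijective v hs n 0 rfl
    exact ⟨(LinearEquiv.ofBijective _ (homMap_subtype_kerFil_zero_bijective v n)).symm.trans
      (LinearEquiv.ofBijective e he)⟩

end KernelFiltration

noncomputable section LocalCohomology

open MvPolynomial

variable {R : Type*} [CommRing R] {n : ℕ} (x : Fin n → R)
variable {M M' M'' : Type*} [AddCommGroup M] [Module R M] [AddCommGroup M'] [Module R M']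
  [AddCommGroup M''] [Module R M'']

/-- The elements `x j - X j` of the polynomial ring. -/
def par : Fin n → MvPolynomial (Fin n) R := fun j => C (x j) - X j

/-- A model of the local cohomology `H^{n - p}` of `M` with respect to the ideal `(x)`: the Koszul
homology of the elements `x j - X j` on the inverse polynomials over `M`. -/
abbrev LC (p : ℕ) (M : Type*) [AddCommGroup M] [Module R M] := KoszulH (par x) p (InvPoly n M)

/-- Functoriality of `LC`. -/
def lcMap (p : ℕ) (f : M →ₗ[R] M') : LC x p M →ₗ[MvPolynomial (Fin n) R] LC x p M' :=
  homMap (par x) p (invPolyMap n f)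

lemma lcMap_smul_id (p : ℕ) (r : R) (h : LC x p M) :
    lcMap x p (r • LinearMap.id) h = (C r : MvPolynomial (Fin n) R) • h := by
  rw [← homMap_smul_id, lcMap]
  congr 2
  ext w α
  simp [C_smul]

lemma lcMap_exact (p : ℕ) {f : M →ₗ[R] M'} {g : M' →ₗ[R] M''} (hf : Function.Injective f)
    (hg : Function.Surjective g) (hfg : Function.Exact f g) :
    Function.Exact (lcMap x p f) (lcMap x p g) :=
  homMap_exact _ p (invPolyMap_injective f hf) (invPolyMap_surjective g hg)
    (invPolyMap_exact f g hf hfg)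

lemma exists_lc_connecting (p : ℕ) {f : M →ₗ[R] M'} {g : M' →ₗ[R] M''}
    (hf : Function.Injective f) (hg : Function.Surjective g) (hfg : Function.Exact f g) :
    ∃ δ : LC x (p + 1) M'' →ₗ[MvPolynomial (Fin n) R] LC x p M,
      Function.Exact (lcMap x (p + 1) g) δ ∧ Function.Exact δ (lcMap x p f) :=
  exists_connecting _ p (invPolyMap_injective f hf) (invPolyMap_surjective g hg)
    (invPolyMap_exact f g hf hfg)

lemma lcMap_zero_surjective {g : M' →ₗ[R] M''} (hg : Function.Surjective g) :
    Function.Surjective (lcMap x 0 g) :=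
  homMap_zero_surjective _ (invPolyMap_surjective g hg)

lemma lc_subsingleton (p : ℕ) [Subsingleton M] : Subsingleton (LC x p M) :=
  have : Subsingleton (InvPoly n M) := ⟨fun a b => by ext α; exact Subsingleton.elim _ _⟩
  koszulH_subsingleton _ p

/-- Local cohomology is torsion: `X j` acts nilpotently on each class and agrees with `x j` on
homology. -/
lemma exists_C_pow_smul (p : ℕ) {r : R} (hr : r ∈ (Ideal.span (Set.range x)).radical)
    (h : LC x p M) : ∃ k, (C r : MvPolynomial (Fin n) R) ^ k • h = 0 := by
  let I : Ideal R := (Ideal.torsionOf (MvPolynomial (Fin n) R) (LC x p M) h).comap C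
  have hI : ∀ s, s ∈ I ↔ (C s : MvPolynomial (Fin n) R) • h = 0 := fun s => Iff.rfl
  have hx : ∀ j, x j ∈ I.radical := by
    intro j
    obtain ⟨k, hk⟩ := exists_pow_smul_koszulH (par x) p (X j : MvPolynomial (Fin n) R)
      (exists_X_pow_smul j) h
    refine ⟨k, (hI _).2 ?_⟩
    have h1 : ∀ h : LC x p M, (C (x j) : MvPolynomial (Fin n) R) • h = (X j : MvPolynomial (Fin n) R) • h := by
      intro h
      have := smul_koszulH (par x) p j h
      rwa [par, sub_smul, sub_eq_zero] at this
    have h2 : ∀ k, (C (x j) : MvPolynomial (Fin n) R) ^ k • h = (X j : MvPolynomial (Fin n) R) ^ k • h := by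
      intro k
      induction k with
      | zero => simp
      | succ k ih => rw [pow_succ', mul_smul, ih, h1, smul_smul, ← pow_succ']
    rw [map_pow, h2, hk]
  have : (Ideal.span (Set.range x)).radical ≤ I.radical := by
    rw [Ideal.radical_le_radical_iff, Ideal.span_le]
    rintro _ ⟨j, rfl⟩
    exact hx j
  obtain ⟨k, hk⟩ := this hr
  exact ⟨k, by rw [← map_pow]; exact (hI _).1 hk⟩

/-- Multiplication by the inverse variable `X j ^ (-1)`. -/
def up (j : Fin n) : InvPoly n M →ₗ[R] InvPoly n M :=
  Finsupp.lmapDomain M R (fun α => α + Finsupp.single j 1)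

lemma up_apply_add (j : Fin n) (w : InvPoly n M) (α) :
    up (R := R) j w (α + Finsupp.single j 1) = w α :=
  Finsupp.mapDomain_apply (add_left_injective (Finsupp.single j 1)) w α

lemma up_apply_of_eq_zero (j : Fin n) (w : InvPoly n M) (α : Fin n →₀ ℕ) (h : α j = 0) :
    up (R := R) j w α = 0 := by
  refine Finsupp.mapDomain_of_notMem_range w α ?_
  rintro ⟨β, rfl⟩
  simp at h

lemma X_smul_up (j : Fin n) (w : InvPoly n M) :
    (X j : MvPolynomial (Fin n) R) • up (R := R) j w = w := by
  ext α
  rw [X_smul_apply, up_apply_add]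

lemma X_smul_up_of_ne {i j : Fin n} (h : i ≠ j) (w : InvPoly n M) :
    (X i : MvPolynomial (Fin n) R) • up (R := R) j w
      = up (R := R) j ((X i : MvPolynomial (Fin n) R) • w) := by
  ext α
  rw [X_smul_apply]
  by_cases hα : α j = 0
  · rw [up_apply_of_eq_zero, up_apply_of_eq_zero _ _ _ hα]
    simp [hα, Finsupp.single_eq_of_ne h.symm]
  · obtain ⟨β, rfl⟩ : ∃ β, α = β + Finsupp.single j 1 :=
      ⟨α - Finsupp.single j 1, (tsub_add_cancel_of_le (by
        rw [Finsupp.single_le_iff]; omega)).symm⟩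
    rw [up_apply_add, X_smul_apply, add_right_comm, up_apply_add]

lemma par_smul (j : Fin n) (w : InvPoly n M) :
    par x j • w = x j • w - (X j : MvPolynomial (Fin n) R) • w := by
  rw [par, sub_smul, C_smul]

/-- Elements killed by a power of `x k` are in the image of `x k - X k`, by a finite geometric
series in the inverse variable; this is compatible with the kernel filtration. -/
lemma exists_par_smul (k : ℕ) (hk : k < n) (K : ℕ) : ∀ u ∈ kerFil (par x) (InvPoly n M) k,
    x ⟨k, hk⟩ ^ K • u = 0 → ∃ w ∈ kerFil (par x) (InvPoly n M) k, par x ⟨k, hk⟩ • w = u := by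
  induction K with
  | zero =>
    intro u _ h
    exact ⟨0, zero_mem _, by rw [smul_zero, ← h, pow_zero, one_smul]⟩
  | succ K ih =>
    intro u hu h
    set j : Fin n := ⟨k, hk⟩ with hj
    have hup : up (R := R) j u ∈ kerFil (par x) (InvPoly n M) k := by
      intro i hi
      have hne : i ≠ j := by rintro rfl; exact lt_irrefl _ hi
      rw [par_smul, X_smul_up_of_ne hne, ← map_smul, ← map_sub, ← par_smul, hu i hi, map_zero]
    have hmem : x j • up (R := R) j u ∈ kerFil (par x) (InvPoly n M) k := by
      rw [← C_smul]; exact smul_mem _ _ hup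
    obtain ⟨w, hw, e⟩ := ih (x j • up (R := R) j u) hmem (by
      rw [smul_smul, ← pow_succ, ← map_smul, h, map_zero])
    refine ⟨w - up (R := R) j u, sub_mem hw hup, ?_⟩
    rw [smul_sub, e, par_smul, X_smul_up, sub_sub_cancel]

end LocalCohomology

/-! ### Torsion and finite length modules -/

section Torsion

variable {R : Type*} [CommRing R] [IsLocalRing R]

lemma torsion_bot_of_pow_le (N : Type*) [AddCommGroup N] [Module R N] [Nontrivial N]
    (hN : ∃ k, maximalIdeal R ^ k ≤ Module.annihilator R N) :
    ∃ t : N, t ≠ 0 ∧ ∀ r ∈ maximalIdeal R, r • t = 0 := by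
  classical
  have h0 : Nat.find hN ≠ 0 := by
    intro h
    have := Nat.find_spec hN
    rw [h, pow_zero, Ideal.one_eq_top, top_le_iff, Module.annihilator_eq_top_iff] at this
    exact not_subsingleton N this
  have h1 := Nat.find_min hN (m := Nat.find hN - 1) (by omega)
  obtain ⟨s, hs, hs'⟩ := SetLike.not_le_iff_exists.1 h1
  rw [Module.mem_annihilator] at hs'
  push Not at hs'
  obtain ⟨t, ht⟩ := hs'
  refine ⟨s • t, ht, fun r hr => ?_⟩
  rw [smul_smul]
  refine Module.mem_annihilator.1 (Nat.find_spec hN ?_) t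
  have : Nat.find hN = (Nat.find hN - 1) + 1 := by omega
  rw [this, pow_succ']
  exact Ideal.mul_mem_mul hr hs

lemma isArtinian_of_pow_le [IsNoetherianRing R] (N : Type*) [AddCommGroup N] [Module R N]
    [Module.Finite R N] (hN : ∃ k, maximalIdeal R ^ k ≤ Module.annihilator R N) :
    IsArtinian R N := by
  rcases subsingleton_or_nontrivial N with h | h
  · infer_instance
  set I := Module.annihilator R N with hI
  have hI' : I ≠ ⊤ := by rw [Ne, Module.annihilator_eq_top_iff]; exact not_subsingleton N
  have : Nontrivial (R ⧸ I) := Ideal.Quotient.nontrivial_iff.2 hI'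
  have : IsLocalRing (R ⧸ I) := .of_surjective' _ Ideal.Quotient.mk_surjective
  have hart : IsArtinianRing (R ⧸ I) := by
    rw [isArtinianRing_iff_isNilpotent_maximalIdeal]
    obtain ⟨k, hk⟩ := hN
    refine ⟨k, ?_⟩
    have : maximalIdeal (R ⧸ I) = (maximalIdeal R).map (Ideal.Quotient.mk I) := by
      have := IsLocalHom.of_surjective (Ideal.Quotient.mk I) Ideal.Quotient.mk_surjective
      have h1 := IsLocalRing.maximalIdeal_comap (Ideal.Quotient.mk I)
      rw [← h1, Ideal.map_comap_of_surjective _ Ideal.Quotient.mk_surjective]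
    rw [this, ← Ideal.map_pow, Ideal.zero_eq_bot, Ideal.map_eq_bot_iff_le_ker, Ideal.mk_ker]
    exact hk
  have htor := Module.isTorsionBySet_annihilator R N
  let : Module (R ⧸ I) N := htor.module
  have : IsScalarTower R (R ⧸ I) N := htor.isScalarTower
  have : Module.Finite (R ⧸ I) N := Module.Finite.of_restrictScalars_finite R _ _
  exact (htor.semilinearMap.isArtinian_iff_of_bijective Function.bijective_id).2 inferInstance

/-- The largest submodule `N` of `M` killed by a power of the maximal ideal; the quotient `M ⧸ N`
has trivial socle. -/
lemma exists_torsion [IsNoetherianRing R] (M : Type*) [AddCommGroup M] [Module R M]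
    [Module.Finite R M] :
    ∃ N : Submodule R M, (∃ k, maximalIdeal R ^ k ≤ Module.annihilator R N) ∧
      ∀ t : M ⧸ N, (∀ r ∈ maximalIdeal R, r • t = 0) → t = 0 := by
  have wf : WellFounded ((· > ·) : Submodule R M → Submodule R M → Prop) := wellFounded_gt
  obtain ⟨N, ⟨k, hk⟩, hmax⟩ := wf.has_min
    {N : Submodule R M | ∃ k, maximalIdeal R ^ k ≤ Module.annihilator R N}
    ⟨⊥, 0, fun r _ => Module.mem_annihilator.2 fun t => Subsingleton.elim _ _⟩
  refine ⟨N, ⟨k, hk⟩, fun t ht => ?_⟩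
  obtain ⟨t, rfl⟩ := N.mkQ_surjective t
  rw [mkQ_apply, Quotient.mk_eq_zero]
  by_contra htN
  refine hmax (N ⊔ span R {t}) ⟨k + 1, ?_⟩
    (lt_of_le_of_ne le_sup_left fun e => htN (e ▸ mem_sup_right (mem_span_singleton_self t)))
  rw [pow_succ, Ideal.mul_le]
  intro r hr s hs
  rw [Module.mem_annihilator]
  rintro ⟨u, hu⟩
  obtain ⟨a, ha, b, hb, rfl⟩ := mem_sup.1 hu
  obtain ⟨c, rfl⟩ := mem_span_singleton.1 hb
  have h1 : s • (a + c • t) ∈ N := by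
    rw [smul_add, smul_comm s c t]
    refine add_mem (smul_mem _ _ ha) (smul_mem _ _ ?_)
    have := ht s hs
    rwa [mkQ_apply, ← Quotient.mk_smul, Quotient.mk_eq_zero] at this
  have h2 := Module.mem_annihilator.1 (hk hr) ⟨_, h1⟩
  apply Subtype.ext
  have h3 : r • s • (a + c • t) = 0 := congrArg Subtype.val h2
  rw [smul_smul] at h3
  exact h3

/-- In a module with trivial socle, prime avoidance gives a regular element of the maximal ideal
that avoids finitely many prescribed non-maximal primes. -/
lemma exists_regular [IsNoetherianRing R] (M : Type*) [AddCommGroup M] [Module R M]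
    [Module.Finite R M] (hM : ∀ t : M, (∀ r ∈ maximalIdeal R, r • t = 0) → t = 0)
    (F : Set (Ideal R)) (hF : F.Finite) (hFp : ∀ P ∈ F, P.IsPrime)
    (hFm : ∀ P ∈ F, P ≠ maximalIdeal R) :
    ∃ r ∈ maximalIdeal R, IsSMulRegular M r ∧ ∀ P ∈ F, r ∉ P := by
  by_contra! hc
  have hsub : (maximalIdeal R : Set R) ⊆ ⋃ P ∈ associatedPrimes R M ∪ F, (P : Set R) := by
    intro r hr
    rw [Set.biUnion_union, biUnion_associatedPrimes_eq_compl_regular]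
    by_cases h : IsSMulRegular M r
    · obtain ⟨P, hP, hrP⟩ := hc r hr h
      exact Or.inr (Set.mem_biUnion hP hrP)
    · exact Or.inl h
  have hpr : ∀ P ∈ associatedPrimes R M ∪ F, P.IsPrime := fun P hP =>
    hP.elim (fun h => IsAssociatedPrime.isPrime h) (hFp P)
  obtain ⟨P, hP, hle⟩ := (Ideal.subset_union_prime_finite (f := id)
    ((associatedPrimes.finite R M).union hF) ⊥ ⊥ (fun P hP _ _ => hpr P hP)).1 hsub
  have hPm : P = maximalIdeal R :=
    le_antisymm (le_maximalIdeal (hpr P hP).ne_top) hle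
  rcases hP with hP | hP
  · obtain ⟨_, t, ht⟩ := (isAssociatedPrime_iff).1 hP
    have h0 : t = 0 := hM t fun r hr => by
      rw [← hPm, ht] at hr
      simpa using hr
    apply (hpr P (Or.inl hP)).ne_top
    rw [ht, h0]
    ext; simp
  · exact hFm P hP hPm

lemma support_subset_of_pow_le (N : Type*) [AddCommGroup N] [Module R N]
    (hN : ∃ k, maximalIdeal R ^ k ≤ Module.annihilator R N) :
    Module.support R N ⊆ {closedPoint R} := by
  intro P hP
  obtain ⟨k, hk⟩ := hN
  have h1 := hk.trans (Module.annihilator_le_of_mem_support hP)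
  have h2 : maximalIdeal R ≤ P.asIdeal := P.2.le_of_pow_le h1
  exact PrimeSpectrum.ext (le_antisymm (le_maximalIdeal P.2.ne_top) h2)

/-- Passing to the quotient by the torsion submodule does not change the dimension, unless the
whole module is torsion. -/
lemma torsion_supportDim (M : Type*) [AddCommGroup M] [Module R M] (N : Submodule R M)
    (hN : ∃ k, maximalIdeal R ^ k ≤ Module.annihilator R N) :
    Nontrivial (M ⧸ N) ∧ Module.supportDim R (M ⧸ N) = Module.supportDim R M ∨
      (∃ k, maximalIdeal R ^ k ≤ Module.annihilator R M) ∧ Subsingleton (M ⧸ N) ∧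
        Module.supportDim R M ≤ 0 := by
  have hsupp : Module.support R M = Module.support R N ∪ Module.support R (M ⧸ N) :=
    Module.support_of_exact (LinearMap.exact_subtype_mkQ N) N.injective_subtype N.mkQ_surjective
  have hNs := support_subset_of_pow_le N hN
  rcases subsingleton_or_nontrivial (M ⧸ N) with h | h
  · right
    refine ⟨?_, h, ?_⟩
    · obtain ⟨k, hk⟩ := hN
      refine ⟨k, fun r hr => Module.mem_annihilator.2 fun t => ?_⟩
      rw [Submodule.Quotient.subsingleton_iff] at h
      exact congrArg Subtype.val
        (Module.mem_annihilator.1 (hk hr) ⟨t, h.symm ▸ mem_top⟩)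
    · have : Subsingleton (Module.support R M) := by
        rw [hsupp, Module.support_eq_empty (M := M ⧸ N), Set.union_empty, Set.subsingleton_coe]
        exact Set.subsingleton_singleton.anti hNs
      exact Order.krullDim_nonpos_of_subsingleton
  · left
    refine ⟨h, ?_⟩
    rw [Module.supportDim, Module.supportDim, hsupp, Set.union_eq_self_of_subset_left
      (hNs.trans (Set.singleton_subset_iff.2 (closedPoint_mem_support R (M ⧸ N))))]

end Torsion

noncomputable section Vanishing

open MvPolynomial

variable {R : Type*} [CommRing R] [IsLocalRing R] {n : ℕ} (x : Fin n → R)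

lemma exists_par_smul_of_pow_le (hx : ∀ j, x j ∈ maximalIdeal R) (N : Type*) [AddCommGroup N]
    [Module R N] (hN : ∃ k, maximalIdeal R ^ k ≤ Module.annihilator R N) (k : ℕ) (hk : k < n) :
    ∀ u ∈ kerFil (par x) (InvPoly n N) k,
      ∃ w ∈ kerFil (par x) (InvPoly n N) k, par x ⟨k, hk⟩ • w = u := by
  obtain ⟨K, hK⟩ := hN
  refine fun u hu => exists_par_smul x k hk K u hu ?_
  ext α
  exact Module.mem_annihilator.1 (hK (Ideal.pow_mem_pow (hx _) K)) _

lemma lc_subsingleton_of_pow_le (hx : ∀ j, x j ∈ maximalIdeal R) (N : Type*) [AddCommGroup N]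
    [Module R N] (hN : ∃ k, maximalIdeal R ^ k ≤ Module.annihilator R N) (p : ℕ) (hp : p < n) :
    Subsingleton (LC x p N) :=
  (koszulH_of_surjective (par x) (exists_par_smul_of_pow_le x hx N hN)).1 p hp

lemma lc_nontrivial_of_pow_le (hx : ∀ j, x j ∈ maximalIdeal R) (N : Type*) [AddCommGroup N]
    [Module R N] [Nontrivial N] (hN : ∃ k, maximalIdeal R ^ k ≤ Module.annihilator R N) :
    ¬ Subsingleton (LC x n N) := by
  intro h
  obtain ⟨e⟩ := (koszulH_of_surjective (par x) (exists_par_smul_of_pow_le x hx N hN)).2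
  obtain ⟨t, ht, hmt⟩ := torsion_bot_of_pow_le N hN
  -- the constant inverse polynomial on a socle element is killed by all `x j - X j`
  have hmem : (invMonomial (R := R) 0 t : InvPoly n N) ∈ kerFil (par x) (InvPoly n N) n := by
    intro i _
    rw [par_smul, ← map_smul, hmt _ (hx i), map_zero, zero_sub, neg_eq_zero]
    ext α
    rw [X_smul_apply]
    refine Finsupp.single_eq_of_ne ?_
    intro h0
    have := DFunLike.congr_fun h0 i
    simp at this
  have := e.symm.toEquiv.subsingleton
  have h0 : (⟨_, hmem⟩ : kerFil (par x) (InvPoly n N) n) = 0 := Subsingleton.elim _ _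
  have h1 : (invMonomial (R := R) 0 t : InvPoly n N) = 0 := congrArg Subtype.val h0
  apply ht
  have h2 := DFunLike.congr_fun h1 0
  rw [InvPoly.zero_apply] at h2
  rw [← h2]
  exact Finsupp.single_eq_same.symm

/-- For `N` of finite length only `H^0`, the submodule of `InvPoly n N` killed by all `x j - X j`,
is nonzero, and it embeds into the Artinian module `N` by taking constant coefficients. -/
lemma lc_isArtinian_of_pow_le [IsNoetherianRing R] (hx : ∀ j, x j ∈ maximalIdeal R) (N : Type*)
    [AddCommGroup N] [Module R N] [Module.Finite R N]
    (hN : ∃ k, maximalIdeal R ^ k ≤ Module.annihilator R N) (p : ℕ) :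
    IsArtinian (MvPolynomial (Fin n) R) (LC x p N) := by
  rcases lt_trichotomy p n with hp | rfl | hp
  · have := lc_subsingleton_of_pow_le x hx N hN p hp
    infer_instance
  · obtain ⟨e⟩ := (koszulH_of_surjective (par x) (exists_par_smul_of_pow_le x hx N hN)).2
    have := isArtinian_of_pow_le N hN
    -- elements killed by all `x j - X j` are determined by their constant coefficient
    let ev : kerFil (par x) (InvPoly p N) p →ₗ[R] N :=
      { toFun := fun w => (w : InvPoly p N) 0
        map_add' := fun _ _ => rfl
        map_smul' := fun _ _ => rfl }
    have hev : Function.Injective ev := by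
      rw [injective_iff_map_eq_zero]
      rintro ⟨w, hw⟩ h0
      have h0 : w 0 = 0 := h0
      have hstep : ∀ (j : Fin p) (α : Fin p →₀ ℕ), w α = 0 → w (α + Finsupp.single j 1) = 0 := by
        intro j α hα
        have h1 := hw j j.2
        rw [par_smul, sub_eq_zero] at h1
        have h2 := DFunLike.congr_fun h1 α
        rw [X_smul_apply, InvPoly.smul_apply, hα, smul_zero] at h2
        exact h2.symm
      have hpow : ∀ (j : Fin p) (k : ℕ) (α : Fin p →₀ ℕ), w α = 0 →
          w (α + Finsupp.single j k) = 0 := by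
        intro j k
        induction k with
        | zero => intro α hα; simpa using hα
        | succ k ih =>
          intro α hα
          rw [Finsupp.single_add, ← add_assoc]
          exact hstep j _ (ih α hα)
      apply Subtype.ext
      ext α
      change w α = 0
      induction α using Finsupp.induction with
      | zero => exact h0
      | single_add j k α _ _ ih => rw [add_comm]; exact hpow j k α ih
    have h1 : IsArtinian R (kerFil (par x) (InvPoly p N) p) := isArtinian_of_injective ev hev
    have h2 := isArtinian_of_tower R (S := MvPolynomial (Fin p) R) h1
    exact isArtinian_of_injective e.toLinearMap e.injective
  · have := koszulH_subsingleton_of_lt (W := InvPoly n N) (par x) p hp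
    infer_instance

end Vanishing

/-! ### Vanishing, Artinianness and non-vanishing -/

noncomputable section Induction

open MvPolynomial
open scoped Pointwise

universe u
variable {R : Type*} [CommRing R] {n : ℕ} (x : Fin n → R)

/-- The long exact sequence of local cohomology for multiplication by a regular element `r`. -/
lemma exists_lc_quot {M : Type*} [AddCommGroup M] [Module R M] {r : R} (hr : IsSMulRegular M r)
    (p : ℕ) : ∃ (g : LC x (p + 1) M →ₗ[MvPolynomial (Fin n) R] LC x (p + 1) (QuotSMulTop r M))
      (δ : LC x (p + 1) (QuotSMulTop r M) →ₗ[MvPolynomial (Fin n) R] LC x p M),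
      (∀ h, g h = 0 ↔ ∃ u, (C r : MvPolynomial (Fin n) R) • u = h) ∧ Function.Exact g δ ∧
      ∀ h, (C r : MvPolynomial (Fin n) R) • h = 0 ↔ ∃ q, δ q = h := by
  have h1 : Function.Injective (r • LinearMap.id : M →ₗ[R] M) := hr
  have h2 := mkQ_surjective (r • (⊤ : Submodule R M))
  have h3 : Function.Exact (r • LinearMap.id : M →ₗ[R] M) (mkQ (r • (⊤ : Submodule R M))) := by
    intro t
    rw [mkQ_apply, Quotient.mk_eq_zero, mem_smul_pointwise_iff_exists]
    simp
  obtain ⟨δ, e1, e2⟩ := exists_lc_connecting x p h1 h2 h3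
  refine ⟨lcMap x (p + 1) (mkQ (r • (⊤ : Submodule R M))), δ, fun h => ?_, e1, fun h => ?_⟩
  · rw [lcMap_exact x (p + 1) h1 h2 h3 h]
    exact exists_congr fun u => by rw [lcMap_smul_id]
  · rw [← lcMap_smul_id, e2 h]
    rfl

lemma eq_zero_of_pow_smul {A T : Type*} [CommRing A] [AddCommGroup T] [Module A T] (a : A)
    (hT : ∀ t : T, ∃ k, a ^ k • t = 0) (hinj : ∀ t : T, a • t = 0 → t = 0) : Subsingleton T := by
  refine subsingleton_of_forall_eq 0 fun t => ?_
  obtain ⟨k, hk⟩ := hT t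
  induction k with
  | zero => simpa using hk
  | succ k ih => exact ih (hinj _ (by rwa [smul_smul, ← pow_succ']))

variable [IsLocalRing R]

lemma lc_subsingleton_of_torsion_quot (hx : ∀ j, x j ∈ maximalIdeal R) {M : Type*}
    [AddCommGroup M] [Module R M] (N : Submodule R M)
    (hN : ∃ k, maximalIdeal R ^ k ≤ Module.annihilator R N) (p : ℕ) (hp : p < n)
    (h : Subsingleton (LC x p (M ⧸ N))) : Subsingleton (LC x p M) := by
  have := lc_subsingleton_of_pow_le x hx N hN p hp
  refine subsingleton_of_forall_eq 0 fun t => ?_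
  obtain ⟨s, rfl⟩ := (lcMap_exact x p N.injective_subtype N.mkQ_surjective
    (LinearMap.exact_subtype_mkQ N) t).1 (Subsingleton.elim _ _)
  rw [Subsingleton.elim s 0, map_zero]

lemma lcMap_mkQ_surjective (hx : ∀ j, x j ∈ maximalIdeal R) {M : Type*}
    [AddCommGroup M] [Module R M] (N : Submodule R M)
    (hN : ∃ k, maximalIdeal R ^ k ≤ Module.annihilator R N) (p : ℕ) (hp : p ≤ n) :
    Function.Surjective (lcMap x p N.mkQ) := by
  cases p with
  | zero => exact lcMap_zero_surjective x N.mkQ_surjective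
  | succ q =>
    have := lc_subsingleton_of_pow_le x hx N hN q (by omega)
    obtain ⟨δ, e1, _⟩ := exists_lc_connecting x q N.injective_subtype N.mkQ_surjective
      (LinearMap.exact_subtype_mkQ N)
    exact fun t => (e1 t).1 (Subsingleton.elim _ _)

lemma lt_of_add_one_lt {a : WithBot ℕ∞} {e : ℕ} (h : a + 1 < ((e + 1 : ℕ) : WithBot ℕ∞)) :
    a < (e : WithBot ℕ∞) := by
  by_contra! hc
  exact absurd (add_le_add_left hc 1) (not_le.2 (by simpa using h))

lemma eq_of_add_one_eq {a : WithBot ℕ∞} {e : ℕ} (h : a + 1 = ((e + 1 : ℕ) : WithBot ℕ∞)) :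
    a = (e : WithBot ℕ∞) := by
  induction a with
  | bot => exact absurd h (WithBot.coe_ne_bot (a := ((e + 1 : ℕ) : ℕ∞))).symm
  | coe a =>
    have h : ((a + 1 : ℕ∞) : WithBot ℕ∞) = (((e + 1 : ℕ) : ℕ∞) : WithBot ℕ∞) := h
    have h := WithBot.coe_injective h
    rw [Nat.cast_add, Nat.cast_one] at h
    have : a = e := (ENat.add_left_injective_of_ne_top ENat.one_ne_top) h
    rw [this]; rfl

lemma not_succ_le_zero (k : ℕ) : ¬ ((k + 1 : ℕ) : WithBot ℕ∞) ≤ 0 := fun hk => by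
  have h : (((k + 1 : ℕ) : WithBot ℕ∞) ≤ ((0 : ℕ) : WithBot ℕ∞)) := by rwa [Nat.cast_zero]
  have := Nat.cast_le.1 h
  omega

variable [IsNoetherianRing R]

/-- Grothendieck vanishing: `H^i` vanishes for `i` larger than the dimension. -/
lemma lc_subsingleton_of_supportDim_lt (hx : ∀ j, x j ∈ maximalIdeal R)
    (hrad : maximalIdeal R ≤ (Ideal.span (Set.range x)).radical) (e : ℕ) :
    ∀ (M : Type u) [AddCommGroup M] [Module R M] [Module.Finite R M],
      Module.supportDim R M < e → ∀ p, p + e ≤ n → Subsingleton (LC x p M) := by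
  induction e with
  | zero =>
    intro M _ _ _ h p _
    have : Subsingleton M := by
      by_contra hM
      rw [not_subsingleton_iff_nontrivial] at hM
      exact absurd h (not_lt.2 (Order.krullDim_nonneg_iff.2
        (Module.nonempty_support_of_nontrivial.to_subtype)))
    exact lc_subsingleton x p
  | succ e ih =>
    intro M _ _ _ h p hp
    obtain ⟨N, hN, hsoc⟩ := exists_torsion M (R := R)
    refine lc_subsingleton_of_torsion_quot x hx N hN p (by omega) ?_
    rcases torsion_supportDim M N hN with ⟨hnt, hdim⟩ | ⟨_, hs, _⟩
    · obtain ⟨r, hrm, hreg, _⟩ := exists_regular (M ⧸ N) hsoc ∅ Set.finite_empty (by simp) (by simp)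
      have h1 := Module.supportDim_quotSMulTop_succ_eq_supportDim hreg hrm
      have := ih (QuotSMulTop r (M ⧸ N)) (lt_of_add_one_lt (by rw [h1, hdim]; exact h)) (p + 1)
        (by omega)
      obtain ⟨g, δ, _, _, e3⟩ := exists_lc_quot x hreg p
      refine eq_zero_of_pow_smul (C r : MvPolynomial (Fin n) R)
        (exists_C_pow_smul x p (hrad hrm)) fun t ht => ?_
      obtain ⟨q, rfl⟩ := (e3 t).1 ht
      rw [Subsingleton.elim q 0, map_zero]
    · exact lc_subsingleton x p

/-- Local cohomology of a finite module is Artinian over the polynomial ring, by induction on the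
dimension: modulo torsion, the kernel of a regular element is a quotient of the local cohomology
of a module of smaller dimension. -/
lemma lc_isArtinian (hx : ∀ j, x j ∈ maximalIdeal R)
    (hrad : maximalIdeal R ≤ (Ideal.span (Set.range x)).radical) (e : ℕ) :
    ∀ (M : Type u) [AddCommGroup M] [Module R M] [Module.Finite R M],
      Module.supportDim R M < e → ∀ p, IsArtinian (MvPolynomial (Fin n) R) (LC x p M) := by
  induction e with
  | zero =>
    intro M _ _ _ h p
    have : Subsingleton M := by
      by_contra hM
      rw [not_subsingleton_iff_nontrivial] at hM
      exact absurd h (not_lt.2 (Order.krullDim_nonneg_iff.2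
        (Module.nonempty_support_of_nontrivial.to_subtype)))
    have := lc_subsingleton (M := M) x p
    infer_instance
  | succ e ih =>
    intro M _ _ _ h p
    obtain ⟨N, hN, hsoc⟩ := exists_torsion M (R := R)
    have hNA := lc_isArtinian_of_pow_le x hx N hN p
    suffices IsArtinian (MvPolynomial (Fin n) R) (LC x p (M ⧸ N)) from
      isArtinian_of_range_eq_ker (lcMap x p N.subtype) (lcMap x p N.mkQ)
        (LinearMap.exact_iff.1 (lcMap_exact x p N.injective_subtype N.mkQ_surjective
          (LinearMap.exact_subtype_mkQ N))).symm
    rcases torsion_supportDim M N hN with ⟨hnt, hdim⟩ | ⟨_, hs, _⟩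
    · obtain ⟨r, hrm, hreg, _⟩ := exists_regular (M ⧸ N) hsoc ∅ Set.finite_empty (by simp) (by simp)
      have h1 := Module.supportDim_quotSMulTop_succ_eq_supportDim hreg hrm
      have := ih (QuotSMulTop r (M ⧸ N)) (lt_of_add_one_lt (by rw [h1, hdim]; exact h)) (p + 1)
      obtain ⟨g, δ, _, _, e3⟩ := exists_lc_quot x hreg p
      refine isArtinian_of_torsion (C r : MvPolynomial (Fin n) R)
        (exists_C_pow_smul x p (hrad hrm)) ?_
      have hker : LinearMap.ker (LinearMap.lsmul _ (LC x p (M ⧸ N))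
          (C r : MvPolynomial (Fin n) R)) = LinearMap.range δ := by
        ext t; exact e3 t
      rw [hker]
      infer_instance
    · have := lc_subsingleton (M := M ⧸ N) x p
      infer_instance

/-- In positive dimension, the top local cohomology vanishes if each element of the maximal ideal
acts nilpotently on it: modulo torsion, a regular element acts on it surjectively. -/
lemma lc_subsingleton_of_pow_smul (hx : ∀ j, x j ∈ maximalIdeal R)
    (hrad : maximalIdeal R ≤ (Ideal.span (Set.range x)).radical) (Q : Type*) [AddCommGroup Q]
    [Module R Q] [Module.Finite R Q] {e : ℕ} (hQ : Module.supportDim R Q = (e + 1 : ℕ)) (p : ℕ)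
    (hp : p + 1 + (e + 1) = n)
    (hkill : ∀ y ∈ maximalIdeal R, ∃ k, ∀ q : LC x (p + 1) Q,
        (C y : MvPolynomial (Fin n) R) ^ k • q = 0) : Subsingleton (LC x (p + 1) Q) := by
  obtain ⟨N₁, hN₁, hsoc₁⟩ := exists_torsion Q (R := R)
  rcases torsion_supportDim Q N₁ hN₁ with ⟨hnt₁, hdim₁⟩ | ⟨_, _, h0⟩
  swap
  · rw [hQ] at h0; exact absurd h0 (not_succ_le_zero e)
  obtain ⟨y, hym, hyreg, _⟩ :=
    exists_regular (Q ⧸ N₁) hsoc₁ ∅ Set.finite_empty (by simp) (by simp)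
  have h1 := Module.supportDim_quotSMulTop_succ_eq_supportDim hyreg hym
  have h2 := lc_subsingleton_of_supportDim_lt x hx hrad (e + 1) (QuotSMulTop y (Q ⧸ N₁))
    (lt_of_add_one_lt (by rw [h1, hdim₁, hQ]; exact_mod_cast Nat.lt_succ_self (e + 1)))
    (p + 1) (by omega)
  obtain ⟨g', _, hg', _, _⟩ := exists_lc_quot x hyreg p
  have hsurj : ∀ t : LC x (p + 1) (Q ⧸ N₁), ∃ u, (C y : MvPolynomial (Fin n) R) • u = t :=
    fun t => (hg' t).1 (Subsingleton.elim _ _)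
  have hsurjk : ∀ k, ∀ t : LC x (p + 1) (Q ⧸ N₁),
      ∃ u, (C y : MvPolynomial (Fin n) R) ^ k • u = t := by
    intro k
    induction k with
    | zero => exact fun t => ⟨t, by simp⟩
    | succ k ih =>
      intro t
      obtain ⟨u, rfl⟩ := ih t
      obtain ⟨w, rfl⟩ := hsurj u
      exact ⟨w, by rw [pow_succ, mul_smul]⟩
  obtain ⟨k, hk⟩ := hkill y hym
  refine lc_subsingleton_of_torsion_quot x hx N₁ hN₁ (p + 1) (by omega) ?_
  refine subsingleton_of_forall_eq 0 fun t => ?_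
  obtain ⟨u, rfl⟩ := hsurjk k t
  obtain ⟨q, rfl⟩ := lcMap_mkQ_surjective x hx N₁ hN₁ (p + 1) (by omega) u
  rw [← map_smul, hk, map_zero]

/-- Non-vanishing: `H^i` is nonzero for `i` equal to the dimension. -/
lemma lc_not_subsingleton (hx : ∀ j, x j ∈ maximalIdeal R)
    (hrad : maximalIdeal R ≤ (Ideal.span (Set.range x)).radical) (e : ℕ) :
    ∀ (M : Type u) [AddCommGroup M] [Module R M] [Module.Finite R M],
      Module.supportDim R M = e → ∀ p, p + e = n → ¬ Subsingleton (LC x p M) := by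
  induction e with
  | zero =>
    intro M _ _ _ h p hp
    obtain rfl : p = n := by omega
    obtain ⟨N, hN, hsoc⟩ := exists_torsion M (R := R)
    rcases torsion_supportDim M N hN with ⟨hnt, hdim⟩ | ⟨ht, _, _⟩
    · -- a regular element would lower the dimension below zero
      obtain ⟨r, hrm, hreg, _⟩ := exists_regular (M ⧸ N) hsoc ∅ Set.finite_empty (by simp) (by simp)
      have h1 := Module.supportDim_quotSMulTop_succ_eq_supportDim hreg hrm
      rw [hdim, h] at h1
      exfalso
      generalize Module.supportDim R (QuotSMulTop r (M ⧸ N)) = a at h1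
      induction a with
      | bot => simp at h1
      | coe a =>
        have h1 : ((a + 1 : ℕ∞) : WithBot ℕ∞) = ((0 : ℕ∞) : WithBot ℕ∞) := by simpa using h1
        simpa using WithBot.coe_injective h1
    · have : Nontrivial M := by
        rw [← Module.supportDim_ne_bot_iff_nontrivial R, h]
        exact WithBot.coe_ne_bot
      exact lc_nontrivial_of_pow_le x hx M ht
  | succ e ih =>
    intro M _ _ _ h p hp hsub
    obtain ⟨N, hN, hsoc⟩ := exists_torsion M (R := R)
    rcases torsion_supportDim M N hN with ⟨hnt, hdim⟩ | ⟨_, _, h0⟩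
    swap
    · rw [h] at h0; exact not_succ_le_zero e h0
    have hM' : Subsingleton (LC x p (M ⧸ N)) :=
      (lcMap_mkQ_surjective x hx N hN p (by omega)).subsingleton
    have hart := lc_isArtinian x hx hrad (e + 2) (M ⧸ N)
      (by rw [hdim, h]; exact_mod_cast Nat.lt_succ_self (e + 1)) (p + 1)
    obtain ⟨F, hF, hFp, hatt⟩ := exists_attached (A := MvPolynomial (Fin n) R)
      (T := LC x (p + 1) (M ⧸ N))
    -- a regular element outside all attached primes that do not lie over the maximal ideal
    obtain ⟨r, hrm, hreg, hrF⟩ := exists_regular (M ⧸ N) hsoc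
      {P | P ∈ Ideal.comap C '' F ∧ P ≠ maximalIdeal R} ((hF.image _).subset fun P hP => hP.1)
      (by rintro _ ⟨⟨P, hP, rfl⟩, _⟩; have := hFp P hP; exact Ideal.comap_isPrime _ _)
      (fun P hP => hP.2)
    have hQ : Module.supportDim R (QuotSMulTop r (M ⧸ N)) = (e : ℕ) := by
      apply eq_of_add_one_eq
      rw [Module.supportDim_quotSMulTop_succ_eq_supportDim hreg hrm, hdim, h]
    set Q := QuotSMulTop r (M ⧸ N) with hQdef
    obtain ⟨g, δ, hg, hgδ, _⟩ := exists_lc_quot x hreg p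
    have hgs : Function.Surjective g := fun q => (hgδ q).1 (Subsingleton.elim _ _)
    have hkill : ∀ y ∈ maximalIdeal R, ∃ k, ∀ q : LC x (p + 1) Q,
        (C y : MvPolynomial (Fin n) R) ^ k • q = 0 := by
      intro y hy
      obtain ⟨k, hk⟩ := hatt (C r) (C y) (fun P hP hrP => by
        by_cases hc : P.comap (C : R →+* MvPolynomial (Fin n) R) = maximalIdeal R
        · rw [← hc] at hy; exact hy
        · exact absurd hrP (hrF _ ⟨⟨P, hP, rfl⟩, hc⟩))
      refine ⟨k, fun q => ?_⟩
      obtain ⟨t, rfl⟩ := hgs q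
      obtain ⟨u, hu⟩ := hk t
      rw [← map_smul, hg]
      exact ⟨u, hu.symm⟩
    cases e with
    | zero =>
      have h2 : Subsingleton (LC x (p + 2) Q) := koszulH_subsingleton_of_lt _ _ (by omega)
      obtain ⟨_, δ', _, _, e3⟩ := exists_lc_quot x hreg (p + 1)
      have : Subsingleton (LC x (p + 1) (M ⧸ N)) :=
        eq_zero_of_pow_smul (C r : MvPolynomial (Fin n) R)
          (exists_C_pow_smul x _ (hrad hrm)) fun t ht => by
            obtain ⟨q, rfl⟩ := (e3 t).1 ht
            rw [Subsingleton.elim q 0, map_zero]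
      exact ih Q hQ (p + 1) (by omega) hgs.subsingleton
    | succ e =>
      exact ih Q hQ (p + 1) (by omega)
        (lc_subsingleton_of_pow_smul x hx hrad Q hQ p (by omega) hkill)

end Induction

/-! ### The top local cohomology and the determinant trick -/

noncomputable section TopCohomology

open MvPolynomial

variable {R : Type*} [CommRing R] {n : ℕ} (x : Fin n → R) {M : Type*} [AddCommGroup M] [Module R M]

lemma monomial_smul_invMonomial (α γ : Fin n →₀ ℕ) (m : M) :
    (monomial γ 1 : MvPolynomial (Fin n) R) • invMonomial (R := R) (α + γ) m
      = invMonomial (R := R) α m := by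
  rw [monomial_smul, one_smul]
  ext δ
  rw [shift_apply]
  change Finsupp.single (α + γ) m (δ + γ) = Finsupp.single α m δ
  classical
  simp only [Finsupp.single_apply, add_left_inj]

/-- On `H_0` of the elements `x j - X j`, the monomial `X ^ γ` acts as the product of the
`x j ^ γ j`. -/
lemma monomial_sub_C_mem (γ : Fin n →₀ ℕ) :
    (monomial γ 1 : MvPolynomial (Fin n) R) - C (∏ j, x j ^ γ j) ∈
      Ideal.span (Set.range (par x)) := by
  rw [← Ideal.Quotient.eq, monomial_eq, C_1, one_mul, Finsupp.prod_fintype _ _ (by simp),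
    map_prod, map_prod, map_prod]
  refine Finset.prod_congr rfl fun j _ => ?_
  rw [map_pow, map_pow, map_pow]
  congr 1
  refine (Ideal.Quotient.eq.2 ?_).symm
  exact Ideal.subset_span ⟨j, rfl⟩

/-- The top local cohomology vanishes if each `(x₁ ⋯ x_n) ^ (N - a) M` is contained in
`(x₁ ^ N, …, x_n ^ N) M` for some `N`: every inverse monomial becomes trivial. -/
lemma lc_zero_subsingleton
    (H : ∀ a : ℕ, ∃ N, a ≤ N ∧ ∀ m : M, (∏ j, x j ^ (N - a)) • m ∈
      Ideal.span (Set.range fun j => x j ^ N) • (⊤ : Submodule R M)) :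
    Subsingleton (LC x 0 M) := by
  refine koszulH_zero_subsingleton _ fun w => ?_
  set U : Submodule (MvPolynomial (Fin n) R) (InvPoly n M) :=
    Ideal.span (Set.range (par x)) • ⊤ with hU
  have hmod : ∀ (γ : Fin n →₀ ℕ) (w : InvPoly n M),
      (monomial γ 1 : MvPolynomial (Fin n) R) • w - (∏ j, x j ^ γ j) • w ∈ U := by
    intro γ w
    rw [← C_smul, ← sub_smul]
    exact smul_mem_smul (monomial_sub_C_mem x γ) mem_top
  have key : ∀ (α : Fin n →₀ ℕ) (m : M), (invMonomial (R := R) α m : InvPoly n M) ∈ U := by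
    intro α m
    set s := Finset.univ.sup (fun j => α j) with hs
    have hle : ∀ j, α j ≤ s := fun j => Finset.le_sup (f := fun j => α j) (Finset.mem_univ j)
    obtain ⟨N, haN, hN⟩ := H (s + 1)
    let γ : Fin n →₀ ℕ := Finsupp.equivFunOnFinite.symm fun j => N - 1 - α j
    have hγ : ∀ j, γ j = N - 1 - α j := fun j => rfl
    -- inverse monomials of exponent `N - 1` with coefficient in `(x ^ N) M` are trivial
    have htriv : ∀ m' ∈ Ideal.span (Set.range fun j => x j ^ N) • (⊤ : Submodule R M),
        (invMonomial (R := R) (α + γ) m' : InvPoly n M) ∈ U := by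
      intro m' hm'
      refine Submodule.smul_induction_on hm' (fun r hr t _ => ?_) (fun a b ha hb => ?_)
      · induction hr using Submodule.span_induction generalizing t with
        | mem r hr =>
          obtain ⟨j, rfl⟩ := hr
          have h1 := hmod (Finsupp.single j N) (invMonomial (R := R) (α + γ) t)
          have h2 : (monomial (Finsupp.single j N) 1 : MvPolynomial (Fin n) R) •
              (invMonomial (R := R) (α + γ) t : InvPoly n M) = 0 := by
            rw [monomial_smul, one_smul]
            ext δ
            rw [shift_apply]
            refine Finsupp.single_eq_of_ne fun h => ?_
            have := DFunLike.congr_fun h j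
            rw [Finsupp.add_apply, Finsupp.add_apply, Finsupp.single_eq_same, hγ] at this
            have := hle j
            omega
          have h3 : ∏ i, x i ^ (Finsupp.single j N) i = x j ^ N := by
            rw [Finset.prod_eq_single j]
            · simp
            · intro i _ hi
              rw [Finsupp.single_eq_of_ne hi, pow_zero]
            · simp
          rw [h2, zero_sub, neg_mem_iff, h3] at h1
          simpa using h1
        | zero => simp
        | add a b _ _ ha hb => rw [add_smul, map_add]; exact add_mem (ha t trivial) (hb t trivial)
        | smul c a _ ha =>
          rw [smul_assoc, map_smul, ← C_smul]
          exact smul_mem _ _ (ha t trivial)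
      · rw [map_add]; exact add_mem ha hb
    rw [← monomial_smul_invMonomial (R := R) α γ m]
    have h1 := hmod γ (invMonomial (R := R) (α + γ) m)
    rw [← sub_add_cancel ((monomial γ 1 : MvPolynomial (Fin n) R) •
      (invMonomial (R := R) (α + γ) m : InvPoly n M)) ((∏ j, x j ^ γ j) •
      (invMonomial (R := R) (α + γ) m : InvPoly n M))]
    refine add_mem h1 ?_
    rw [← map_smul]
    refine htriv _ ?_
    have h2 : ∏ j, x j ^ γ j = (∏ j, x j ^ (s - α j)) * ∏ j, x j ^ (N - (s + 1)) := by
      rw [← Finset.prod_mul_distrib]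
      refine Finset.prod_congr rfl fun j _ => ?_
      rw [← pow_add, hγ]
      congr 1
      have := hle j
      omega
    rw [h2, mul_smul]
    exact smul_mem _ _ (hN m)
  refine Finsupp.induction_linear (motive := fun w : (Fin n →₀ ℕ) →₀ M => (w : InvPoly n M) ∈ U)
    w (zero_mem U) (fun a b ha hb => add_mem ha hb) (fun α m => key α m)

end TopCohomology

section Determinant

variable {A : Type*} [CommRing A] {n : ℕ}

lemma prod_mul_mem (u : Fin n → A) (l : Fin n) (a : A) (s : Finset (Fin n)) (hl : l ∈ s) :
    (∏ i ∈ s, u i) * (a * u l) ∈ Ideal.span (Set.range fun j => u j ^ 2) := by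
  classical
  rw [← Finset.mul_prod_erase s u hl]
  have : u l * (∏ i ∈ s.erase l, u i) * (a * u l) = ((∏ i ∈ s.erase l, u i) * a) * u l ^ 2 := by
    ring
  rw [this]
  exact Ideal.mul_mem_left _ _ (Ideal.subset_span ⟨l, rfl⟩)

/-- If two matrices differing in one row both map `z` to `u`, then by Cramer's rule their
determinants agree modulo `(u₁ ^ 2, …, u_n ^ 2)` after multiplication by `u₁ ⋯ u_n`. -/
lemma det_sub_updateRow_mem (z u : Fin n → A) (E : Matrix (Fin n) (Fin n) A) (i : Fin n)
    (c : Fin n → A) (hE : E.mulVec z = u) (hc : c ⬝ᵥ z = u i) :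
    (E.det - (E.updateRow i c).det) * ∏ j, u j ∈ Ideal.span (Set.range fun j => u j ^ 2) := by
  classical
  set D := E.updateRow i (E i - c) with hD
  have hdet : E.det - (E.updateRow i c).det = D.det := by
    have := Matrix.det_updateRow_add E i (E i - c) c
    rw [sub_add_cancel, Matrix.updateRow_eq_self] at this
    rw [this, add_sub_cancel_right]
  have hDz : ∀ l, D.mulVec z l = if l = i then 0 else u l := by
    intro l
    by_cases hl : l = i
    · subst hl
      rw [if_pos rfl, Matrix.mulVec, hD, Matrix.updateRow_self, sub_dotProduct, hc, ← hE]
      exact sub_self _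
    · rw [if_neg hl, Matrix.mulVec, hD, Matrix.updateRow_ne hl, ← hE]
      rfl
  have hcr : ∀ j, D.det * z j = ∑ l, D.adjugate j l * (if l = i then 0 else u l) := by
    intro j
    have h1 : D.adjugate.mulVec (D.mulVec z) = D.det • z := by
      rw [Matrix.mulVec_mulVec, Matrix.adjugate_mul, Matrix.smul_mulVec, Matrix.one_mulVec]
    have h2 := congrFun h1 j
    rw [Pi.smul_apply, smul_eq_mul] at h2
    rw [← h2, Matrix.mulVec, dotProduct]
    exact Finset.sum_congr rfl fun l _ => by rw [hDz]
  rw [hdet, ← Finset.mul_prod_erase _ u (Finset.mem_univ i)]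
  have hui : u i = ∑ j, E i j * z j := by rw [← hE]; rfl
  have : D.det * (u i * ∏ j ∈ Finset.univ.erase i, u j) =
      ∑ j, E i j * ((∏ j ∈ Finset.univ.erase i, u j) * (D.det * z j)) := by
    rw [hui, Finset.sum_mul, Finset.mul_sum]
    exact Finset.sum_congr rfl fun j _ => by ring
  rw [this]
  refine Ideal.sum_mem _ fun j _ => Ideal.mul_mem_left _ _ ?_
  rw [hcr, Finset.mul_sum]
  refine Ideal.sum_mem _ fun l _ => ?_
  by_cases hl : l = i
  · rw [if_pos hl, mul_zero, mul_zero]; exact zero_mem _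
  · rw [if_neg hl]
    exact prod_mul_mem u l _ _ (Finset.mem_erase.2 ⟨hl, Finset.mem_univ l⟩)

lemma det_sub_det_mem (z u : Fin n → A) (E E' : Matrix (Fin n) (Fin n) A)
    (hE : E.mulVec z = u) (hE' : E'.mulVec z = u) :
    (E.det - E'.det) * ∏ j, u j ∈ Ideal.span (Set.range fun j => u j ^ 2) := by
  classical
  -- exchange the rows one at a time
  let F : Finset (Fin n) → Matrix (Fin n) (Fin n) A := fun s i => if i ∈ s then E' i else E i
  have hF : ∀ s, (F s).mulVec z = u := by
    intro s
    ext i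
    by_cases hi : i ∈ s
    · rw [← hE']; simp [F, Matrix.mulVec, hi]
    · rw [← hE]; simp [F, Matrix.mulVec, hi]
  have hind : ∀ s : Finset (Fin n),
      (E.det - (F s).det) * ∏ j, u j ∈ Ideal.span (Set.range fun j => u j ^ 2) := by
    intro s
    induction s using Finset.induction_on with
    | empty =>
      have : F ∅ = E := by ext i j; simp [F]
      rw [this, sub_self, zero_mul]; exact zero_mem _
    | insert i s hi ih =>
      have h1 : F (insert i s) = (F s).updateRow i (E' i) := by
        ext k j
        by_cases hk : k = i
        · subst hk; rw [Matrix.updateRow_self]; simp [F]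
        · rw [Matrix.updateRow_ne hk]; simp [F, hk]
      have h2 := det_sub_updateRow_mem z u (F s) i (E' i) (hF s) (by rw [← hE']; rfl)
      rw [h1, ← sub_add_sub_cancel _ (F s).det, add_mul]
      exact add_mem ih h2
  have h := hind Finset.univ
  have : F Finset.univ = E' := by ext i j; simp [F]
  rwa [this] at h

/-- If `y` lies in `(x₁ ^ a, …, x_n ^ a)` and a power of `y₁ ⋯ y_n` witnesses the failure of the
monomial property for `y`, then this failure is inherited by `x`, up to the exponent `a`. -/
lemma prod_pow_smul_mem {M : Type*} [AddCommGroup M] [Module A M] (x y : Fin n → A) (a N t : ℕ)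
    (haN : a ≤ N) (hy : ∀ i, y i ∈ Ideal.span (Set.range fun j => x j ^ a))
    (hu : ∀ j, x j ^ N ∈ Ideal.span (Set.range fun i => y i ^ (t + 1)))
    (hM : ∀ m : M, (∏ i, y i ^ t) • m ∈
      Ideal.span (Set.range fun i => y i ^ (t + 1)) • (⊤ : Submodule A M)) (m : M) :
    (∏ j, x j ^ (2 * N - a)) • m ∈
      Ideal.span (Set.range fun j => x j ^ (2 * N)) • (⊤ : Submodule A M) := by
  classical
  simp only [Ideal.mem_span_range_iff_exists_fun] at hy hu
  choose P hP using hy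
  choose Q hQ using hu
  set z : Fin n → A := fun j => x j ^ a
  set u : Fin n → A := fun j => x j ^ N
  set J := Ideal.span (Set.range fun j => u j ^ 2) with hJ
  have hJ' : Ideal.span (Set.range fun j => x j ^ (2 * N)) = J := by
    simp only [hJ, u, ← pow_mul, mul_comm 2 N]
  have hPz : (Matrix.of P).mulVec z = y := by ext i; exact hP i
  have hQy : (Matrix.of Q).mulVec (fun i => y i ^ (t + 1)) = u := by ext i; exact hQ i
  have h1 : (Matrix.of Q * Matrix.diagonal (fun i => y i ^ t) * Matrix.of P).mulVec z = u := by
    rw [← Matrix.mulVec_mulVec, hPz, ← Matrix.mulVec_mulVec, ← hQy]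
    congr 1
    ext i
    rw [Matrix.mulVec_diagonal, pow_succ]
  have h2 : (Matrix.diagonal fun j => x j ^ (N - a)).mulVec z = u := by
    ext i
    rw [Matrix.mulVec_diagonal, ← pow_add, Nat.sub_add_cancel haN]
  have h3 := det_sub_det_mem z u _ _ h2 h1
  rw [Matrix.det_mul, Matrix.det_mul, Matrix.det_diagonal, Matrix.det_diagonal] at h3
  have h4 : ∏ j, x j ^ (2 * N - a) = (∏ j, x j ^ (N - a)) * ∏ j, u j := by
    rw [← Finset.prod_mul_distrib]
    refine Finset.prod_congr rfl fun j _ => ?_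
    rw [← pow_add]
    congr 1
    omega
  rw [hJ', h4]
  have h5 := smul_mem_smul h3 (mem_top : m ∈ (⊤ : Submodule A M))
  rw [sub_mul, sub_smul] at h5
  refine (sub_mem_iff_left _ ?_).1 h5
  have hdet : ∀ i, (Matrix.of Q).det * y i ^ (t + 1) ∈ Ideal.span (Set.range u) := by
    intro i
    have e1 : (Matrix.of Q).adjugate.mulVec u = (Matrix.of Q).det • fun i => y i ^ (t + 1) := by
      rw [← hQy, Matrix.mulVec_mulVec, Matrix.adjugate_mul, Matrix.smul_mulVec, Matrix.one_mulVec]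
    have e2 := congrFun e1 i
    rw [Pi.smul_apply, smul_eq_mul] at e2
    rw [← e2, Matrix.mulVec, dotProduct]
    exact Ideal.sum_mem _ fun l _ => Ideal.mul_mem_left _ _ (Ideal.subset_span (Set.mem_range_self l))
  have hprod : ∀ r ∈ Ideal.span (Set.range fun i => y i ^ (t + 1)),
      (∏ j, u j) * ((Matrix.of Q).det * r) ∈ J := by
    have hU : ∀ s ∈ Ideal.span (Set.range u), (∏ j, u j) * s ∈ J := by
      intro s hs
      obtain ⟨c, rfl⟩ := (Ideal.mem_span_range_iff_exists_fun).1 hs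
      rw [Finset.mul_sum]
      exact Ideal.sum_mem _ fun l _ => prod_mul_mem u l _ _ (Finset.mem_univ l)
    intro r hr
    refine hU _ ?_
    obtain ⟨c, rfl⟩ := (Ideal.mem_span_range_iff_exists_fun).1 hr
    rw [Finset.mul_sum]
    refine Ideal.sum_mem _ fun i _ => ?_
    rw [mul_left_comm]
    exact Ideal.mul_mem_left _ _ (hdet i)
  have e : (Matrix.of Q).det * (∏ i, y i ^ t) * (Matrix.of P).det * ∏ j, u j =
      (Matrix.of P).det * (((∏ j, u j) * (Matrix.of Q).det) * ∏ i, y i ^ t) := by ring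
  rw [e, mul_smul, mul_smul]
  refine smul_mem _ _ ?_
  refine Submodule.smul_induction_on (hM m) (fun r hr s _ => ?_) (fun a b ha hb => ?_)
  · rw [smul_smul, mul_assoc]
    exact smul_mem_smul (hprod r hr) mem_top
  · rw [smul_add]; exact add_mem ha hb

end Determinant

/-! ### Reduction of the theorem to top local cohomology -/

section Assembly

lemma le_radical_span_pow {A : Type*} [CommRing A] {n : ℕ} (x : Fin n → A) (a : ℕ) {I : Ideal A}
    (h : I ≤ (Ideal.span (Set.range x)).radical) :
    I ≤ (Ideal.span (Set.range fun j => x j ^ a)).radical := by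
  refine h.trans (Ideal.radical_le_radical_iff.2 (Ideal.span_le.2 ?_))
  rintro _ ⟨j, rfl⟩
  exact ⟨a, Ideal.subset_span ⟨j, rfl⟩⟩

/-- Existence of a system of parameters of a Noetherian local ring. -/
lemma exists_parameters {S : Type*} [CommRing S] [IsLocalRing S] [IsNoetherianRing S] {d : ℕ}
    (hd : ringKrullDim S = d) :
    ∃ x : Fin d → S, (∀ j, x j ∈ maximalIdeal S) ∧
      maximalIdeal S ≤ (Ideal.span (Set.range x)).radical := by
  obtain ⟨s, hs, hcard⟩ := Ideal.exists_finset_card_eq_height_of_isNoetherianRing (maximalIdeal S)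
  have hc : s.card = d := by
    rw [← IsLocalRing.maximalIdeal_height_eq_ringKrullDim, ← hcard] at hd
    exact_mod_cast hd
  have e : Fin d ≃ s := (finCongr hc.symm).trans s.equivFin.symm
  have hr : Set.range (fun j => (e j : S)) = s := by
    ext t
    constructor
    · rintro ⟨j, rfl⟩; exact (e j).2
    · intro ht; exact ⟨e.symm ⟨t, ht⟩, by simp⟩
  refine ⟨fun j => e j, fun j => hs.1.2 (Ideal.subset_span (e j).2), ?_⟩
  rw [hr, Ideal.radical_eq_sInf]
  refine le_sInf fun P hP => ?_
  exact hs.2 ⟨hP.2, hP.1⟩ (le_maximalIdeal hP.2.ne_top)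

/-- The bound for a faithful module `M` over `S`, with the failure of the monomial property
expressed by a single exponent `t`. -/
lemma exists_bound_of_faithful {S : Type*} [CommRing S] [IsLocalRing S] [IsNoetherianRing S]
    {M : Type*} [AddCommGroup M] [Module S M] [Module.Finite S M] {d : ℕ}
    (hd : ringKrullDim S = d) (hM : Module.annihilator S M = ⊥) :
    ∃ k : ℕ, 0 < k ∧ ∀ y : Fin d → S, (∀ i, y i ∈ maximalIdeal S ^ k) →
      maximalIdeal S ≤ (Ideal.span (Set.range y)).radical → ∀ t : ℕ,
      ¬ ∀ m : M, (∏ i, y i ^ t) • m ∈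
        Ideal.span (Set.range fun i => y i ^ (t + 1)) • (⊤ : Submodule S M) := by
  by_contra! hcon
  obtain ⟨x, hx, hrad⟩ := exists_parameters hd
  have hdim : Module.supportDim S M = d := by
    rw [Module.supportDim_eq_ringKrullDim_quotient_annihilator, hM,
      ringKrullDim_eq_of_ringEquiv (RingEquiv.quotientBot S), hd]
  refine lc_not_subsingleton x hx hrad d M hdim 0 (zero_add d) (lc_zero_subsingleton x fun a => ?_)
  obtain ⟨k, hk⟩ := Ideal.exists_pow_le_of_le_radical_of_fg (le_radical_span_pow x a hrad)
    (IsNoetherian.noetherian _)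
  obtain ⟨y, hyk, hyrad, t, ht⟩ := hcon (k + 1) k.succ_pos
  obtain ⟨K, hK⟩ := Ideal.exists_pow_le_of_le_radical_of_fg (le_radical_span_pow y (t + 1) hyrad)
    (IsNoetherian.noetherian _)
  refine ⟨2 * (a + K), by omega, prod_pow_smul_mem x y a (a + K) t (by omega)
    (fun i => hk (Ideal.pow_le_pow_right k.le_succ (hyk i))) (fun j => ?_) ht⟩
  exact hK (Ideal.pow_le_pow_right (Nat.le_add_left K a) (Ideal.pow_mem_pow (hx j) _))

lemma le_radical_of_isFiniteLength {R : Type*} [CommRing R] [IsLocalRing R]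
    {M : Type*} [AddCommGroup M] [Module R M] [Module.Finite R M] (I : Ideal R)
    (h : IsFiniteLength R (M ⧸ (I • (⊤ : Submodule R M)))) :
    maximalIdeal R ≤ (I ⊔ Module.annihilator R M).radical := by
  have hart := (isFiniteLength_iff_isNoetherian_isArtinian.1 h).2
  have hnoe := (isFiniteLength_iff_isNoetherian_isArtinian.1 h).1
  set Q := M ⧸ (I • (⊤ : Submodule R M))
  intro r hr
  -- the chain `r ^ k Q` is stationary, so it vanishes eventually by Nakayama's lemma
  obtain ⟨k, hk⟩ : ∃ k : ℕ, r ^ k ∈ Module.annihilator R Q := by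
    obtain ⟨k, hk⟩ := IsArtinian.monotone_stabilizes
      (⟨fun k => OrderDual.toDual (LinearMap.range (LinearMap.lsmul R Q (r ^ k))), by
        refine monotone_nat_of_le_succ fun k => ?_
        change LinearMap.range (LinearMap.lsmul R Q (r ^ (k + 1))) ≤
          LinearMap.range (LinearMap.lsmul R Q (r ^ k))
        rintro _ ⟨q, rfl⟩
        exact ⟨r • q, by simp [smul_smul, pow_succ, mul_comm]⟩⟩ : ℕ →o (Submodule R Q)ᵒᵈ)
    have hk' : LinearMap.range (LinearMap.lsmul R Q (r ^ k)) =
      LinearMap.range (LinearMap.lsmul R Q (r ^ (k + 1))) := hk (k + 1) k.le_succ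
    have hbot : LinearMap.range (LinearMap.lsmul R Q (r ^ k)) = ⊥ := by
      refine eq_bot_of_le_smul_of_le_jacobson_bot (maximalIdeal R) _ (IsNoetherian.noetherian _)
        ?_ (maximalIdeal_le_jacobson _)
      rw [hk']
      rintro _ ⟨q, rfl⟩
      rw [← hk', LinearMap.lsmul_apply, pow_succ', mul_smul]
      exact smul_mem_smul hr ⟨q, rfl⟩
    refine ⟨k, Module.mem_annihilator.2 fun q => ?_⟩
    exact (Submodule.mem_bot R).1 (hbot ▸ LinearMap.mem_range_self (LinearMap.lsmul R Q (r ^ k)) q)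
  rw [Ideal.radical_eq_sInf, mem_sInf]
  rintro P ⟨hP, hPp⟩
  have h1 : (⟨P, hPp⟩ : PrimeSpectrum R) ∈ Module.support R Q := by
    rw [Module.support_quotient, Module.support_eq_zeroLocus]
    exact ⟨le_sup_right.trans hP, le_sup_left.trans hP⟩
  rw [Module.support_eq_zeroLocus] at h1
  exact hPp.mem_of_pow_mem _ (h1 hk)

/-- The limit closure is the union of an increasing chain, so if it is the whole finite module
`M`, then it is attained at a finite stage. -/
lemma exists_of_limitClosure_eq_top {R : Type*} [CommRing R] {M : Type*} [AddCommGroup M]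
    [Module R M] [Module.Finite R M] {d : ℕ} (y : Fin d → R) (h : limitClosure (M := M) y = ⊤) :
    ∃ t : ℕ, ∀ m : M, (∏ i, y i ^ t) • m ∈
      Ideal.span (Set.range fun i => y i ^ (t + 1)) • (⊤ : Submodule R M) := by
  set F : ℕ → Submodule R M := fun n =>
    (Ideal.span (Set.range fun i => y i ^ (n + 2)) • (⊤ : Submodule R M)).comap
      (LinearMap.lsmul R M ((∏ i, y i) ^ (n + 1))) with hF
  have hmono : Monotone F := by
    refine monotone_nat_of_le_succ fun n m hm => ?_
    simp only [hF, mem_comap, LinearMap.lsmul_apply] at hm ⊢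
    rw [pow_succ', mul_smul]
    refine Submodule.smul_induction_on hm (fun r hr s _ => ?_) (fun a b ha hb => ?_)
    · rw [smul_smul]
      refine smul_mem_smul ?_ mem_top
      obtain ⟨c, rfl⟩ := (Ideal.mem_span_range_iff_exists_fun).1 hr
      rw [Finset.mul_sum]
      refine Ideal.sum_mem _ fun i _ => ?_
      obtain ⟨b, hb⟩ := Finset.dvd_prod_of_mem y (Finset.mem_univ i)
      rw [hb, show y i * b * (c i * y i ^ (n + 2)) = (b * c i) * y i ^ (n + 1 + 2) by ring]
      exact Ideal.mul_mem_left _ _ (Ideal.subset_span ⟨i, rfl⟩)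
    · rw [smul_add]; exact add_mem ha hb
  have hc : IsCompactElement (⊤ : Submodule R M) :=
    (fg_iff_compact _).1 Module.Finite.fg_top
  have hle : (⊤ : Submodule R M) ≤ ⨆ n, F n := h.ge
  obtain ⟨n, hn⟩ : ∃ n, (⊤ : Submodule R M) ≤ F n := by
    obtain ⟨_, ⟨n, rfl⟩, hn⟩ :=
      (CompleteLattice.isCompactElement_iff_le_of_directed_sSup_le _ _).1 hc (Set.range F)
      (Set.range_nonempty F) (directedOn_range.2 hmono.directed_le) hle
    exact ⟨n, hn⟩
  refine ⟨n + 1, fun m => ?_⟩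
  have := hn (mem_top : m ∈ ⊤)
  rw [Finset.prod_pow]
  exact this

end Assembly

end MonomialProperty

/-- There is a positive integer `n` such that every system of parameters of `M` contained in
`m^n` satisfies the monomial property `(y)^lim_M ≠ M`. -/
theorem exists_monomial_property_bound
    {R : Type*} [CommRing R] [IsNoetherianRing R] [IsLocalRing R]
    {M : Type*} [AddCommGroup M] [Module R M] [Module.Finite R M]
    {d : ℕ} (hd : moduleDim R M = d) :
    ∃ n : ℕ, 0 < n ∧ ∀ y : Fin d → R, (∀ i, y i ∈ maximalIdeal R ^ n) →
      IsSystemOfParameters M y → limitClosure (M := M) y ≠ ⊤ := by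
  unfold moduleDim at hd
  set I := Module.annihilator R M with hI
  have hnt : Nontrivial (R ⧸ I) := by
    by_contra hc
    rw [not_nontrivial_iff_subsingleton] at hc
    rw [ringKrullDim_eq_bot_of_subsingleton] at hd
    exact WithBot.bot_ne_coe hd
  set π := Ideal.Quotient.mk I
  have hπ : Function.Surjective π := Ideal.Quotient.mk_surjective
  have : IsLocalRing (R ⧸ I) := .of_surjective' _ hπ
  have : IsLocalHom π := IsLocalHom.of_surjective π hπ
  have hmap : maximalIdeal (R ⧸ I) = (maximalIdeal R).map π := by
    rw [← IsLocalRing.maximalIdeal_comap π, Ideal.map_comap_of_surjective _ hπ]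
  have htor := Module.isTorsionBySet_annihilator R M
  let : Module (R ⧸ I) M := htor.module
  have : IsScalarTower R (R ⧸ I) M := htor.isScalarTower
  have : Module.Finite (R ⧸ I) M := Module.Finite.of_restrictScalars_finite R _ _
  have hsmul : ∀ (r : R) (m : M), π r • m = r • m := fun r m =>
    Module.IsTorsionBySet.mk_smul htor r m
  have hann : Module.annihilator (R ⧸ I) M = ⊥ := by
    rw [eq_bot_iff]
    intro s hs
    obtain ⟨r, rfl⟩ := hπ s
    refine Ideal.Quotient.eq_zero_iff_mem.2 (Module.mem_annihilator.2 fun m => ?_)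
    rw [← hsmul]
    exact Module.mem_annihilator.1 hs m
  obtain ⟨k, hk0, hk⟩ := MonomialProperty.exists_bound_of_faithful (M := M) hd hann
  refine ⟨k, hk0, fun y hy hsop htop => ?_⟩
  obtain ⟨t, ht⟩ := MonomialProperty.exists_of_limitClosure_eq_top y htop
  refine hk (fun i => π (y i)) (fun i => ?_) ?_ t fun m => ?_
  · rw [hmap, ← Ideal.map_pow]
    exact Ideal.mem_map_of_mem _ (hy i)
  · rw [hmap, Ideal.map_le_iff_le_comap]
    intro r hr
    obtain ⟨K, hK⟩ := MonomialProperty.le_radical_of_isFiniteLength _ hsop.2 hr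
    obtain ⟨a, ha, b, hb, hab⟩ := Submodule.mem_sup.1 hK
    refine ⟨K, ?_⟩
    rw [← map_pow, ← hab, map_add, Ideal.Quotient.eq_zero_iff_mem.2 hb, add_zero]
    have := Ideal.mem_map_of_mem π ha
    rwa [Ideal.map_span, ← Set.range_comp] at this
  · have e : (∏ i, π (y i) ^ t) • m = (∏ i, y i ^ t) • m := by
      rw [← hsmul]; simp only [map_prod, map_pow]
    rw [e]
    refine Submodule.smul_induction_on (ht m) (fun r hr s _ => ?_) (fun a b ha hb => add_mem ha hb)
    rw [← hsmul]
    refine Submodule.smul_mem_smul ?_ Submodule.mem_top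
    have := Ideal.mem_map_of_mem π hr
    rw [Ideal.map_span, ← Set.range_comp] at this
    simpa only [Function.comp_def, map_pow] using this
end

section
/- Let (R, m) be a Noetherian local ring and M a finitely generated R-module of dimension d, and let x = x_1, ..., x_r be a sequence of elements of R. Then: (i) if the top local cohomology module H^r_{(x)}(M) with support in the ideal (x_1, ..., x_r) vanishes, then (x)^lim_M = M; in particular, if r > d then (x)^lim_M = M; and (ii) if r = d, then M/(x)^lim_M has finite length. -/
/-!
Write `y` for the first element of the sequence `x` and `z` for the remaining ones.

**Dimension statements.** Let `N` be the quotient of `M` by its `y`-power torsion and then by `y`.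
As `y` is regular on `M` modulo torsion, `dim N ≤ dim M - 1`, and clearing the torsion shows that
the preimage in `M` of `(z)^lim_{N}` lies in `(x)^lim_M` (`exists_quotient_step`). Induction on
the length of `x` reduces the case `r > d` to `M = 0`, and the case `r = d` to `dim M ≤ 0`, where
`M` itself has finite length.

**Vanishing of the top local cohomology.** `LocalExtVanishes` expresses `H^i_I(M) = 0` elementwise
through the colimit of the modules `Ext^i(R ⧸ J, M)`. Let `Γ` and `M̄` be the kernel and the image
of `M → M_y`. Local cohomology with support in `(x)` vanishes on `M_y`, because there `y` acts both
nilpotently on each class and bijectively; on the `y`-torsion modules `Γ` and `M_y ⧸ M̄` it agrees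
with local cohomology with support in `(z)`. That last fact rests on the effaceability lemma
`exists_restrict_range_pow_eq_zero`. The long exact sequences of `0 → Γ → M → M̄ → 0` and
`0 → M̄ → M_y → M_y ⧸ M̄ → 0` then give vanishing above degree `r` (`localExtVanishes_of_lt`), and
show that `H^r_{(x)}(M) = 0` forces `H^{r-1}_{(z)}(M_y ⧸ M̄) = 0`. By induction
`(z)^lim` is all of `M_y ⧸ M̄`; evaluating this at `m / y` and clearing denominators gives
`m ∈ (x)^lim_M` (`limitClosure_eq_top_of_coker`). The induction leaves the finitely generated
modules, so it is carried out for arbitrary `M`.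

**Comparison.** `localCohomology I i` is a filtered colimit, over the powers of `I`, of left derived
functors of `Hom(-, M)` with values in the opposite category. Representing `Ext` classes by cocycles
on projective resolutions deduces the elementwise vanishing from the vanishing of the functor
(`localExtVanishes_of_subsingleton`).
-/

open IsLocalRing

universe u

/-! ### Limit closures -/

section LimitClosure

variable {R : Type*} [CommRing R] {M : Type*} [AddCommGroup M] [Module R M]

/-- Raising exponents: multiplication by `(∏ xᵢ) ^ k` carries `(xᵢ ^ a) M` into
`(xᵢ ^ (a + k)) M`. -/
lemma prod_pow_smul_mem {r : ℕ} (x : Fin r → R) {a b k : ℕ} (hb : b = a + k) {m : M}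
    (hm : m ∈ Ideal.span (Set.range fun i => x i ^ a) • (⊤ : Submodule R M)) :
    (∏ i, x i) ^ k • m ∈ Ideal.span (Set.range fun i => x i ^ b) • (⊤ : Submodule R M) := by
  subst hb
  refine Submodule.smul_induction_on hm (fun c hc v _ => ?_) (fun v w hv hw => ?_)
  · rw [smul_smul]
    refine Submodule.smul_mem_smul ?_ trivial
    have hle : Ideal.span (Set.range fun i => x i ^ a) ≤
        Submodule.comap (LinearMap.lsmul R R ((∏ i, x i) ^ k))
          (Ideal.span (Set.range fun i => x i ^ (a + k))) := by
      refine Submodule.span_le.mpr ?_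
      rintro _ ⟨i, rfl⟩
      change (∏ i, x i) ^ k * x i ^ a ∈ Ideal.span (Set.range fun i => x i ^ (a + k))
      rw [← Finset.mul_prod_erase Finset.univ x (Finset.mem_univ i)]
      have : (x i * ∏ j ∈ Finset.univ.erase i, x j) ^ k * x i ^ a =
          (∏ j ∈ Finset.univ.erase i, x j) ^ k * x i ^ (a + k) := by ring
      rw [this]
      exact Ideal.mul_mem_left _ _ (Ideal.subset_span ⟨i, rfl⟩)
    exact hle hc
  · rw [smul_add]
    exact add_mem hv hw

lemma mem_limitClosure_iff {r : ℕ} (x : Fin r → R) (m : M) :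
    m ∈ limitClosure (M := M) x ↔
      ∃ n : ℕ, (∏ i, x i) ^ n • m ∈
        Ideal.span (Set.range fun i => x i ^ (n + 1)) • (⊤ : Submodule R M) := by
  have hmono : Monotone fun n : ℕ =>
      (Ideal.span (Set.range fun i => x i ^ (n + 2)) • (⊤ : Submodule R M)).comap
        (LinearMap.lsmul R M ((∏ i, x i) ^ (n + 1))) := by
    refine monotone_nat_of_le_succ fun n v hv => ?_
    have := prod_pow_smul_mem x (k := 1) (b := n + 1 + 2) (by ring) (m := _) hv
    simpa [smul_smul, ← pow_succ'] using this
  rw [limitClosure, Submodule.mem_iSup_of_directed _ hmono.directed_le]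
  constructor
  · rintro ⟨n, hn⟩
    exact ⟨n + 1, hn⟩
  · rintro ⟨n, hn⟩
    refine ⟨n, ?_⟩
    have := prod_pow_smul_mem x (k := 1) (b := n + 2) (by ring) hn
    simpa [smul_smul, ← pow_succ'] using this

/-- The exponent of the first element and the common exponent of the remaining ones need not
agree for membership in the limit closure to be witnessed. -/
lemma mem_limitClosure_succ {r : ℕ} (x : Fin (r + 1) → R) {m : M} {n l : ℕ}
    {b : M} (h : x 0 ^ l • (∏ i : Fin r, x i.succ) ^ n • m - x 0 ^ (l + 1) • b ∈
      Ideal.span (Set.range fun i : Fin r => x i.succ ^ (n + 1)) • (⊤ : Submodule R M)) :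
    m ∈ limitClosure (M := M) x := by
  rw [mem_limitClosure_iff]
  refine ⟨n + l, ?_⟩
  rw [Fin.prod_univ_succ]
  have e : (x 0 * ∏ i : Fin r, x i.succ) ^ (n + l) • m =
      x 0 ^ n • (∏ i : Fin r, x i.succ) ^ l •
        (x 0 ^ l • (∏ i : Fin r, x i.succ) ^ n • m - x 0 ^ (l + 1) • b) +
      x 0 ^ (n + l + 1) • (∏ i : Fin r, x i.succ) ^ l • b := by
    simp only [smul_sub, smul_smul]
    rw [eq_comm, sub_add_eq_add_sub, sub_eq_iff_eq_add]
    congr 2 <;> ring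
  rw [e]
  refine add_mem (Submodule.smul_mem _ _ ?_)
    (Submodule.smul_mem_smul (Ideal.subset_span ⟨0, rfl⟩) trivial)
  refine Submodule.smul_mono_left (Ideal.span_mono ?_)
    (prod_pow_smul_mem _ (b := n + l + 1) (by ring) h)
  rintro _ ⟨i, rfl⟩
  exact ⟨i.succ, rfl⟩

end LimitClosure

/-! ### Modules of small dimension -/

section Dimension

variable {R : Type*} [CommRing R]

/-- For `r = 0` the limit closure is zero. -/
lemma limitClosure_zero {M : Type*} [AddCommGroup M] [Module R M] (x : Fin 0 → R) :
    limitClosure (M := M) x = ⊥ := by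
  ext m
  simp [mem_limitClosure_iff]

variable [IsNoetherianRing R]

/-- The `y`-power torsion of a finite module is killed by a single power of `y`. -/
lemma exists_ker_pow_stable {M : Type*} [AddCommGroup M] [Module R M] [Module.Finite R M]
    (y : R) : ∃ l : ℕ, ∀ (k : ℕ) (m : M), y ^ k • m = 0 → y ^ l • m = 0 := by
  let f : ℕ →o Submodule R M :=
    { toFun k := LinearMap.ker (LinearMap.lsmul R M (y ^ k))
      monotone' := monotone_nat_of_le_succ fun k m hm => by
        simp only [LinearMap.mem_ker, LinearMap.lsmul_apply] at hm ⊢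
        rw [pow_succ', mul_smul, hm, smul_zero] }
  obtain ⟨l, hl⟩ := monotone_stabilizes_iff_noetherian.mpr
    (inferInstance : IsNoetherian R M) f
  refine ⟨l, fun k m hm => ?_⟩
  rcases le_total k l with h | h
  · exact f.monotone h hm
  · have : m ∈ f k := hm
    rw [← hl k h] at this
    exact this

/-- The inductive step for both dimension statements. If `M` is finite over a Noetherian ring and
`y = x₀`, there is a finite quotient `M'` of `M` (namely `M` modulo `y`-power torsion and modulo
`y`) of dimension smaller by at least one, such that the limit closure of the remaining elements
in `M'` pulls back into the limit closure of `x` in `M`. -/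
lemma exists_quotient_step {M : Type*} [AddCommGroup M] [Module R M] [Module.Finite R M]
    {r : ℕ} (x : Fin (r + 1) → R) :
    ∃ N : Submodule R M, Module.supportDim R (M ⧸ N) + 1 ≤ Module.supportDim R M ∧
      (limitClosure (M := M ⧸ N) fun i : Fin r => x i.succ).comap N.mkQ ≤
        limitClosure (M := M) x := by
  obtain ⟨l, hl⟩ := exists_ker_pow_stable (M := M) (x 0)
  let T : Submodule R M := LinearMap.ker (LinearMap.lsmul R M (x 0 ^ l))
  have hreg : IsSMulRegular (M ⧸ T) (x 0) := by
    rw [isSMulRegular_iff_right_eq_zero_of_smul]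
    intro z hz
    obtain ⟨m, rfl⟩ := T.mkQ_surjective z
    rw [← map_smul, Submodule.mkQ_apply, Submodule.Quotient.mk_eq_zero] at hz
    rw [Submodule.mkQ_apply, Submodule.Quotient.mk_eq_zero]
    refine hl (l + 1) m ?_
    rw [pow_succ, mul_smul]
    exact hz
  let q : M →ₗ[R] QuotSMulTop (x 0) (M ⧸ T) := (Submodule.mkQ _).comp T.mkQ
  have hq : Function.Surjective q :=
    (Submodule.mkQ_surjective _).comp T.mkQ_surjective
  refine ⟨LinearMap.ker q, ?_, fun m hm => ?_⟩
  · rw [Module.supportDim_eq_of_equiv (q.quotKerEquivOfSurjective hq)]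
    refine le_trans (Module.supportDim_quotSMulTop_succ_le_of_notMem_minimalPrimes ?_)
      (Module.supportDim_le_of_surjective T.mkQ T.mkQ_surjective)
    exact fun _ => hreg.notMem_of_mem_minimalPrimes
  · rw [Submodule.mem_comap, mem_limitClosure_iff] at hm
    obtain ⟨n, hn⟩ := hm
    have htop : (⊤ : Submodule R (M ⧸ LinearMap.ker q)) =
        Submodule.map (LinearMap.ker q).mkQ ⊤ := by
      rw [Submodule.map_top, Submodule.range_mkQ]
    rw [htop, ← Submodule.map_smul''] at hn
    obtain ⟨a, ha, hab⟩ := hn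
    -- modulo `N` the element `P ^ n • m` agrees with `a`
    have hN : q ((∏ i : Fin r, x i.succ) ^ n • m - a) = 0 := by
      rw [← LinearMap.mem_ker, ← Submodule.Quotient.mk_eq_zero, ← Submodule.mkQ_apply, map_sub,
        hab, map_smul, sub_self]
    rw [LinearMap.comp_apply, Submodule.mkQ_apply, Submodule.Quotient.mk_eq_zero,
      Submodule.mem_smul_pointwise_iff_exists] at hN
    obtain ⟨c, -, hc⟩ := hN
    obtain ⟨b, rfl⟩ := T.mkQ_surjective c
    rw [← map_smul, eq_comm, ← sub_eq_zero, ← map_sub, Submodule.mkQ_apply,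
      Submodule.Quotient.mk_eq_zero, LinearMap.mem_ker, LinearMap.lsmul_apply] at hc
    refine mem_limitClosure_succ x (n := n) (l := l) (b := b) ?_
    have e : x 0 ^ l • (∏ i : Fin r, x i.succ) ^ n • m - x 0 ^ (l + 1) • b = x 0 ^ l • a := by
      rw [smul_sub, smul_sub, smul_smul (x 0 ^ l) (x 0), ← pow_succ, sub_right_comm] at hc
      exact sub_eq_zero.mp hc
    rw [e]
    exact Submodule.smul_mem _ _ ha

lemma limitClosure_eq_top_of_supportDim_lt {r : ℕ} (x : Fin r → R) :
    ∀ {M : Type*} [AddCommGroup M] [Module R M] [Module.Finite R M],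
      Module.supportDim R M < r → limitClosure (M := M) x = ⊤ := by
  induction r with
  | zero =>
    intro M _ _ _ h
    have : Subsingleton M := by
      rw [← Module.supportDim_eq_bot_iff_subsingleton (R := R)]
      by_contra hne
      have := Module.supportDim_ne_bot_iff_nontrivial (R := R) (M := M) |>.mp hne
      have : Nonempty (Module.support R M) := Module.nonempty_support_of_nontrivial.to_subtype
      exact absurd (Order.krullDim_nonneg (α := Module.support R M)) (not_le.mpr h)
    exact Subsingleton.elim _ _
  | succ r ih =>
    intro M _ _ _ h
    obtain ⟨N, hN, hle⟩ := exists_quotient_step (M := M) x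
    have h1 : Module.supportDim R (M ⧸ N) < r := by
      have h2 := ENat.WithBot.lt_add_one_iff.mp (hN.trans_lt (by exact_mod_cast h))
      exact ENat.WithBot.add_one_le_natCast_iff.mp h2
    rw [ih (fun i => x i.succ) h1, Submodule.comap_top] at hle
    exact top_le_iff.mp hle

lemma isFiniteLength_of_supportDim_le_zero {M : Type*} [AddCommGroup M] [Module R M]
    [Module.Finite R M] (h : Module.supportDim R M ≤ 0) : IsFiniteLength R M := by
  rw [Module.supportDim_eq_ringKrullDim_quotient_annihilator] at h
  let A := R ⧸ Module.annihilator R M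
  have hdim : Ring.KrullDimLE 0 A := by
    rw [Ring.krullDimLE_iff]
    exact_mod_cast h
  have : IsArtinianRing A := IsNoetherianRing.isArtinianRing_of_krullDimLE_zero
  let _ : Module A M := Module.IsTorsionBySet.module (I := Module.annihilator R M)
    (Module.isTorsionBySet_annihilator R M)
  have : IsScalarTower R A M := inferInstance
  have : Module.Finite A M := Module.Finite.of_restrictScalars_finite R A M
  have : IsArtinian A M := inferInstance
  rw [isFiniteLength_iff_isNoetherian_isArtinian]
  refine ⟨inferInstance, ?_⟩
  let e : M →ₛₗ[Ideal.Quotient.mk (Module.annihilator R M)] M :=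
    { toFun m := m
      map_add' _ _ := rfl
      map_smul' _ _ := rfl }
  have : RingHomSurjective (Ideal.Quotient.mk (Module.annihilator R M)) :=
    ⟨Ideal.Quotient.mk_surjective⟩
  exact (e.isArtinian_iff_of_bijective Function.bijective_id).mpr inferInstance

lemma isFiniteLength_quotient_limitClosure {r : ℕ} (x : Fin r → R) :
    ∀ {M : Type*} [AddCommGroup M] [Module R M] [Module.Finite R M],
      Module.supportDim R M ≤ r → IsFiniteLength R (M ⧸ limitClosure (M := M) x) := by
  induction r with
  | zero =>
    intro M _ _ _ h
    exact (isFiniteLength_of_supportDim_le_zero (by exact_mod_cast h)).of_surjective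
      (Submodule.mkQ_surjective _)
  | succ r ih =>
    intro M _ _ _ h
    obtain ⟨N, hN, hle⟩ := exists_quotient_step (M := M) x
    have h1 : Module.supportDim R (M ⧸ N) ≤ r := by
      have h2 := ENat.WithBot.add_one_le_natCast_iff.mp (hN.trans h)
      exact ENat.WithBot.lt_add_one_iff.mp (by exact_mod_cast h2)
    let L := limitClosure (M := M ⧸ N) fun i : Fin r => x i.succ
    let f : M →ₗ[R] (M ⧸ N) ⧸ L := L.mkQ.comp N.mkQ
    have hf : Function.Surjective f := L.mkQ_surjective.comp N.mkQ_surjective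
    have hker : LinearMap.ker f ≤ limitClosure (M := M) x := by
      rw [LinearMap.ker_comp, Submodule.ker_mkQ]
      exact hle
    exact ((ih (fun i => x i.succ) h1).of_injective
      (f := (f.quotKerEquivOfSurjective hf).toLinearMap) (LinearEquiv.injective _)).of_surjective
      (f := Submodule.mapQ _ _ LinearMap.id hker)
      (fun z => by
        obtain ⟨m, rfl⟩ := Submodule.mkQ_surjective _ z
        exact ⟨Submodule.Quotient.mk m, rfl⟩)

end Dimension

/-! ### Vanishing of local cohomology through `Ext` -/

section LocalExt

open CategoryTheory Abelian

variable {R : Type u} [CommRing R]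

/-- The projection `R ⧸ J' ⟶ R ⧸ J` for ideals `J' ≤ J`, in `ModuleCat R`. -/
noncomputable def quotMap {J' J : Ideal R} (h : J' ≤ J) :
    ModuleCat.of R (R ⧸ J') ⟶ ModuleCat.of R (R ⧸ J) :=
  ModuleCat.ofHom (Submodule.factor h)

lemma quotMap_comp {J'' J' J : Ideal R} (h' : J'' ≤ J') (h : J' ≤ J) :
    quotMap h' ≫ quotMap h = quotMap (h'.trans h) := by
  ext
  rfl

/-- The vanishing of `colim_J Ext^i(R ⧸ J, M)`, where `J` runs through the ideals whose radical
contains `I`, expressed elementwise: every class dies after restriction to a smaller such ideal.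
Over a Noetherian ring this says that `H^i_I(M) = 0`. -/
def LocalExtVanishes (I : Ideal R) (i : ℕ) (M : ModuleCat.{u} R) : Prop :=
  ∀ J : Ideal R, I ≤ J.radical → ∀ e : Ext (ModuleCat.of R (R ⧸ J)) M i,
    ∃ (J' : Ideal R) (h : J' ≤ J), I ≤ J'.radical ∧
      (Ext.mk₀ (quotMap h)).comp e (zero_add i) = 0

lemma LocalExtVanishes.middle {I : Ideal R} {i : ℕ} {S : ShortComplex (ModuleCat.{u} R)}
    (hS : S.ShortExact) (h₁ : LocalExtVanishes I i S.X₁) (h₃ : LocalExtVanishes I i S.X₃) :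
    LocalExtVanishes I i S.X₂ := by
  intro J hJ e
  obtain ⟨J₁, hJ₁, hr₁, h0⟩ := h₃ J hJ (e.comp (Ext.mk₀ S.g) (add_zero i))
  rw [← Ext.comp_assoc_of_third_deg_zero] at h0
  obtain ⟨e₁, he₁⟩ := Ext.covariant_sequence_exact₂ _ hS _ h0
  obtain ⟨J₂, hJ₂, hr₂, h0'⟩ := h₁ J₁ hr₁ e₁
  refine ⟨J₂, hJ₂.trans hJ₁, hr₂, ?_⟩
  rw [← quotMap_comp hJ₂ hJ₁, ← Ext.mk₀_comp_mk₀_assoc, ← he₁,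
    ← Ext.comp_assoc_of_third_deg_zero, h0', Ext.zero_comp]

lemma LocalExtVanishes.right {I : Ideal R} {i : ℕ} {S : ShortComplex (ModuleCat.{u} R)}
    (hS : S.ShortExact) (h₂ : LocalExtVanishes I i S.X₂)
    (h₁ : LocalExtVanishes I (i + 1) S.X₁) :
    LocalExtVanishes I i S.X₃ := by
  intro J hJ e
  obtain ⟨J₁, hJ₁, hr₁, h0⟩ := h₁ J hJ (e.comp hS.extClass rfl)
  rw [← Ext.comp_assoc _ e hS.extClass (zero_add i) rfl (by lia)] at h0
  obtain ⟨e₁, he₁⟩ := Ext.covariant_sequence_exact₃ _ hS _ rfl h0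
  obtain ⟨J₂, hJ₂, hr₂, h0'⟩ := h₂ J₁ hr₁ e₁
  refine ⟨J₂, hJ₂.trans hJ₁, hr₂, ?_⟩
  rw [← quotMap_comp hJ₂ hJ₁, ← Ext.mk₀_comp_mk₀_assoc, ← he₁,
    ← Ext.comp_assoc_of_third_deg_zero, h0', Ext.zero_comp]

lemma LocalExtVanishes.left {I : Ideal R} {i : ℕ} {S : ShortComplex (ModuleCat.{u} R)}
    (hS : S.ShortExact) (h₃ : LocalExtVanishes I i S.X₃)
    (h₂ : LocalExtVanishes I (i + 1) S.X₂) :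
    LocalExtVanishes I (i + 1) S.X₁ := by
  intro J hJ e
  obtain ⟨J₁, hJ₁, hr₁, h0⟩ := h₂ J hJ (e.comp (Ext.mk₀ S.f) (add_zero _))
  rw [← Ext.comp_assoc_of_third_deg_zero] at h0
  obtain ⟨e₁, he₁⟩ := Ext.covariant_sequence_exact₁ _ hS _ h0 rfl
  obtain ⟨J₂, hJ₂, hr₂, h0'⟩ := h₃ J₁ hr₁ e₁
  refine ⟨J₂, hJ₂.trans hJ₁, hr₂, ?_⟩
  rw [← quotMap_comp hJ₂ hJ₁, ← Ext.mk₀_comp_mk₀_assoc, ← he₁,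
    ← Ext.comp_assoc _ e₁ hS.extClass (zero_add i) rfl (by lia), h0', Ext.zero_comp]

/-- Every class is killed by a power of `y ∈ I`, hence vanishes if `y` acts bijectively on `M`. -/
lemma LocalExtVanishes.of_bijective {I : Ideal R} {y : R} (hy : y ∈ I) (i : ℕ)
    {M : ModuleCat.{u} R} (hM : Function.Bijective (LinearMap.lsmul R M y)) :
    LocalExtVanishes I i M := by
  intro J hJ e
  refine ⟨J, le_rfl, hJ, ?_⟩
  obtain ⟨n, hn⟩ := hJ hy
  have h1 : y ^ n • e = 0 := by
    rw [← Ext.mk₀_id_comp e, ← Ext.smul_comp, ← Ext.mk₀_smul]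
    have : y ^ n • 𝟙 (ModuleCat.of R (R ⧸ J)) = 0 := by
      ext
      change y ^ n • (Ideal.Quotient.mk J 1) = 0
      rw [← Ideal.Quotient.mk_eq_mk, ← Submodule.Quotient.mk_smul, Submodule.Quotient.mk_eq_zero]
      simpa using hn
    rw [this, Ext.mk₀_zero, Ext.zero_comp]
  have hinj : ∀ e' : Ext (ModuleCat.of R (R ⧸ J)) M i, y • e' = 0 → e' = 0 := by
    intro e' he'
    let f : M ≅ M := (LinearEquiv.ofBijective (LinearMap.lsmul R M y) hM).toModuleIso
    have hf : f.hom = y • 𝟙 M := by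
      ext
      rfl
    have : e'.comp (Ext.mk₀ f.hom) (add_zero i) = 0 := by
      rw [hf, Ext.mk₀_smul, Ext.comp_smul, Ext.comp_mk₀_id, he']
    rw [← Ext.comp_mk₀_id e', ← f.hom_inv_id, ← Ext.mk₀_comp_mk₀,
      ← Ext.comp_assoc_of_third_deg_zero, this, Ext.zero_comp]
  have : e = 0 := by
    clear hn
    induction n with
    | zero => simpa using h1
    | succ n ih => exact ih (hinj _ (by rw [smul_smul, ← pow_succ', h1]))
  rw [this, Ext.comp_zero]

lemma exists_pow_smul_ext_eq_zero [IsNoetherianRing R] {y : R} {N : ModuleCat.{u} R}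
    (hN : ∀ n : N, ∃ k : ℕ, y ^ k • n = 0) (i : ℕ) (A : ModuleCat.{u} R) [Module.Finite R A]
    (e : Ext A N i) : ∃ k : ℕ, y ^ k • e = 0 := by
  induction i generalizing A with
  | zero =>
    classical
    obtain ⟨f, rfl⟩ := Ext.addEquiv₀.symm.surjective e
    obtain ⟨s, hs⟩ := (Module.Finite.fg_top : (⊤ : Submodule R A).FG)
    choose k hk using fun a : A => hN (f a)
    refine ⟨∑ a ∈ s, k a, ?_⟩
    change y ^ _ • Ext.mk₀ f = 0
    rw [← Ext.mk₀_smul, Ext.mk₀_eq_zero_iff]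
    ext1
    refine LinearMap.ext_on hs fun a ha => ?_
    change y ^ (∑ a ∈ s, k a) • f a = 0
    rw [← Finset.sum_erase_add _ _ ha, pow_add, mul_smul, hk, smul_zero]
  | succ i ih =>
    obtain ⟨n, g, hg⟩ := Module.Finite.exists_fin' R A
    have hS := LinearMap.shortExact_shortComplexKer hg
    have : Projective (ModuleCat.of R (Fin n → R)) := inferInstance
    obtain ⟨e₁, he₁⟩ := Ext.contravariant_sequence_exact₃ hS N (n₀ := i) (n₁ := i + 1) e
      (Ext.eq_zero_of_projective (P := ModuleCat.of R (Fin n → R)) _) (by lia)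
    obtain ⟨k, hk⟩ := ih (ModuleCat.of R (LinearMap.ker g)) e₁
    refine ⟨k, ?_⟩
    rw [← he₁, ← Ext.comp_smul]
    change Ext.comp _ (y ^ k • e₁) _ = 0
    rw [hk, Ext.comp_zero]

lemma range_lsmul_pow_anti {A : Type*} [AddCommGroup A] [Module R A] (y : R) {k k' : ℕ}
    (h : k ≤ k') :
    LinearMap.range (LinearMap.lsmul R A (y ^ k')) ≤
      LinearMap.range (LinearMap.lsmul R A (y ^ k)) := by
  rintro _ ⟨a, rfl⟩
  refine ⟨y ^ (k' - k) • a, ?_⟩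
  simp only [LinearMap.lsmul_apply, smul_smul, ← pow_add]
  rw [Nat.add_sub_cancel' h]

/-- If `N` is `y`-power torsion, then `colim_k Ext^i(y ^ k A, N) = 0` for finitely generated `A`:
for large `k` multiplication by `y` is injective on `B = y ^ k A`, so that `y ^ j B ⟶ B` is
isomorphic to multiplication by `y ^ j` on `B`, and each class is killed by a power of `y`. -/
lemma exists_restrict_range_pow_eq_zero [IsNoetherianRing R] {y : R} {N : ModuleCat.{u} R}
    (hN : ∀ n : N, ∃ k : ℕ, y ^ k • n = 0) (i : ℕ) (A : Type u) [AddCommGroup A] [Module R A]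
    [Module.Finite R A] (k : ℕ)
    (f : Ext (ModuleCat.of R (LinearMap.range (LinearMap.lsmul R A (y ^ k)))) N i) :
    ∃ (k' : ℕ) (h : k ≤ k'),
      (Ext.mk₀ (ModuleCat.ofHom (Submodule.inclusion (range_lsmul_pow_anti (A := A) y h)))).comp f
        (zero_add i) = 0 := by
  obtain ⟨l, hl⟩ := exists_ker_pow_stable (R := R) (M := A) y
  set k₀ := max k l with hk₀
  have hkk₀ : k ≤ k₀ := le_max_left _ _
  set f₀ := (Ext.mk₀ (ModuleCat.ofHom
    (Submodule.inclusion (range_lsmul_pow_anti (A := A) y hkk₀)))).comp f (zero_add i) with hf₀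
  obtain ⟨j, hj⟩ := exists_pow_smul_ext_eq_zero hN i
    (ModuleCat.of R (LinearMap.range (LinearMap.lsmul R A (y ^ k₀)))) f₀
  have hle : k₀ ≤ k₀ + j := Nat.le_add_right _ _
  refine ⟨k₀ + j, hkk₀.trans hle, ?_⟩
  let φ : LinearMap.range (LinearMap.lsmul R A (y ^ k₀)) →ₗ[R]
      LinearMap.range (LinearMap.lsmul R A (y ^ (k₀ + j))) :=
    LinearMap.restrict (LinearMap.lsmul R A (y ^ j)) (by
      rintro _ ⟨a, rfl⟩
      exact ⟨a, by simp [smul_smul, pow_add, mul_comm]⟩)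
  have hφ : Function.Bijective φ := by
    constructor
    · rw [← LinearMap.ker_eq_bot, LinearMap.ker_eq_bot']
      rintro ⟨_, a, rfl⟩ h
      have h' : y ^ j • y ^ k₀ • a = 0 := congrArg Subtype.val h
      rw [smul_smul, ← pow_add] at h'
      have h'' := hl _ _ h'
      have hlk : l ≤ k₀ := le_max_right _ _
      ext
      change y ^ k₀ • a = 0
      rw [← Nat.sub_add_cancel hlk, pow_add, mul_smul, h'', smul_zero]
    · rintro ⟨_, a, rfl⟩
      refine ⟨⟨_, a, rfl⟩, ?_⟩
      ext
      change y ^ j • y ^ k₀ • a = y ^ (k₀ + j) • a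
      rw [smul_smul, pow_add, mul_comm]
  let Φ := (LinearEquiv.ofBijective φ hφ).toModuleIso
  set g := Submodule.inclusion (range_lsmul_pow_anti (A := A) y hle) with hg
  have h1 : Φ.hom ≫ ModuleCat.ofHom g = y ^ j • 𝟙 _ := by
    ext
    rfl
  have h2 : (Ext.mk₀ (ModuleCat.ofHom g)).comp f₀ (zero_add i) = 0 := by
    rw [← Ext.mk₀_id_comp ((Ext.mk₀ (ModuleCat.ofHom g)).comp f₀ (zero_add i)), ← Φ.inv_hom_id,
      ← Ext.mk₀_comp_mk₀_assoc, Ext.mk₀_comp_mk₀_assoc Φ.hom, h1, Ext.mk₀_smul, Ext.smul_comp,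
      Ext.mk₀_id_comp]
    erw [hj]
    rw [Ext.comp_zero]
  rw [← h2, hf₀, Ext.mk₀_comp_mk₀_assoc]
  rfl

/-- The short exact sequence `0 ⟶ y ^ k (R ⧸ J) ⟶ R ⧸ J ⟶ R ⧸ (J + (y ^ k)) ⟶ 0`. -/
noncomputable abbrev powSeq (J : Ideal R) (y : R) (k : ℕ) : ShortComplex (ModuleCat.{u} R) where
  X₁ := ModuleCat.of R (LinearMap.range (LinearMap.lsmul R (R ⧸ J) (y ^ k)))
  X₂ := ModuleCat.of R (R ⧸ J)
  X₃ := ModuleCat.of R (R ⧸ (J ⊔ Ideal.span {y ^ k}))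
  f := ModuleCat.ofHom (Submodule.subtype _)
  g := quotMap le_sup_left
  zero := by
    ext ⟨_, a, rfl⟩
    obtain ⟨a, rfl⟩ := Submodule.Quotient.mk_surjective _ a
    change Submodule.Quotient.mk (y ^ k • a) = 0
    rw [Submodule.Quotient.mk_eq_zero]
    exact Ideal.mem_sup_right (Ideal.mul_mem_right _ _ (Ideal.mem_span_singleton_self _))

lemma powSeq_shortExact (J : Ideal R) (y : R) (k : ℕ) : (powSeq J y k).ShortExact := by
  refine ModuleCat.shortComplex_shortExact _ ?_ ?_ ?_
  · intro a
    refine ⟨fun h => ?_, ?_⟩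
    · obtain ⟨a, rfl⟩ := Submodule.Quotient.mk_surjective _ a
      change Submodule.Quotient.mk a = 0 at h
      rw [Submodule.Quotient.mk_eq_zero] at h
      obtain ⟨b, hb, c, hc, rfl⟩ := Submodule.mem_sup.mp h
      obtain ⟨c, rfl⟩ := Ideal.mem_span_singleton.mp hc
      refine ⟨⟨_, Submodule.Quotient.mk c, rfl⟩, ?_⟩
      change Submodule.Quotient.mk (y ^ k * c) = Submodule.Quotient.mk (b + y ^ k * c)
      rw [Submodule.Quotient.eq]
      simpa using hb
    · rintro ⟨b, rfl⟩
      exact congrArg (fun φ => φ b) (congrArg ModuleCat.Hom.hom (powSeq J y k).zero)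
  · exact Subtype.val_injective
  · exact Submodule.factor_surjective (le_sup_left : J ≤ J ⊔ Ideal.span {y ^ k})

lemma le_radical_sup_span_pow {I I' J : Ideal R} {y : R} (hI : I ≤ I' ⊔ Ideal.span {y})
    (hJ : I' ≤ J.radical) (k : ℕ) : I ≤ (J ⊔ Ideal.span {y ^ k}).radical := by
  refine hI.trans (sup_le (hJ.trans (Ideal.radical_mono le_sup_left)) ?_)
  rw [Ideal.span_singleton_le_iff_mem]
  exact ⟨k, Ideal.mem_sup_right (Ideal.mem_span_singleton_self _)⟩

/-- On `y`-power torsion modules, local cohomology at `I' + (y)` controls that at `I'`. -/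
lemma LocalExtVanishes.of_sup_span [IsNoetherianRing R] {I I' : Ideal R} {y : R}
    (hI : I ≤ I' ⊔ Ideal.span {y}) (hI' : I' ≤ I) {N : ModuleCat.{u} R}
    (hN : ∀ n : N, ∃ k : ℕ, y ^ k • n = 0) {i : ℕ} (h : LocalExtVanishes I i N) :
    LocalExtVanishes I' i N := by
  intro J hJ e
  obtain ⟨k, _, hk⟩ := exists_restrict_range_pow_eq_zero hN i (R ⧸ J) 0
    ((Ext.mk₀ (powSeq J y 0).f).comp e (zero_add i))
  have hk' : (Ext.mk₀ (powSeq J y k).f).comp e (zero_add i) = 0 := by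
    rw [← hk, Ext.mk₀_comp_mk₀_assoc]
    congr 1
  obtain ⟨e₃, he₃⟩ := Ext.contravariant_sequence_exact₂ (powSeq_shortExact J y k) N e hk'
  obtain ⟨J₁, hJ₁, hr₁, h0⟩ := h (J ⊔ Ideal.span {y ^ k}) (le_radical_sup_span_pow hI hJ k) e₃
  refine ⟨J₁ ⊓ J, inf_le_right, ?_, ?_⟩
  · rw [Ideal.radical_inf]
    exact le_inf (hI'.trans hr₁) hJ
  · rw [← he₃]
    change (Ext.mk₀ (quotMap _)).comp ((Ext.mk₀ (quotMap _)).comp e₃ _) _ = 0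
    rw [Ext.mk₀_comp_mk₀_assoc, quotMap_comp,
      ← quotMap_comp (inf_le_left : J₁ ⊓ J ≤ J₁) hJ₁, ← Ext.mk₀_comp_mk₀_assoc, h0, Ext.comp_zero]

/-- On `y`-power torsion modules, local cohomology at `I'` controls that at `I' + (y)`. -/
lemma LocalExtVanishes.sup_span [IsNoetherianRing R] {I I' : Ideal R} {y : R} (hy : y ∈ I)
    (hI : I ≤ I' ⊔ Ideal.span {y}) (hI' : I' ≤ I) {N : ModuleCat.{u} R}
    (hN : ∀ n : N, ∃ k : ℕ, y ^ k • n = 0) {i : ℕ} (h : LocalExtVanishes I' (i + 1) N) :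
    LocalExtVanishes I (i + 1) N := by
  intro J hJ e
  obtain ⟨J', hJ', hr', h0⟩ := h J (hI'.trans hJ) e
  obtain ⟨k, hk⟩ := hJ hy
  have hJ₁ : J' ⊔ Ideal.span {y ^ k} ≤ J :=
    sup_le hJ' ((Ideal.span_singleton_le_iff_mem _).mpr hk)
  obtain ⟨f, hf⟩ := Ext.contravariant_sequence_exact₃ (powSeq_shortExact J' y k) N
    (n₀ := i) (n₁ := i + 1) ((Ext.mk₀ (quotMap hJ₁)).comp e (zero_add _)) (by
      rw [← h0, ← quotMap_comp le_sup_left hJ₁, Ext.mk₀_comp_mk₀_assoc]) (by lia)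
  obtain ⟨k', hkk', h0'⟩ := exists_restrict_range_pow_eq_zero hN i (R ⧸ J') k f
  have hle : J' ⊔ Ideal.span {y ^ k'} ≤ J' ⊔ Ideal.span {y ^ k} :=
    sup_le_sup_left (Ideal.span_singleton_le_span_singleton.mpr (pow_dvd_pow y hkk')) _
  refine ⟨J' ⊔ Ideal.span {y ^ k'}, hle.trans hJ₁, le_radical_sup_span_pow hI hr' k', ?_⟩
  let φ : powSeq J' y k' ⟶ powSeq J' y k :=
    { τ₁ := ModuleCat.ofHom (Submodule.inclusion (range_lsmul_pow_anti (A := R ⧸ J') y hkk'))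
      τ₂ := 𝟙 _
      τ₃ := quotMap hle
      comm₁₂ := rfl
      comm₂₃ := by
        ext
        rfl }
  have hnat := ShortComplex.ShortExact.extClass_naturality (powSeq_shortExact J' y k')
    (powSeq_shortExact J' y k) φ
  rw [← quotMap_comp hle hJ₁, ← Ext.mk₀_comp_mk₀_assoc, ← hf]
  change (Ext.mk₀ φ.τ₃).comp _ _ = 0
  rw [← Ext.comp_assoc (Ext.mk₀ φ.τ₃) _ f (zero_add 1) (by lia) (by lia), ← hnat,
    Ext.comp_assoc _ (Ext.mk₀ φ.τ₁) f (add_zero 1) (zero_add i) (by lia)]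
  erw [h0']
  rw [Ext.comp_zero]

section Induction

variable {M : Type u} [AddCommGroup M] [Module R M]

/-- The localization map `M → M_y`. -/
noncomputable abbrev locMap (M : Type u) [AddCommGroup M] [Module R M] (y : R) :
    M →ₗ[R] LocalizedModule (Submonoid.powers y) M :=
  LocalizedModule.mkLinearMap (Submonoid.powers y) M

lemma exists_pow_smul_eq_zero_of_locMap {y : R} {m : M} (h : locMap M y m = 0) :
    ∃ k : ℕ, y ^ k • m = 0 := by
  obtain ⟨⟨_, k, rfl⟩, hk⟩ := (IsLocalizedModule.eq_zero_iff (Submonoid.powers y) _).mp h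
  exact ⟨k, hk⟩

lemma exists_pow_smul_eq_locMap {y : R} (z : LocalizedModule (Submonoid.powers y) M) :
    ∃ (k : ℕ) (m : M), y ^ k • z = locMap M y m := by
  obtain ⟨⟨m, _, k, rfl⟩, hk⟩ := IsLocalizedModule.surj (Submonoid.powers y) (locMap M y) z
  exact ⟨k, m, hk⟩

lemma bijective_lsmul_localized (y : R) :
    Function.Bijective
      (LinearMap.lsmul R (LocalizedModule (Submonoid.powers y) M) y) :=
  (Module.End.isUnit_iff _).mp
    (IsLocalizedModule.map_units (locMap M y) ⟨y, Submonoid.mem_powers y⟩)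

lemma torsion_ker_locMap (y : R) (n : ModuleCat.of R (LinearMap.ker (locMap M y).rangeRestrict)) :
    ∃ k : ℕ, y ^ k • n = 0 := by
  have h : locMap M y n.1 = 0 := congrArg Subtype.val (n.2 : (locMap M y).rangeRestrict n.1 = 0)
  obtain ⟨k, hk⟩ := exists_pow_smul_eq_zero_of_locMap h
  exact ⟨k, Subtype.ext hk⟩

lemma torsion_coker_locMap (y : R) (n : ModuleCat.of R
    (LocalizedModule (Submonoid.powers y) M ⧸ LinearMap.range (locMap M y))) :
    ∃ k : ℕ, y ^ k • n = 0 := by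
  obtain ⟨z, rfl⟩ := Submodule.Quotient.mk_surjective _ n
  obtain ⟨k, m, hk⟩ := exists_pow_smul_eq_locMap z
  refine ⟨k, ?_⟩
  rw [← Submodule.Quotient.mk_smul, Submodule.Quotient.mk_eq_zero, hk]
  exact ⟨m, rfl⟩

/-- The short exact sequence `0 ⟶ M̄ ⟶ M_y ⟶ M_y ⧸ M̄ ⟶ 0`, with `M̄` the image of `M`. -/
noncomputable abbrev cokerSeq (M : Type u) [AddCommGroup M] [Module R M] (y : R) :
    ShortComplex (ModuleCat.{u} R) :=
  ModuleCat.shortComplexOfCompEqZero (LinearMap.range (locMap M y)).subtype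
    (LinearMap.range (locMap M y)).mkQ (by ext x; simp)

lemma cokerSeq_shortExact (y : R) : (cokerSeq M y).ShortExact :=
  ModuleCat.shortComplex_shortExact _ (LinearMap.exact_subtype_mkQ _)
    (Submodule.injective_subtype _) (Submodule.mkQ_surjective _)

lemma span_range_le {r : ℕ} (x : Fin (r + 1) → R) :
    Ideal.span (Set.range x) ≤
      Ideal.span (Set.range fun i : Fin r => x i.succ) ⊔ Ideal.span {x 0} := by
  refine Ideal.span_le.mpr ?_
  rintro _ ⟨i, rfl⟩
  refine Fin.cases ?_ (fun j => ?_) i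
  · exact Ideal.mem_sup_right (Ideal.mem_span_singleton_self _)
  · exact Ideal.mem_sup_left (Ideal.subset_span ⟨j, rfl⟩)

lemma span_range_succ_le {r : ℕ} (x : Fin (r + 1) → R) :
    Ideal.span (Set.range fun i : Fin r => x i.succ) ≤ Ideal.span (Set.range x) :=
  Ideal.span_mono (by rintro _ ⟨i, rfl⟩; exact ⟨_, rfl⟩)

/-- Local cohomology with support in an ideal generated by `r` elements vanishes in degrees
above `r`. -/
lemma localExtVanishes_of_lt [IsNoetherianRing R] {r : ℕ} (x : Fin r → R)
    (M : Type u) [AddCommGroup M] [Module R M] {i : ℕ} (hi : r < i) :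
    LocalExtVanishes (Ideal.span (Set.range x)) i (ModuleCat.of R M) := by
  induction r generalizing M i with
  | zero =>
    intro J hJ e
    refine ⟨⊥, bot_le, by simp, ?_⟩
    obtain ⟨i, rfl⟩ := Nat.exists_eq_succ_of_ne_zero hi.ne'
    have : Module.Projective R (R ⧸ (⊥ : Ideal R)) :=
      Module.Projective.of_equiv (Submodule.quotEquivOfEqBot (⊥ : Ideal R) rfl).symm
    have : Projective (ModuleCat.of R (R ⧸ (⊥ : Ideal R))) := inferInstance
    exact Ext.eq_zero_of_projective _
  | succ r ih =>
    obtain ⟨i, rfl⟩ : ∃ j, i = j + 2 := ⟨i - 2, by lia⟩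
    have hy : x 0 ∈ Ideal.span (Set.range x) := Ideal.subset_span ⟨0, rfl⟩
    refine LocalExtVanishes.middle
      (LinearMap.shortExact_shortComplexKer (LinearMap.surjective_rangeRestrict (locMap M (x 0))))
      (.sup_span hy (span_range_le x) (span_range_succ_le x) (torsion_ker_locMap (x 0))
        (ih _ _ (by lia))) ?_
    exact LocalExtVanishes.left (cokerSeq_shortExact (M := M) (x 0))
      (.sup_span hy (span_range_le x) (span_range_succ_le x) (torsion_coker_locMap (x 0))
        (ih _ _ (by lia)))
      (.of_bijective hy _ (bijective_lsmul_localized (M := M) (x 0)))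

/-- Clearing denominators in `I M_y`. -/
lemma exists_pow_smul_mem_ideal_smul {y : R} (I : Ideal R)
    {z : LocalizedModule (Submonoid.powers y) M}
    (hz : z ∈ I • (⊤ : Submodule R (LocalizedModule (Submonoid.powers y) M))) :
    ∃ (k : ℕ), ∃ m ∈ I • (⊤ : Submodule R M), y ^ k • z = locMap M y m := by
  refine Submodule.smul_induction_on hz (fun c hc v _ => ?_) ?_
  · obtain ⟨k, m, hk⟩ := exists_pow_smul_eq_locMap v
    exact ⟨k, c • m, Submodule.smul_mem_smul hc trivial, by rw [smul_comm, hk, map_smul]⟩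
  · rintro v w ⟨k, m, hm, hk⟩ ⟨k', m', hm', hk'⟩
    refine ⟨k + k', y ^ k' • m + y ^ k • m',
      add_mem (Submodule.smul_mem _ _ hm) (Submodule.smul_mem _ _ hm'), ?_⟩
    rw [map_add, map_smul, map_smul, ← hk, ← hk', smul_smul, smul_smul, ← pow_add, ← pow_add,
      add_comm k' k, smul_add]

/-- If `(x₂, …, x_r)^lim` is everything in `M_{x₁} ⧸ M̄`, then `(x₁, …, x_r)^lim_M = M`: apply the
hypothesis to the class of `m / x₁` and clear denominators. -/
lemma limitClosure_eq_top_of_coker {r : ℕ} (x : Fin (r + 1) → R)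
    (h : limitClosure (M := LocalizedModule (Submonoid.powers (x 0)) M ⧸
      LinearMap.range (locMap M (x 0))) (fun i : Fin r => x i.succ) = ⊤) :
    limitClosure (M := M) x = ⊤ := by
  rw [eq_top_iff]
  rintro m -
  set y := x 0 with hy
  obtain ⟨w, hw⟩ := (bijective_lsmul_localized (M := M) y).2 (locMap M y m)
  change y • w = locMap M y m at hw
  have hw' : Submodule.Quotient.mk w ∈ limitClosure (M := LocalizedModule (Submonoid.powers y) M ⧸
      LinearMap.range (locMap M y)) (fun i : Fin r => x i.succ) := by
    rw [h]
    trivial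
  obtain ⟨n, hn⟩ := (mem_limitClosure_iff _ _).mp hw'
  set P := (∏ i : Fin r, x i.succ) ^ n with hP
  set I := Ideal.span (Set.range fun i : Fin r => x i.succ ^ (n + 1)) with hI
  rw [← Submodule.Quotient.mk_smul, ← Submodule.range_mkQ (LinearMap.range (locMap M y)),
    ← Submodule.map_top (Submodule.mkQ _), ← Submodule.map_smul''] at hn
  obtain ⟨z, hz, hz'⟩ := hn
  obtain ⟨k, m', hm', hk⟩ := exists_pow_smul_mem_ideal_smul I hz
  obtain ⟨b, hb⟩ : P • w - z ∈ LinearMap.range (locMap M y) :=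
    (Submodule.Quotient.eq _).mp hz'.symm
  have h0 : locMap M y (y ^ k • P • m - y ^ (k + 1) • b - y • m') = 0 := by
    rw [map_sub, map_sub, map_smul, map_smul, map_smul, map_smul, ← hw, hb, ← hk]
    module
  obtain ⟨j, hj⟩ := exists_pow_smul_eq_zero_of_locMap h0
  refine mem_limitClosure_succ x (n := n) (l := j + k) (b := b) ?_
  have : x 0 ^ (j + k) • P • m - x 0 ^ (j + k + 1) • b = y ^ (j + 1) • m' := by
    rw [← sub_eq_zero, ← hj]
    module
  rw [this]
  exact Submodule.smul_mem _ _ hm'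

/-- The vanishing of the top local cohomology makes the limit closure everything. With `y = x₁`,
`Γ` and `M̄` the kernel and the image of `M → M_y`, the vanishing passes from `M` to `M̄` (as `Γ`
has no cohomology in degree `r + 1`), and from there to degree `r - 1` of the `y`-torsion module
`M_y ⧸ M̄`, where `y` may be dropped from the sequence. -/
lemma limitClosure_eq_top_of_localExtVanishes [IsNoetherianRing R] {r : ℕ} (x : Fin r → R)
    (M : Type u) [AddCommGroup M] [Module R M]
    (h : LocalExtVanishes (Ideal.span (Set.range x)) r (ModuleCat.of R M)) :
    limitClosure (M := M) x = ⊤ := by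
  induction r generalizing M with
  | zero =>
    rw [limitClosure_zero, eq_comm, eq_bot_iff]
    rintro m -
    let f : ModuleCat.of R (R ⧸ (⊥ : Ideal R)) ⟶ ModuleCat.of R M :=
      ModuleCat.ofHom (Submodule.liftQ ⊥ (LinearMap.toSpanSingleton R M m) bot_le)
    obtain ⟨J', hJ', -, h0⟩ := h ⊥ (by simp) (Ext.mk₀ f)
    rw [Ext.mk₀_comp_mk₀, Ext.mk₀_eq_zero_iff] at h0
    have h1 : (quotMap hJ' ≫ f).hom (Submodule.Quotient.mk 1) = 0 := by
      rw [h0]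
      rfl
    change (1 : R) • m = 0 at h1
    simpa using h1
  | succ r ih =>
    have hy : x 0 ∈ Ideal.span (Set.range x) := Ideal.subset_span ⟨0, rfl⟩
    refine limitClosure_eq_top_of_coker x (ih _ _ ?_)
    refine .of_sup_span (span_range_le x) (span_range_succ_le x) (torsion_coker_locMap (x 0)) ?_
    refine LocalExtVanishes.right (cokerSeq_shortExact (M := M) (x 0))
      (.of_bijective hy _ (bijective_lsmul_localized (M := M) (x 0))) ?_
    exact LocalExtVanishes.right
      (LinearMap.shortExact_shortComplexKer (LinearMap.surjective_rangeRestrict (locMap M (x 0))))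
      h (.sup_span hy (span_range_le x) (span_range_succ_le x) (torsion_ker_locMap (x 0))
        (localExtVanishes_of_lt _ _ (by lia)))

end Induction

end LocalExt

/-! ### Comparison with the local cohomology functor -/

section Comparison

open CategoryTheory Opposite Limits

/-- A morphism `k` on opcycles with values in an injective object which induces zero on homology extends
along the differential. -/
lemma exists_extension_of_homologyι_comp_eq_zero {D : Type*} [Category* D] [Abelian D]
    (K : ChainComplex D ℕ) {Q : D} [Injective Q] {n : ℕ} (k : K.X n ⟶ Q)
    (hk : K.d (n + 1) n ≫ k = 0)
    (h : K.homologyι n ≫ K.descOpcycles k (n + 1) (by simp) hk = 0) :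
    ∃ g : K.X ((ComplexShape.down ℕ).next n) ⟶ Q, K.d n _ ≫ g = k := by
  let S := ShortComplex.mk (K.homologyι n) (K.fromOpcycles n ((ComplexShape.down ℕ).next n))
    (K.homologyι_comp_fromOpcycles _ _)
  have hS : S.Exact := S.exact_of_f_is_kernel (K.homologyIsKernel n _ rfl)
  refine ⟨hS.descToInjective (K.descOpcycles k (n + 1) (by simp) hk) h, ?_⟩
  rw [← K.p_fromOpcycles, Category.assoc]
  erw [hS.comp_descToInjective]
  exact K.p_descOpcycles _ _ _ _

variable {R : Type u} [CommRing R] {X X' Y : ModuleCat.{u} R}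

/-- The contravariant functor `Hom(-, Y)`, as a functor to the opposite category. -/
noncomputable abbrev homOp (Y : ModuleCat.{u} R) : ModuleCat.{u} R ⥤ (ModuleCat.{u} R)ᵒᵖ :=
  ((linearYoneda R (ModuleCat.{u} R)).obj Y).rightOp

/-- A morphism `f : A ⟶ Y`, as a morphism from `R` to `Hom(A, Y)` in `ModuleCat R`, read in the
opposite category. -/
noncomputable def pointOp {A : ModuleCat.{u} R} (f : A ⟶ Y) :
    (homOp Y).obj A ⟶ op (ModuleCat.of R R) :=
  (ModuleCat.ofHom (LinearMap.toSpanSingleton R (A ⟶ Y) f)).op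

lemma map_comp_pointOp {A B : ModuleCat.{u} R} (d : B ⟶ A) (f : A ⟶ Y) :
    (homOp Y).map d ≫ pointOp f = pointOp (d ≫ f) := by
  apply Quiver.Hom.unop_inj
  ext
  change d ≫ ((1 : R) • f) = (1 : R) • (d ≫ f)
  simp

lemma pointOp_zero {A : ModuleCat.{u} R} : pointOp (0 : A ⟶ Y) = 0 := by
  apply Quiver.Hom.unop_inj
  ext
  change (1 : R) • (0 : A ⟶ Y) = 0
  simp

lemma pointOp_injective {A : ModuleCat.{u} R} {f g : A ⟶ Y} (h : pointOp f = pointOp g) :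
    f = g := by
  have h1 : (pointOp f).unop.hom (1 : R) = (pointOp g).unop.hom (1 : R) := by rw [h]
  change (1 : R) • f = (1 : R) • g at h1
  simpa using h1

lemma exists_pointOp_eq {A : ModuleCat.{u} R} (h : (homOp Y).obj A ⟶ op (ModuleCat.of R R)) :
    ∃ f : A ⟶ Y, pointOp f = h := by
  refine ⟨h.unop.hom (1 : R), ?_⟩
  apply Quiver.Hom.unop_inj
  ext
  change (1 : R) • h.unop.hom (1 : R) = h.unop.hom (1 : R)
  rw [one_smul]

/-- The class in `leftDerived` of a cocycle `f : P_n ⟶ Y` on a projective resolution `P`,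
as a morphism to `R` in the opposite category. -/
noncomputable def derivedClass (P : ProjectiveResolution X) {n : ℕ} (f : P.complex.X n ⟶ Y)
    (hf : P.complex.d (n + 1) n ≫ f = 0) :
    ((homOp Y).leftDerived n).obj X ⟶ op (ModuleCat.of R R) :=
  (P.isoLeftDerivedObj (homOp Y) n).hom ≫
    (((homOp Y).mapHomologicalComplex _).obj P.complex).homologyι n ≫
      HomologicalComplex.descOpcycles (((homOp Y).mapHomologicalComplex _).obj P.complex)
        (pointOp f) (n + 1) (by simp) (by
          change (homOp Y).map (P.complex.d (n + 1) n) ≫ pointOp f = 0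
          rw [map_comp_pointOp, hf, pointOp_zero])

lemma map_comp_derivedClass {P : ProjectiveResolution X} {P' : ProjectiveResolution X'}
    {g : X' ⟶ X} (φ : ProjectiveResolution.Hom P' P g) {n : ℕ} (f : P.complex.X n ⟶ Y)
    (hf : P.complex.d (n + 1) n ≫ f = 0) :
    ((homOp Y).leftDerived n).map g ≫ derivedClass P f hf =
      derivedClass P' (φ.hom.f n ≫ f) (by simp [← φ.hom.comm_assoc, hf]) := by
  unfold derivedClass
  rw [ProjectiveResolution.isoLeftDerivedObj_hom_naturality_assoc g P' P φ.hom
    (by simpa using φ.hom_f_zero_comp_π_f_zero)]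
  congr 1
  refine (HomologicalComplex.homologyι_naturality_assoc
    (((homOp Y).mapHomologicalComplex (ComplexShape.down ℕ)).map φ.hom) n _).trans ?_
  congr 1
  rw [← cancel_epi (HomologicalComplex.pOpcycles _ _), HomologicalComplex.p_opcyclesMap_assoc]
  erw [HomologicalComplex.p_descOpcycles, HomologicalComplex.p_descOpcycles]
  exact map_comp_pointOp _ _

lemma extMk_eq_zero_of_derivedClass_eq_zero (P : ProjectiveResolution X) {n : ℕ}
    (f : P.complex.X n ⟶ Y) (hf : P.complex.d (n + 1) n ≫ f = 0) (h : derivedClass P f hf = 0) :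
    P.extMk f (n + 1) rfl hf = 0 := by
  unfold derivedClass at h
  rw [Preadditive.IsIso.comp_left_eq_zero] at h
  obtain ⟨g, hg⟩ := exists_extension_of_homologyι_comp_eq_zero _ _ _ h
  obtain ⟨g, rfl⟩ := exists_pointOp_eq g
  have hg' : P.complex.d n ((ComplexShape.down ℕ).next n) ≫ g = f := by
    apply pointOp_injective
    rw [← hg, ← map_comp_pointOp]
    rfl
  cases n with
  | zero =>
    have : f = 0 := by
      rw [← hg', P.complex.shape _ _ (by simp), zero_comp]
    subst this
    exact P.extMk_zero _ _
  | succ p =>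
    rw [P.extMk_eq_zero_iff f _ rfl hf p rfl]
    have key : ∀ q, q = p → ∀ g : P.complex.X q ⟶ Y, P.complex.d (p + 1) q ≫ g = f →
        ∃ g : P.complex.X p ⟶ Y, P.complex.d (p + 1) p ≫ g = f := by
      rintro q rfl g hg
      exact ⟨g, hg⟩
    exact key _ (ChainComplex.next_nat_succ p) g hg'

/-- Vanishing of Mathlib's local cohomology, which is a colimit over the powers of `I` of left
derived functors of `Hom(-, M)`, yields vanishing in the elementwise form. -/
lemma localExtVanishes_of_subsingleton [IsNoetherianRing R] (I : Ideal R) (i : ℕ)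
    (M : ModuleCat.{u} R) (h : Subsingleton ((localCohomology I i).obj M)) :
    LocalExtVanishes I i M := by
  intro J hJ e
  obtain ⟨n, hn⟩ := Ideal.exists_pow_le_of_le_radical_of_fg hJ (IsNoetherian.noetherian I)
  let P (m : ℕ) : ProjectiveResolution (ModuleCat.of R (R ⧸ I ^ m)) := projectiveResolution _
  obtain ⟨f, hf, hfe⟩ := (P n).extMk_surjective
    ((Abelian.Ext.mk₀ (quotMap hn)).comp e (zero_add i)) (i + 1) rfl
  let F := localCohomology.diagram (localCohomology.idealPowersDiagram I) i
  let G : ℕᵒᵖᵒᵖ ⥤ ModuleCat.{u} R := F ⋙ (evaluation _ _).obj M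
  have : HasColimit F := localCohomology.hasColimitDiagram.{u, 0} _ i
  have hc : IsColimit (((evaluation _ _).obj M).mapCocone (colimit.cocone F)) :=
    isColimitOfPreserves _ (colimit.isColimit F)
  let a : G.obj (op (op n)) := (derivedClass (P n) f hf).unop.hom (1 : R)
  have hsub : Subsingleton (((evaluation _ _).obj M).mapCocone (colimit.cocone F)).pt := h
  have : PreservesColimit G (forget (ModuleCat.{u} R)) := by
    have := preservesFilteredColimitsOfSize_shrink.{0, u, 0, u} (forget (ModuleCat.{u} R))
    infer_instance
  obtain ⟨k, p, q, hpq⟩ := Concrete.isColimit_exists_of_rep_eq G hc a (0 : G.obj (op (op n)))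
    (hsub.elim _ _)
  rw [map_zero] at hpq
  obtain ⟨m, rfl⟩ : ∃ m : ℕ, k = op (op m) := ⟨k.unop.unop, rfl⟩
  have hnm : n ≤ m := p.unop.unop.down.down
  have hle : I ^ m ≤ I ^ n := Ideal.pow_le_pow_right hnm
  let φ : ProjectiveResolution.Hom (P m) (P n) (quotMap hle) :=
    { hom := ProjectiveResolution.lift (quotMap hle) _ _
      hom_f_zero_comp_π_f_zero := by
        simpa using ProjectiveResolution.lift_commutes_zero (quotMap hle) (P m) (P n) }
  have h0 : ((homOp M).leftDerived i).map (quotMap hle) ≫ derivedClass (P n) f hf = 0 := by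
    apply Quiver.Hom.unop_inj
    ext
    exact hpq
  rw [map_comp_derivedClass φ] at h0
  refine ⟨I ^ m, hle.trans hn, fun a ha => ⟨m, Ideal.pow_mem_pow ha m⟩, ?_⟩
  rw [← quotMap_comp hle hn, ← Abelian.Ext.mk₀_comp_mk₀_assoc, ← hfe,
    ProjectiveResolution.mk₀_comp_extMk _ _ _ _ φ]
  exact extMk_eq_zero_of_derivedClass_eq_zero _ _ _ h0

end Comparison

/-- Let `M` be a finitely generated module of dimension `d` over a Noetherian local ring and
`x = x₁, …, x_r` a sequence of elements of `R`.  Then (i) if `H^r_{(x)}(M) = 0` then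
`(x)^lim_M = M`, in particular this holds when `r > d`; and (ii) if `r = d` then
`M/(x)^lim_M` has finite length. -/
theorem limitClosure_eq_top_of_localCohomology_vanishes_and_finiteLength
    {R : Type u} [CommRing R] [IsNoetherianRing R] [IsLocalRing R]
    {M : Type u} [AddCommGroup M] [Module R M] [Module.Finite R M]
    {d : ℕ} (hd : moduleDim R M = d) {r : ℕ} (x : Fin r → R) :
    (Subsingleton ((localCohomology (Ideal.span (Set.range x)) r).obj (ModuleCat.of R M)) →
        limitClosure (M := M) x = ⊤) ∧
    (d < r → limitClosure (M := M) x = ⊤) ∧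
    (r = d → IsFiniteLength R (M ⧸ limitClosure (M := M) x)) := by
  have hd' : Module.supportDim R M = d := by
    rw [Module.supportDim_eq_ringKrullDim_quotient_annihilator]
    exact hd
  refine ⟨fun h => limitClosure_eq_top_of_localExtVanishes x M
      (localExtVanishes_of_subsingleton _ _ _ h),
    fun h => limitClosure_eq_top_of_supportDim_lt x ?_,
    fun h => isFiniteLength_quotient_limitClosure x ?_⟩
  · rw [hd']
    exact_mod_cast h
  · rw [hd', h]
end

section
/- Let R be a Noetherian ring, M a finitely generated R-module, x = x_1, ..., x_r a sequence of elements of R, and N a submodule of M with dim N < r. Then N ⊆ (x)^lim_M. -/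
/-!
The statement reduces to the ring `A = R ⧸ Ann N`, of Krull dimension `< r`: it is enough that for
some exponents `kᵢ` the monomial `∏ xᵢ ^ kᵢ` lies in the ideal `(xᵢ ^ (kᵢ + 1))` of `A`. Such a
relation lifts to `R` up to an element killing `N`, and multiplying it by a monomial makes all the
exponents equal.

The relation in `A` is one direction of the Coquand–Lombardi description of the Krull dimension
(no Noetherian hypothesis is used), and is proved by induction on `r`
(`exists_prod_pow_mem_span`). For `x ∈ A` let `S = {x ^ n * (1 + a * x)}` (`boundaryMonoid`).
Every maximal ideal of `A` meets `S`, so chains of primes of `S⁻¹A` can be prolonged in `A` and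
`dim S⁻¹A < dim A` (`ringKrullDim_boundary_lt`). A relation for the remaining elements in `S⁻¹A`
becomes, after clearing a denominator `x ^ n * (1 + a * x)`, a relation in `A` for all of them.
-/

open IsLocalRing

/-- The Krull boundary monoid `{x ^ n * (1 + a * x)}` of an element `x`. -/
def boundaryMonoid {A : Type*} [CommRing A] (x : A) : Submonoid A where
  carrier := {s | ∃ (n : ℕ) (a : A), s = x ^ n * (1 + a * x)}
  one_mem' := ⟨0, 0, by simp⟩
  mul_mem' := by
    rintro _ _ ⟨n, a, rfl⟩ ⟨m, b, rfl⟩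
    exact ⟨n + m, a + b + a * b * x, by ring⟩

lemma exists_mem_boundaryMonoid_of_isMaximal {A : Type*} [CommRing A] (x : A) (m : Ideal A)
    [hm : m.IsMaximal] : ∃ s ∈ boundaryMonoid x, s ∈ m := by
  by_cases hx : x ∈ m
  · exact ⟨x, ⟨1, 0, by simp⟩, hx⟩
  · obtain ⟨y, i, hi, h⟩ := hm.exists_inv hx
    refine ⟨1 + (-y) * x, ⟨0, -y, by simp⟩, ?_⟩
    have : 1 + (-y) * x = i := by linear_combination -h
    rwa [this]

lemma ringKrullDim_boundary_lt {A : Type*} [CommRing A] (x : A) (r : ℕ)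
    (h : ringKrullDim A < ((r + 1 : ℕ) : WithBot ℕ∞)) :
    ringKrullDim (Localization (boundaryMonoid x)) < (r : WithBot ℕ∞) := by
  by_contra! hc
  obtain ⟨l, hl⟩ := Order.le_krullDim_iff.mp hc
  let f := PrimeSpectrum.comap (algebraMap A (Localization (boundaryMonoid x)))
  have hf : StrictMono f := by
    have hmono : Monotone f := fun p q hpq => Ideal.comap_mono hpq
    exact hmono.strictMono_of_injective
      (PrimeSpectrum.localization_comap_injective _ (boundaryMonoid x))
  let l' := l.map f hf
  obtain ⟨m, hm, hle⟩ := Ideal.exists_le_maximal l'.last.asIdeal l'.last.isPrime.ne_top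
  have hlt : l'.last < ⟨m, hm.isPrime⟩ := by
    refine lt_of_le_of_ne hle fun heq => ?_
    obtain ⟨s, hs, hsm⟩ := exists_mem_boundaryMonoid_of_isMaximal x m
    have h1 : s ∈ l'.last.asIdeal := by rw [heq]; exact hsm
    have h2 : algebraMap A (Localization (boundaryMonoid x)) s ∈ l.last.asIdeal := by
      rw [LTSeries.last_map] at h1
      exact h1
    exact l.last.isPrime.ne_top
      (Ideal.eq_top_of_isUnit_mem _ h2 (IsLocalization.map_units _ ⟨s, hs⟩))
  have := Order.le_krullDim_iff.mpr ⟨l'.snoc _ hlt, rfl⟩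
  refine absurd h (not_lt.mpr (le_trans (le_of_eq ?_) this))
  simp [l', hl]

/-- In a ring of Krull dimension `< r`, any `r` elements satisfy a relation
`∏ xᵢ ^ kᵢ ∈ (xᵢ ^ (kᵢ + 1))`. -/
lemma exists_prod_pow_mem_span (r : ℕ) : ∀ {A : Type*} [CommRing A] (x : Fin r → A),
    ringKrullDim A < (r : WithBot ℕ∞) →
    ∃ k : Fin r → ℕ, ∏ i, x i ^ k i ∈ Ideal.span (Set.range fun i => x i ^ (k i + 1)) := by
  induction r with
  | zero =>
    intro A _ x h
    have : Subsingleton A := by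
      by_contra hA
      rw [not_subsingleton_iff_nontrivial] at hA
      exact absurd h (not_lt.mpr (by simpa using ringKrullDim_nonneg_of_nontrivial (R := A)))
    refine ⟨0, ?_⟩
    rw [Subsingleton.elim (∏ i, x i ^ (0 : Fin 0 → ℕ) i) 0]
    exact zero_mem _
  | succ r ih =>
    intro A _ x h
    set S := boundaryMonoid (x 0) with hS
    obtain ⟨k, hk⟩ := ih (fun i : Fin r => algebraMap A (Localization S) (x i.succ))
      (ringKrullDim_boundary_lt (x 0) r h)
    have hk' : algebraMap A (Localization S) (∏ i : Fin r, x i.succ ^ k i) ∈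
        (Ideal.span (Set.range fun i : Fin r => x i.succ ^ (k i + 1))).map
          (algebraMap A (Localization S)) := by
      rw [Ideal.map_span, ← Set.range_comp]
      simpa [Function.comp_def, map_prod, map_pow] using hk
    obtain ⟨s, ⟨n, a, rfl⟩, hs⟩ :=
      (IsLocalization.algebraMap_mem_map_algebraMap_iff S (Localization S) _ _).mp hk'
    refine ⟨Fin.cons n k, ?_⟩
    rw [Fin.prod_univ_succ]
    simp only [Fin.cons_zero, Fin.cons_succ]
    set J := Ideal.span (Set.range fun i : Fin (r + 1) =>
      x i ^ ((Fin.cons n k : Fin (r + 1) → ℕ) i + 1))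
    have h1 : Ideal.span (Set.range fun i : Fin r => x i.succ ^ (k i + 1)) ≤ J := by
      rw [Ideal.span_le]
      rintro _ ⟨i, rfl⟩
      exact Ideal.subset_span ⟨i.succ, by simp⟩
    have h2 : x 0 ^ (n + 1) ∈ J := Ideal.subset_span ⟨0, by simp⟩
    have h3 := J.sub_mem (h1 hs) (J.mul_mem_left (a * ∏ i : Fin r, x i.succ ^ k i) h2)
    convert h3 using 1
    ring

/-- The relation of `exists_prod_pow_mem_span` in `A = R ⧸ I`, multiplied by a monomial so that
all exponents agree and are positive, and lifted to `R`. -/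
lemma exists_pow_prod_mem_span_sup {R : Type*} [CommRing R] (I : Ideal R) {r : ℕ} (x : Fin r → R)
    (h : ringKrullDim (R ⧸ I) < (r : WithBot ℕ∞)) :
    ∃ n : ℕ, (∏ i, x i) ^ (n + 1) ∈
      Ideal.span (Set.range fun i => x i ^ (n + 2)) ⊔ I := by
  obtain ⟨k, hk⟩ := exists_prod_pow_mem_span r (fun i => Ideal.Quotient.mk I (x i)) h
  have hk' : ∏ i, x i ^ k i ∈ Ideal.span (Set.range fun i => x i ^ (k i + 1)) ⊔ I := by
    rw [← Ideal.mem_quotient_iff_mem_sup, Ideal.map_span, ← Set.range_comp]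
    simpa [Function.comp_def, map_prod, map_pow] using hk
  set n := ∑ i, k i
  have hkn : ∀ i, k i ≤ n := fun i =>
    Finset.single_le_sum (f := k) (fun _ _ => Nat.zero_le _) (Finset.mem_univ i)
  refine ⟨n, ?_⟩
  set J := Ideal.span (Set.range fun i => x i ^ (n + 2))
  set c := ∏ i, x i ^ (n + 1 - k i)
  have hc : (∏ i, x i) ^ (n + 1) = c * ∏ i, x i ^ k i := by
    rw [← Finset.prod_mul_distrib, ← Finset.prod_pow]
    refine Finset.prod_congr rfl fun i _ => ?_
    rw [← pow_add, Nat.sub_add_cancel ((hkn i).trans n.le_succ)]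
  obtain ⟨y, hy, z, hz, hyz⟩ := Submodule.mem_sup.mp hk'
  rw [hc, ← hyz, mul_add]
  refine Submodule.add_mem_sup ?_ (I.mul_mem_left c hz)
  have hle : Ideal.span (Set.range fun i => x i ^ (k i + 1)) ≤
      Submodule.comap (LinearMap.mulLeft R c) J := by
    refine Ideal.span_le.mpr ?_
    rintro _ ⟨i, rfl⟩
    change c * x i ^ (k i + 1) ∈ J
    have hdvd : x i ^ (n + 2) ∣ c * x i ^ (k i + 1) := by
      have h1 : x i ^ (n + 1 - k i) ∣ c := Finset.dvd_prod_of_mem _ (Finset.mem_univ i)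
      have h2 : x i ^ (n + 2) = x i ^ (n + 1 - k i) * x i ^ (k i + 1) := by
        rw [← pow_add]
        congr 1
        have := hkn i
        omega
      rw [h2]
      exact mul_dvd_mul_right h1 _
    exact J.mem_of_dvd hdvd (Ideal.subset_span ⟨i, rfl⟩)
  exact hle hy

/-- If `N` is a submodule of `M` with `dim N < r`, then `N ⊆ (x₁, …, x_r)^lim_M`. -/
theorem submodule_le_limitClosure_of_dim_lt
    {R : Type*} [CommRing R] [IsNoetherianRing R]
    {M : Type*} [AddCommGroup M] [Module R M] [Module.Finite R M]
    {r : ℕ} (x : Fin r → R) (N : Submodule R M)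
    (hN : moduleDim R N < (r : WithBot ℕ∞)) :
    N ≤ limitClosure (M := M) x := by
  obtain ⟨n, hn⟩ := exists_pow_prod_mem_span_sup (Module.annihilator R N) x hN
  obtain ⟨y, hy, z, hz, hyz⟩ := Submodule.mem_sup.mp hn
  intro m hm
  refine Submodule.mem_iSup_of_mem n ?_
  rw [Submodule.mem_comap, LinearMap.lsmul_apply, ← hyz, add_smul]
  have hzm : z • m = 0 :=
    congrArg Subtype.val (Module.mem_annihilator.mp hz ⟨m, hm⟩)
  rw [hzm, add_zero]
  exact Submodule.smul_mem_smul hy Submodule.mem_top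
end
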